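/- arXiv:2001.02226 — 4 statements merged into one kernel-verified Lean document; each statement's English description precedes it below -/
import Mathlib

section
/- Let ν ≥ 1, let N ⊆ ℝ^ν be a compact connected smooth embedded submanifold without boundary with base point b ∈ N, let ℓ ≥ 1, and let p > ℓ + 1 be a real number. Assume that π_ℓ(N, b) is infinite. Then there exist a constant c > 0 and a sequence (u_j) of smooth maps u_j : B̄^ℓ → N with u_j = b on S^{ℓ−1} such that E^{1−1/p, p}_{B^ℓ}(u_j) → ∞ as j → ∞ and such that, for every j and every C^1 map U : B̄^ℓ × [0,1] → N with U(·, 0) = u_j, one has ∫_{B^ℓ×(0,1)} ‖DU‖^p ≥ c · ( E^{1−1/p, p}_{B^ℓ}(u_j) )^{p/(p−1)}. -/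
open Metric Set MeasureTheory Filter
open scoped ENNReal Topology

noncomputable section

/-- `N ⊆ ℝ^ν` is a smooth embedded submanifold without boundary: around each of its points
there is a smooth local diffeomorphism of the ambient space flattening `N` onto a
`d`-dimensional coordinate subspace. -/
def IsSmoothSubmanifold {ν : ℕ} (N : Set (EuclideanSpace ℝ (Fin ν))) : Prop :=
  ∃ d : ℕ, ∀ x ∈ N, ∃ (U V : Set (EuclideanSpace ℝ (Fin ν)))
      (φ ψ : EuclideanSpace ℝ (Fin ν) → EuclideanSpace ℝ (Fin ν)),
    IsOpen U ∧ IsOpen V ∧ x ∈ U ∧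
    ContDiffOn ℝ (⊤ : ℕ∞) φ U ∧ ContDiffOn ℝ (⊤ : ℕ∞) ψ V ∧
    MapsTo φ U V ∧ MapsTo ψ V U ∧
    (∀ y ∈ U, ψ (φ y) = y) ∧ (∀ z ∈ V, φ (ψ z) = z) ∧
    (∀ y ∈ U, (y ∈ N ↔ ∀ i : Fin ν, d ≤ (i : ℕ) → φ y i = 0))

/-- The Gagliardo fractional energy `E^{s,p}_A(u)`. -/
def gagliardoE {l ν : ℕ} (s p : ℝ) (A : Set (EuclideanSpace ℝ (Fin l)))
    (u : EuclideanSpace ℝ (Fin l) → EuclideanSpace ℝ (Fin ν)) : ℝ≥0∞ :=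
  ∫⁻ x in A, ∫⁻ y in A, ENNReal.ofReal (‖u y - u x‖ ^ p / ‖y - x‖ ^ ((l : ℝ) + s * p))

/-- `f` is `C^1` on the closed set `A` in the sense that it is (the restriction of)
a `C^1` map on an open neighborhood of `A`. -/
def C1OnNhd {E F : Type*} [NormedAddCommGroup E] [NormedSpace ℝ E]
    [NormedAddCommGroup F] [NormedSpace ℝ F] (f : E → F) (A : Set E) : Prop :=
  ∃ V : Set E, IsOpen V ∧ A ⊆ V ∧ ContDiffOn ℝ 1 f V

/-- `f` is `C^∞` on the closed set `A` in the sense that it is (the restriction of)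
a smooth map on an open neighborhood of `A`. -/
def SmoothOnNhd {E F : Type*} [NormedAddCommGroup E] [NormedSpace ℝ E]
    [NormedAddCommGroup F] [NormedSpace ℝ F] (f : E → F) (A : Set E) : Prop :=
  ∃ V : Set E, IsOpen V ∧ A ⊆ V ∧ ContDiffOn ℝ (⊤ : ℕ∞) f V

/-- The `C^1` extension `p`-energy `E^{1,p}_ext(u)` of a map `u : B̄^l → N`:
the infimum (in `ℝ≥0∞`, so `sInf ∅ = ∞`) of `∫_{B^l × (0,1)} ‖DU‖^p` over all `C^1` maps
`U : B̄^l × [0,1] → N` with `U(·,0) = u`. -/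
def extEnergy {l ν : ℕ} (p : ℝ) (N : Set (EuclideanSpace ℝ (Fin ν)))
    (u : EuclideanSpace ℝ (Fin l) → EuclideanSpace ℝ (Fin ν)) : ℝ≥0∞ :=
  sInf { e | ∃ U : EuclideanSpace ℝ (Fin l) × ℝ → EuclideanSpace ℝ (Fin ν),
    C1OnNhd U (closedBall 0 1 ×ˢ Icc (0 : ℝ) 1) ∧
    MapsTo U (closedBall 0 1 ×ˢ Icc (0 : ℝ) 1) N ∧
    (∀ x ∈ closedBall (0 : EuclideanSpace ℝ (Fin l)) 1, U (x, 0) = u x) ∧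
    e = ∫⁻ z in ball (0 : EuclideanSpace ℝ (Fin l)) 1 ×ˢ Ioo (0 : ℝ) 1,
          ENNReal.ofReal (‖fderiv ℝ U z‖ ^ p) }

/-- `f` and `g`, mapping `B̄^l` into `N` and agreeing on `S^{l-1}`, are homotopic within `N`
relative to the sphere `S^{l-1}`. -/
def HomotopicRelSphere {l ν : ℕ} (N : Set (EuclideanSpace ℝ (Fin ν)))
    (f g : EuclideanSpace ℝ (Fin l) → EuclideanSpace ℝ (Fin ν)) : Prop :=
  ∃ H : EuclideanSpace ℝ (Fin l) × ℝ → EuclideanSpace ℝ (Fin ν),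
    ContinuousOn H (closedBall 0 1 ×ˢ Icc (0 : ℝ) 1) ∧
    MapsTo H (closedBall 0 1 ×ˢ Icc (0 : ℝ) 1) N ∧
    (∀ x ∈ closedBall (0 : EuclideanSpace ℝ (Fin l)) 1, H (x, 0) = f x ∧ H (x, 1) = g x) ∧
    (∀ x ∈ sphere (0 : EuclideanSpace ℝ (Fin l)) 1, ∀ t ∈ Icc (0 : ℝ) 1, H (x, t) = f x)

/-- The topological `p`-energy `E^{1,p}_top(u)` of `u : B̄^l → N` with `u = b` on `S^{l-1}`:
the infimum (in `ℝ≥0∞`) of `∫_{B^l} ‖Dw‖^p` over all `C^1` maps `w : B̄^l → N` with `w = b` on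
`S^{l-1}` that are homotopic to `u` relative to `S^{l-1}`. -/
def topEnergy {l ν : ℕ} (p : ℝ) (N : Set (EuclideanSpace ℝ (Fin ν)))
    (b : EuclideanSpace ℝ (Fin ν))
    (u : EuclideanSpace ℝ (Fin l) → EuclideanSpace ℝ (Fin ν)) : ℝ≥0∞ :=
  sInf { e | ∃ w : EuclideanSpace ℝ (Fin l) → EuclideanSpace ℝ (Fin ν),
    C1OnNhd w (closedBall 0 1) ∧ MapsTo w (closedBall 0 1) N ∧
    (∀ x ∈ sphere (0 : EuclideanSpace ℝ (Fin l)) 1, w x = b) ∧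
    HomotopicRelSphere N w u ∧
    e = ∫⁻ x in ball (0 : EuclideanSpace ℝ (Fin l)) 1, ENNReal.ofReal (‖fderiv ℝ w x‖ ^ p) }


/-- Local description of nearest points on a submanifold, near a point of the submanifold. -/
theorem nearest_local {ν : ℕ} (N : Set (EuclideanSpace ℝ (Fin ν)))
    (hNsub : IsSmoothSubmanifold N) (x : EuclideanSpace ℝ (Fin ν)) (hx : x ∈ N) :
    ∃ f : EuclideanSpace ℝ (Fin ν) → EuclideanSpace ℝ (Fin ν),
      (∀ᶠ y in 𝓝 x, ContDiffAt ℝ (⊤ : ℕ∞) f y) ∧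
      (∀ᶠ y in 𝓝 x, ∀ q ∈ N, dist y q = infDist y N → q = f y) := by
  obtain ⟨d, hd⟩ := hNsub
  obtain ⟨U, V, φ, ψ, hU, hV, hxU, hφ, hψ, hmφ, hmψ, hl, hr, hN⟩ := hd x hx
  set z₀ := φ x with hz₀
  have hz₀V : z₀ ∈ V := hmφ hxU
  have hψz₀ : ψ z₀ = x := hl x hxU
  let e : Fin ν → EuclideanSpace ℝ (Fin ν) := fun i => EuclideanSpace.single i (1:ℝ)
  let Θ₂ : EuclideanSpace ℝ (Fin ν) × EuclideanSpace ℝ (Fin ν) → EuclideanSpace ℝ (Fin ν) :=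
    fun w => WithLp.toLp 2 (fun i : Fin ν => if (i:ℕ) < d then
      inner ℝ (fderiv ℝ ψ w.2 (e i)) (ψ w.2 - w.1) else w.2 i)
  let Θ : EuclideanSpace ℝ (Fin ν) × EuclideanSpace ℝ (Fin ν) →
      EuclideanSpace ℝ (Fin ν) × EuclideanSpace ℝ (Fin ν) := fun w => (w.1, Θ₂ w)
  have hψ' : ContDiffOn ℝ (⊤ : ℕ∞) (fun z => fderiv ℝ ψ z) V :=
    hψ.fderiv_of_isOpen hV (by simp)
  have hO : IsOpen ((univ : Set (EuclideanSpace ℝ (Fin ν))) ×ˢ V) := isOpen_univ.prod hV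
  have hΘ : ContDiffOn ℝ (⊤ : ℕ∞) Θ (univ ×ˢ V) := by
    refine contDiffOn_fst.prodMk ?_
    rw [contDiffOn_euclidean]
    intro i
    by_cases hi : (i:ℕ) < d
    · simp only [Θ₂, hi, if_true]
      have h2 : MapsTo (Prod.snd : EuclideanSpace ℝ (Fin ν) × EuclideanSpace ℝ (Fin ν) → _)
        (univ ×ˢ V) V := fun w hw => hw.2
      exact ContDiffOn.inner ℝ ((hψ'.comp contDiffOn_snd h2).clm_apply contDiffOn_const)
        ((hψ.comp contDiffOn_snd h2).sub contDiffOn_fst)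
    · simp only [Θ₂, hi, if_false]
      exact ((EuclideanSpace.proj (𝕜 := ℝ) i).contDiff.comp contDiff_snd).contDiffOn
  have hp₀ : ((x, z₀) : EuclideanSpace ℝ (Fin ν) × EuclideanSpace ℝ (Fin ν)) ∈
    (univ : Set (EuclideanSpace ℝ (Fin ν))) ×ˢ V := ⟨mem_univ _, hz₀V⟩
  have hΘat : ContDiffAt ℝ (⊤ : ℕ∞) Θ (x, z₀) := hΘ.contDiffAt (hO.mem_nhds hp₀)
  have hψd : HasFDerivAt ψ (fderiv ℝ ψ z₀) z₀ :=
    ((hψ.contDiffAt (hV.mem_nhds hz₀V)).differentiableAt (by simp)).hasFDerivAt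
  have hφd : HasFDerivAt φ (fderiv ℝ φ x) x :=
    ((hφ.contDiffAt (hU.mem_nhds hxU)).differentiableAt (by simp)).hasFDerivAt
  have hAinj : ∀ v, fderiv ℝ ψ z₀ v = 0 → v = 0 := by
    intro v hv
    have h1 : HasFDerivAt (fun z => φ (ψ z)) ((fderiv ℝ φ x).comp (fderiv ℝ ψ z₀)) z₀ := by
      have : HasFDerivAt φ (fderiv ℝ φ x) (ψ z₀) := by rw [hψz₀]; exact hφd
      exact this.comp z₀ hψd
    have h2 : HasFDerivAt (fun z => φ (ψ z)) (ContinuousLinearMap.id ℝ _) z₀ :=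
      (hasFDerivAt_id z₀).congr_of_eventuallyEq
        (by filter_upwards [hV.mem_nhds hz₀V] with z hz using hr z hz)
    have h3 := congrArg (fun T => T v) (h1.unique h2)
    simpa [hv] using h3.symm
  -- the derivative of Θ at the base point is injective
  have hTd : HasFDerivAt Θ (fderiv ℝ Θ (x, z₀)) (x, z₀) :=
    (hΘat.differentiableAt (by simp)).hasFDerivAt
  have hTinj : ∀ w, fderiv ℝ Θ (x, z₀) w = 0 → w = 0 := by
    intro w hw
    have hfst : w.1 = 0 := by
      have h1 : HasFDerivAt (fun w => (Θ w).1) ((ContinuousLinearMap.fst ℝ _ _).comp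
        (fderiv ℝ Θ (x, z₀))) (x, z₀) := hasFDerivAt_fst.comp (x, z₀) hTd
      have h2 : HasFDerivAt (fun w => (Θ w).1) (ContinuousLinearMap.fst ℝ _ _) (x, z₀) :=
        hasFDerivAt_fst
      have h3 := congrArg (fun T => T w) (h1.unique h2)
      simpa [hw] using h3.symm
    have hsnd : ∀ i, HasFDerivAt (fun w => (Θ w).2 i) ((EuclideanSpace.proj (𝕜 := ℝ) i).comp
        ((ContinuousLinearMap.snd ℝ _ _).comp (fderiv ℝ Θ (x, z₀)))) (x, z₀) := fun i =>
      HasFDerivAt.comp (x, z₀) (g := fun v : EuclideanSpace ℝ (Fin ν) => v i)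
        (f := fun w => (Θ w).2) (EuclideanSpace.proj (𝕜 := ℝ) i).hasFDerivAt
        (HasFDerivAt.comp (x, z₀) (g := Prod.snd) (f := Θ) hasFDerivAt_snd hTd)
    have hge : ∀ i : Fin ν, ¬ (i:ℕ) < d → w.2 i = 0 := by
      intro i hi
      have h2 : HasFDerivAt (fun w => (Θ w).2 i) ((EuclideanSpace.proj (𝕜 := ℝ) i).comp
        (ContinuousLinearMap.snd ℝ _ _)) (x, z₀) := by
        simp only [Θ, Θ₂, hi, if_false]
        exact ((EuclideanSpace.proj (𝕜 := ℝ) i).comp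
          (ContinuousLinearMap.snd ℝ (EuclideanSpace ℝ (Fin ν)) _)).hasFDerivAt
      have h3 := congrArg (fun T => T w) ((hsnd i).unique h2)
      simpa [hw] using h3.symm
    have hlt : ∀ i : Fin ν, (i:ℕ) < d →
        inner ℝ (fderiv ℝ ψ z₀ (e i)) (fderiv ℝ ψ z₀ w.2) = 0 := by
      intro i hi
      have hc : ContDiffAt ℝ (⊤ : ℕ∞) (fun w : EuclideanSpace ℝ (Fin ν) × EuclideanSpace ℝ (Fin ν)
          => fderiv ℝ ψ w.2 (e i)) (x, z₀) :=
        ((hψ'.contDiffAt (hV.mem_nhds hz₀V)).comp (x, z₀) contDiffAt_snd).clm_apply contDiffAt_const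
      have hb : HasFDerivAt (fun w : EuclideanSpace ℝ (Fin ν) × EuclideanSpace ℝ (Fin ν)
          => ψ w.2 - w.1) ((fderiv ℝ ψ z₀).comp (ContinuousLinearMap.snd ℝ _ _)
            - ContinuousLinearMap.fst ℝ _ _) (x, z₀) :=
        (HasFDerivAt.comp (x, z₀) (f := Prod.snd) hψd hasFDerivAt_snd).sub hasFDerivAt_fst
      have h2 := HasFDerivAt.inner ℝ (hc.differentiableAt (by simp)).hasFDerivAt hb
      have h4 : (fun w => (Θ w).2 i) = (fun w : EuclideanSpace ℝ (Fin ν) ×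
          EuclideanSpace ℝ (Fin ν) => inner ℝ (fderiv ℝ ψ w.2 (e i)) (ψ w.2 - w.1)) := by
        funext w
        simp only [Θ, Θ₂, hi, if_true]
      rw [← h4] at h2
      have h3 := congrArg (fun T => T w) ((hsnd i).unique h2)
      simpa [hw, hψz₀, hfst] using h3.symm
    have hv : fderiv ℝ ψ z₀ w.2 = 0 := by
      rw [← inner_self_eq_zero (𝕜 := ℝ)]
      have hsum : w.2 = ∑ i, w.2 i • e i := by
        have := (EuclideanSpace.basisFun (Fin ν) ℝ).sum_repr w.2
        simpa [e] using this.symm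
      have : fderiv ℝ ψ z₀ w.2 = ∑ i, w.2 i • fderiv ℝ ψ z₀ (e i) := by
        conv_lhs => rw [hsum]
        simp
      conv_lhs => arg 2; rw [this]
      rw [sum_inner]
      refine Finset.sum_eq_zero fun i _ => ?_
      rw [inner_smul_left]
      by_cases hi : (i:ℕ) < d
      · rw [hlt i hi]; simp
      · rw [hge i hi]; simp
    exact Prod.ext hfst (hAinj _ hv)
  let T : (EuclideanSpace ℝ (Fin ν) × EuclideanSpace ℝ (Fin ν)) ≃L[ℝ]
      (EuclideanSpace ℝ (Fin ν) × EuclideanSpace ℝ (Fin ν)) :=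
    (LinearEquiv.ofInjectiveEndo (fderiv ℝ Θ (x, z₀)).toLinearMap
      (by rw [← LinearMap.ker_eq_bot, LinearMap.ker_eq_bot']; exact hTinj)).toContinuousLinearEquiv
  have hT : (T : _ →L[ℝ] _) = fderiv ℝ Θ (x, z₀) := by
    ext w <;> simp [T]
  have hTd' : HasFDerivAt Θ (T : _ →L[ℝ] _) (x, z₀) := by rw [hT]; exact hTd
  let h := hΘat.toOpenPartialHomeomorph Θ hTd' (by simp)
  have hcoe : ∀ w, h w = Θ w := fun w => rfl
  have hsrc : (x, z₀) ∈ h.source := hΘat.mem_toOpenPartialHomeomorph_source hTd' (by simp)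
  -- Θ(x,z₀) = (x,0)
  have hΘ0 : Θ (x, z₀) = (x, 0) := by
    refine Prod.ext rfl ?_
    ext i
    by_cases hi : (i:ℕ) < d
    · simp [Θ, Θ₂, hi, hψz₀]
    · simp only [Θ, Θ₂, hi, if_false]
      exact (hN x hxU).1 hx i (not_lt.1 hi)
  have htgt : (x, 0) ∈ h.target := by
    rw [← hΘ0]; exact h.map_source hsrc
  have hsymm0 : h.symm (x, 0) = (x, z₀) := by
    rw [← hΘ0]; exact h.left_inv hsrc
  let ι : EuclideanSpace ℝ (Fin ν) → EuclideanSpace ℝ (Fin ν) × EuclideanSpace ℝ (Fin ν) :=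
    fun y => (y, 0)
  have hι : ContDiff ℝ (⊤ : ℕ∞) ι := contDiff_id.prodMk contDiff_const
  have hcs : ContinuousAt (fun y => h.symm (ι y)) x :=
    ContinuousAt.comp (g := h.symm) (f := ι) (h.symm.continuousAt htgt) hι.continuous.continuousAt
  refine ⟨fun y => ψ (h.symm (ι y)).2, ?_, ?_⟩
  · -- smoothness
    have hopen : ∀ᶠ w in 𝓝 (x, z₀), ∃ T' : (EuclideanSpace ℝ (Fin ν) × EuclideanSpace ℝ (Fin ν)) ≃L[ℝ]
      (EuclideanSpace ℝ (Fin ν) × EuclideanSpace ℝ (Fin ν)), (T' : _ →L[ℝ] _) = fderiv ℝ Θ w := by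
      have hc : ContinuousAt (fderiv ℝ Θ) (x, z₀) :=
        (hΘ.continuousOn_fderiv_of_isOpen hO (by simp)).continuousAt (hO.mem_nhds hp₀)
      have := ContinuousLinearEquiv.nhds T
      rw [hT] at this
      filter_upwards [hc this] with w hw using hw
    have hcs' := hcs
    unfold ContinuousAt at hcs'
    simp only [ι, hsymm0] at hcs'
    have ht : ∀ᶠ y in 𝓝 x, ι y ∈ h.target :=
      hι.continuous.continuousAt (h.open_target.mem_nhds htgt)
    filter_upwards [ht, hcs'.eventually hopen, hcs'.eventually (hO.mem_nhds hp₀)] with y h1 h2 h3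
    obtain ⟨T', hT'⟩ := h2
    have hat : ContDiffAt ℝ (⊤ : ℕ∞) Θ (h.symm (ι y)) := hΘ.contDiffAt (hO.mem_nhds h3)
    have hs : ContDiffAt ℝ (⊤ : ℕ∞) h.symm (ι y) := by
      refine h.contDiffAt_symm (f₀' := T') h1 ?_ hat
      rw [hT']
      exact (hat.differentiableAt (by simp)).hasFDerivAt
    have hψat : ContDiffAt ℝ (⊤ : ℕ∞) ψ (h.symm (ι y)).2 := hψ.contDiffAt (hV.mem_nhds h3.2)
    exact ContDiffAt.comp (g := ψ) (f := fun y => (h.symm (ι y)).2) y hψat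
      (contDiffAt_snd.comp y (hs.comp y hι.contDiffAt))
  · -- nearest points
    have hnear : ∀ᶠ w in 𝓝 (x, x), (w.2 ∈ U ∧ (w.1, φ w.2) ∈ h.source) := by
      have hφc : ContinuousAt φ x := hφd.continuousAt
      have h1 : ContinuousAt (fun w : EuclideanSpace ℝ (Fin ν) × EuclideanSpace ℝ (Fin ν) =>
        (w.1, φ w.2)) (x, x) := continuousAt_fst.prodMk
          (ContinuousAt.comp (g := φ) (f := Prod.snd) hφc continuousAt_snd)
      exact (continuousAt_snd.eventually (hU.mem_nhds hxU)).and
        (h1 (h.open_source.mem_nhds hsrc))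
    obtain ⟨ε, hε, hε'⟩ := Metric.eventually_nhds_iff.1 hnear
    filter_upwards [Metric.ball_mem_nhds x (half_pos hε)] with y hy q hq hdq
    rw [mem_ball] at hy
    have hyq : dist y q ≤ dist y x := by rw [hdq]; exact infDist_le_dist_of_mem hx
    have hqx : dist q x < ε := by
      have := dist_triangle q y x
      rw [dist_comm q y] at this; linarith
    obtain ⟨hqU, hqs⟩ := hε' (y := (y, q)) (by
      rw [Prod.dist_eq]; exact max_lt (by simp; linarith) (by simpa using hqx))
    simp only at hqU hqs
    have hzV : φ q ∈ V := hmφ hqU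
    have hzero : Θ (y, φ q) = (y, 0) := by
      refine Prod.ext rfl ?_
      ext i
      by_cases hi : (i:ℕ) < d
      · simp only [Θ, Θ₂, hi, if_true]
        let c : ℝ → EuclideanSpace ℝ (Fin ν) := fun s => φ q + s • e i
        have hcd : HasDerivAt c (e i) 0 := by
          have := ((hasDerivAt_id (0:ℝ)).smul_const (e i)).const_add (φ q)
          rw [one_smul] at this
          exact this
        have hc0 : c 0 = φ q := by simp [c]
        have hψq : HasFDerivAt ψ (fderiv ℝ ψ (φ q)) (c 0) := by
          rw [hc0]
          exact ((hψ.contDiffAt (hV.mem_nhds hzV)).differentiableAt (by simp)).hasFDerivAt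
        have hd1 : HasDerivAt (fun s => ψ (c s) - y) (fderiv ℝ ψ (φ q) (e i)) 0 :=
          (hψq.comp_hasDerivAt 0 hcd).sub_const y
        have hd2 := hd1.norm_sq
        have hmin : IsLocalMin (fun s => ‖ψ (c s) - y‖ ^ 2) 0 := by
          have : ∀ᶠ s in 𝓝 (0:ℝ), c s ∈ V := by
            have := hcd.continuousAt
            exact this (hV.mem_nhds (by rw [hc0]; exact hzV))
          filter_upwards [this] with s hs
          have hsN : ψ (c s) ∈ N := by
            rw [hN _ (hmψ hs), hr _ hs]
            intro j hj
            have hji : j ≠ i := by rintro rfl; omega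
            have := (hN q hqU).1 hq j hj
            simp [c, e, this, hji]
          rw [hc0, hl q hqU, ← dist_eq_norm, ← dist_eq_norm, dist_comm q y, dist_comm _ y, hdq]
          have := infDist_le_dist_of_mem (x := y) hsN
          gcongr
          exact infDist_nonneg
        have := hmin.hasDerivAt_eq_zero hd2
        rw [real_inner_comm, hc0] at this
        simpa using this
      · simp only [Θ, Θ₂, hi, if_false]
        exact (hN q hqU).1 hq i (not_lt.1 hi)
    have h5 : h.symm (ι y) = (y, φ q) := by
      have : ι y = h (y, φ q) := hzero.symm
      rw [this]; exact h.left_inv hqs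
    simp only [h5]
    exact (hl q hqU).symm

/-- Smooth nearest point retraction onto a compact submanifold. -/
theorem tubular {ν : ℕ} (N : Set (EuclideanSpace ℝ (Fin ν)))
    (hNcpt : IsCompact N) (hne : N.Nonempty) (hNsub : IsSmoothSubmanifold N) :
    ∃ δ : ℝ, 0 < δ ∧ ∃ Pr : EuclideanSpace ℝ (Fin ν) → EuclideanSpace ℝ (Fin ν), ∃ L : NNReal,
      ContDiffOn ℝ (⊤ : ℕ∞) Pr (thickening δ N) ∧ (∀ y, Pr y ∈ N) ∧ (∀ y ∈ N, Pr y = y) ∧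
      LipschitzOnWith L Pr (thickening δ N) := by
  have hex : ∀ y, ∃ q ∈ N, infDist y N = dist y q := fun y => hNcpt.exists_infDist_eq_dist hne y
  choose Pr hPrN hPr using hex
  have hloc : ∀ x ∈ N, ∀ᶠ y in 𝓝 x, ContDiffAt ℝ (⊤ : ℕ∞) Pr y := by
    intro x hx
    obtain ⟨f, hf, hf'⟩ := nearest_local N hNsub x hx
    have : ∀ᶠ y in 𝓝 x, Pr y = f y := by
      filter_upwards [hf'] with y hy using hy _ (hPrN y) (hPr y).symm
    filter_upwards [hf, eventually_eventually_nhds.2 this] with y h1 h2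
    exact h1.congr_of_eventuallyEq h2
  let O := interior {y | ContDiffAt ℝ (⊤ : ℕ∞) Pr y}
  have hNO : N ⊆ O := fun x hx => mem_interior_iff_mem_nhds.2 (hloc x hx)
  obtain ⟨δ, hδ, hsub⟩ := hNcpt.exists_cthickening_subset_open isOpen_interior hNO
  have hcd : ∀ y ∈ cthickening δ N, ContDiffAt ℝ (⊤ : ℕ∞) Pr y := fun y hy =>
    interior_subset (hsub hy)
  have hK : IsCompact (cthickening δ N) := hNcpt.cthickening
  obtain ⟨L, hL⟩ := LocallyLipschitzOn.exists_lipschitzOnWith_of_compact (f := Pr) hK (by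
    intro y hy
    obtain ⟨K, t, ht, hKt⟩ := ((hcd y hy).of_le (m := 1) (by simp)).exists_lipschitzOnWith
    exact ⟨K, t, mem_nhdsWithin_of_mem_nhds ht, hKt⟩)
  refine ⟨δ, hδ, Pr, L, ?_, hPrN, ?_, hL.mono (thickening_subset_cthickening δ N)⟩
  · intro y hy
    exact (hcd y (thickening_subset_cthickening δ N hy)).contDiffWithinAt
  · intro y hy
    have := hPr y
    rw [infDist_zero_of_mem hy] at this
    exact (dist_eq_zero.1 this.symm).symm

/-- Continuous maps of `ℝ^l` to `N` which are constantly `b` outside the ball of radius `R`. -/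
structure Adm {l ν : ℕ} (N : Set (EuclideanSpace ℝ (Fin ν))) (b : EuclideanSpace ℝ (Fin ν))
    (R : ℝ) (w : EuclideanSpace ℝ (Fin l) → EuclideanSpace ℝ (Fin ν)) : Prop where
  cont : Continuous w
  mem : ∀ x, w x ∈ N
  bdry : ∀ x, R ≤ ‖x‖ → w x = b

theorem Adm.mono {l ν : ℕ} {N : Set (EuclideanSpace ℝ (Fin ν))} {b : EuclideanSpace ℝ (Fin ν)}
    {R R' : ℝ} {w : EuclideanSpace ℝ (Fin l) → EuclideanSpace ℝ (Fin ν)} (h : Adm N b R w)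
    (hR : R ≤ R') : Adm N b R' w := ⟨h.cont, h.mem, fun x hx => h.bdry x (hR.trans hx)⟩

/-- The affine map from the unit cube to `[-1,1]^l`. -/
def cubeMap {l : ℕ} (t : Fin l → unitInterval) : EuclideanSpace ℝ (Fin l) :=
  WithLp.toLp 2 (fun i => 2 * (t i : ℝ) - 1)

theorem continuous_cubeMap {l : ℕ} : Continuous (cubeMap (l := l)) := by
  unfold cubeMap
  fun_prop

theorem one_le_norm_cubeMap {l : ℕ} (t : Fin l → unitInterval) (ht : t ∈ Cube.boundary (Fin l)) :
    1 ≤ ‖cubeMap t‖ := by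
  obtain ⟨i, hi⟩ := ht
  refine le_trans ?_ (PiLp.norm_apply_le (cubeMap t) i)
  rcases hi with hi | hi <;> simp [cubeMap, hi]
  norm_num

/-- The generalized loop associated with an admissible map. -/
def toLoop {l ν : ℕ} {N : Set (EuclideanSpace ℝ (Fin ν))} {b : EuclideanSpace ℝ (Fin ν)}
    (hb : b ∈ N) (w : EuclideanSpace ℝ (Fin l) → EuclideanSpace ℝ (Fin ν)) (h : Adm N b 1 w) :
    GenLoop (Fin l) ↥N ⟨b, hb⟩ :=
  ⟨⟨fun t => ⟨w (cubeMap t), h.mem _⟩, by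
    exact (h.cont.comp continuous_cubeMap).subtype_mk _⟩, fun t ht => by
      apply Subtype.ext
      exact h.bdry _ (one_le_norm_cubeMap t ht)⟩

/-- The class in the homotopy group of an admissible map. -/
def cls {l ν : ℕ} {N : Set (EuclideanSpace ℝ (Fin ν))} {b : EuclideanSpace ℝ (Fin ν)}
    (hb : b ∈ N) (w : EuclideanSpace ℝ (Fin l) → EuclideanSpace ℝ (Fin ν)) (h : Adm N b 1 w) :
    HomotopyGroup (Fin l) ↥N ⟨b, hb⟩ :=
  Quotient.mk (GenLoop.Homotopic.setoid (Fin l) _) (toLoop hb w h)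

theorem cls_eq {l ν : ℕ} {N : Set (EuclideanSpace ℝ (Fin ν))} {b : EuclideanSpace ℝ (Fin ν)}
    (hb : b ∈ N) {w₀ w₁ : EuclideanSpace ℝ (Fin l) → EuclideanSpace ℝ (Fin ν)}
    (h₀ : Adm N b 1 w₀) (h₁ : Adm N b 1 w₁)
    (H : ℝ × EuclideanSpace ℝ (Fin l) → EuclideanSpace ℝ (Fin ν))
    (hH : ContinuousOn H (Icc 0 1 ×ˢ univ))
    (hN : ∀ s ∈ Icc (0:ℝ) 1, ∀ x, H (s, x) ∈ N)
    (hbd : ∀ s ∈ Icc (0:ℝ) 1, ∀ x, 1 ≤ ‖x‖ → H (s, x) = b)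
    (e₀ : ∀ x, H (0, x) = w₀ x) (e₁ : ∀ x, H (1, x) = w₁ x) :
    cls hb w₀ h₀ = cls hb w₁ h₁ := by
  apply Quotient.sound
  refine ⟨⟨⟨⟨fun q => ⟨H (q.1, cubeMap q.2), hN _ q.1.2 _⟩, ?_⟩, ?_, ?_⟩, ?_⟩⟩
  · refine Continuous.subtype_mk ?_ _
    refine hH.comp_continuous (f := fun q : unitInterval × (Fin l → unitInterval) =>
      ((q.1 : ℝ), cubeMap q.2)) ?_ ?_
    · exact (continuous_subtype_val.comp continuous_fst).prodMk
        (continuous_cubeMap.comp continuous_snd)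
    · intro q; exact ⟨q.1.2, mem_univ _⟩
  · intro t
    apply Subtype.ext
    exact e₀ _
  · intro t
    apply Subtype.ext
    exact e₁ _
  · intro s t ht
    apply Subtype.ext
    have h1 := one_le_norm_cubeMap t ht
    exact (hbd s s.2 _ h1).trans (h₀.bdry _ h1).symm

theorem exists_rep {l ν : ℕ} {N : Set (EuclideanSpace ℝ (Fin ν))} {b : EuclideanSpace ℝ (Fin ν)}
    (hb : b ∈ N) (hl : 1 ≤ l) (α : HomotopyGroup (Fin l) ↥N ⟨b, hb⟩) (r : ℝ) (hr : 0 < r)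
    (hr1 : r ≤ 1) :
    ∃ w, ∃ h : Adm N b r w, cls hb w (h.mono hr1) = α := by
  induction α using Quotient.inductionOn with
  | h f =>
  have hl' : (1:ℝ) ≤ l := by exact_mod_cast hl
  let c : ℝ := l / r
  have hc : 1 ≤ c := by rw [le_div_iff₀ hr]; linarith
  let κ : ℝ → EuclideanSpace ℝ (Fin l) → (Fin l → unitInterval) := fun s x i =>
    projIcc 0 1 zero_le_one (1 / 2 + s * x i / 2)
  have hκ : Continuous (fun q : ℝ × EuclideanSpace ℝ (Fin l) => κ q.1 q.2) := by
    refine continuous_pi fun i => continuous_projIcc.comp ?_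
    fun_prop
  have hκb : ∀ s x i, 1 ≤ |s * x i| → κ s x ∈ Cube.boundary (Fin l) := by
    intro s x i h
    refine ⟨i, ?_⟩
    rcases le_abs.1 h with h | h
    · right; exact projIcc_of_right_le _ (by linarith)
    · left; exact projIcc_of_le_left _ (by linarith)
  have hco : ∀ R > 0, ∀ x : EuclideanSpace ℝ (Fin l), R ≤ ‖x‖ → ∃ i, R / l ≤ |x i| := by
    intro R hR x hx
    by_contra! hcon
    have hsum : x = ∑ i, x i • EuclideanSpace.single i (1:ℝ) := by
      have := (EuclideanSpace.basisFun (Fin l) ℝ).sum_repr x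
      simpa using this.symm
    have h1 : ‖x‖ ≤ ∑ i, |x i| := by
      conv_lhs => rw [hsum]
      refine (norm_sum_le _ _).trans (le_of_eq ?_)
      simp [norm_smul]
    have h2 : ∑ i : Fin l, |x i| < ∑ i : Fin l, R / l :=
      Finset.sum_lt_sum_of_nonempty ⟨⟨0, hl⟩, Finset.mem_univ _⟩ (fun i _ => hcon i)
    have h3 : ∑ i : Fin l, R / l = R := by
      simp; field_simp
    linarith
  let w : EuclideanSpace ℝ (Fin l) → EuclideanSpace ℝ (Fin ν) := fun x => (f (κ c x) : _)
  have hw : Adm N b r w := by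
    refine ⟨?_, fun x => (f (κ c x)).2, ?_⟩
    · exact continuous_subtype_val.comp (f.1.continuous.comp
        (hκ.comp (continuous_const.prodMk continuous_id)))
    · intro x hx
      obtain ⟨i, hi⟩ := hco r hr x hx
      have : κ c x ∈ Cube.boundary (Fin l) := by
        refine hκb c x i ?_
        rw [abs_mul, abs_of_pos (by linarith)]
        calc (1:ℝ) = c * (r / l) := by simp only [c]; field_simp
          _ ≤ c * |x i| := by gcongr
      simp only [w]
      rw [GenLoop.boundary f _ this]
  refine ⟨w, hw, ?_⟩
  apply Quotient.sound
  refine ⟨⟨⟨⟨fun q => f (κ (c + q.1 * (1 - c)) (cubeMap q.2)), ?_⟩, ?_, ?_⟩, ?_⟩⟩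
  · refine f.1.continuous.comp (hκ.comp (Continuous.prodMk ?_ ?_))
    · fun_prop
    · exact continuous_cubeMap.comp continuous_snd
  · intro t
    apply Subtype.ext
    simp [toLoop, w]
  · intro t
    have : κ 1 (cubeMap t) = t := by
      funext i
      simp only [κ, cubeMap]
      have : 1 / 2 + 1 * (2 * (t i : ℝ) - 1) / 2 = t i := by ring
      rw [this]
      exact projIcc_val _ _
    simp [this]
  · intro s t ht
    have h1 := one_le_norm_cubeMap t ht
    have hbd : κ (c + s * (1 - c)) (cubeMap t) ∈ Cube.boundary (Fin l) := by
      obtain ⟨i, hi⟩ := ht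
      refine hκb _ _ i ?_
      have h2 : 1 ≤ c + s * (1 - c) := by
        have := s.2.1; have := s.2.2
        nlinarith
      have h3 : |cubeMap t i| = 1 := by
        rcases hi with hi | hi <;> simp [cubeMap, hi]
        norm_num
      rw [abs_mul, h3, mul_one]
      exact h2.trans (le_abs_self _)
    change f (κ (c + s * (1 - c)) (cubeMap t)) = _
    rw [GenLoop.boundary f _ hbd]
    apply Subtype.ext
    exact (hw.mono hr1).bdry _ h1 |>.symm

theorem jensen_lintegral {α : Type*} [MeasurableSpace α] (μ : Measure α) [IsProbabilityMeasure μ]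
    {G : Type*} [NormedAddCommGroup G] [NormedSpace ℝ G]
    (p : ℝ) (hp : 1 ≤ p) (f : α → G) (hf : AEStronglyMeasurable f μ) :
    (∫⁻ z, ‖f z‖ₑ ∂μ) ^ p ≤ ∫⁻ z, ‖f z‖ₑ ^ p ∂μ := by
  have h := eLpNorm'_le_eLpNorm'_of_exponent_le (f := f) zero_lt_one hp μ hf
  unfold eLpNorm' at h
  simp only [ENNReal.rpow_one, div_one] at h
  have hp0 : 0 < p := by linarith
  calc (∫⁻ z, ‖f z‖ₑ ∂μ) ^ p ≤ ((∫⁻ z, ‖f z‖ₑ ^ p ∂μ) ^ (1 / p)) ^ p := by gcongr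
    _ = _ := by rw [← ENNReal.rpow_mul]; simp [hp0.ne']

theorem ofReal_norm_rpow {G : Type*} [NormedAddCommGroup G] (v : G) (p : ℝ) (hp : 0 ≤ p) :
    ENNReal.ofReal (‖v‖ ^ p) = ‖v‖ₑ ^ p := by
  rw [← ENNReal.ofReal_rpow_of_nonneg (norm_nonneg _) hp, ofReal_norm]

/-- The `p`-th power of the `L^p` norm of the increment of `w` by `h`. -/
def incr {l ν : ℕ} (p : ℝ) (w : EuclideanSpace ℝ (Fin l) → EuclideanSpace ℝ (Fin ν))
    (h : EuclideanSpace ℝ (Fin l)) : ℝ≥0∞ :=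
  ∫⁻ x, ‖w (x + h) - w x‖ₑ ^ p

theorem gagliardoE_univ_eq {l ν : ℕ} (s p : ℝ) (hp : 1 ≤ p)
    (w : EuclideanSpace ℝ (Fin l) → EuclideanSpace ℝ (Fin ν)) (hw : Continuous w) :
    gagliardoE s p univ w = ∫⁻ h, incr p w h * ENNReal.ofReal ((‖h‖ ^ ((l:ℝ) + s * p))⁻¹) := by
  have hp0 : 0 ≤ p := by linarith
  unfold gagliardoE
  simp only [Measure.restrict_univ]
  have h1 : ∀ x, ∫⁻ y, ENNReal.ofReal (‖w y - w x‖ ^ p / ‖y - x‖ ^ ((l:ℝ) + s * p)) =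
      ∫⁻ h, ‖w (x + h) - w x‖ₑ ^ p * ENNReal.ofReal ((‖h‖ ^ ((l:ℝ) + s * p))⁻¹) := by
    intro x
    rw [← lintegral_add_left_eq_self _ x]
    refine lintegral_congr fun h => ?_
    rw [div_eq_mul_inv, ENNReal.ofReal_mul (by positivity), ofReal_norm_rpow _ _ hp0]
    simp
  simp only [h1]
  rw [lintegral_lintegral_swap]
  · refine lintegral_congr fun h => ?_
    rw [lintegral_mul_const]
    · rfl
    · exact ((hw.comp (continuous_add_const h)).sub hw).enorm.measurable.pow_const p
  · refine Measurable.aemeasurable (Measurable.mul ?_ ?_)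
    · refine Measurable.pow_const ?_ p
      exact (((hw.comp (continuous_fst.add continuous_snd)).sub
        (hw.comp continuous_fst)).enorm).measurable
    · refine Measurable.ennreal_ofReal ?_
      exact ((measurable_snd.norm).pow_const _).inv

theorem gagliardoE_mono_set {l ν : ℕ} (s p : ℝ) (A : Set (EuclideanSpace ℝ (Fin l)))
    (w : EuclideanSpace ℝ (Fin l) → EuclideanSpace ℝ (Fin ν)) :
    gagliardoE s p A w ≤ gagliardoE s p univ w := by
  unfold gagliardoE
  simp only [Measure.restrict_univ]
  refine (setLIntegral_le_lintegral _ _).trans ?_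
  exact lintegral_mono fun x => setLIntegral_le_lintegral _ _

/-- Averages of translates of a map. -/
def moll {l ν : ℕ} (μ : Measure (EuclideanSpace ℝ (Fin l))) (ε : ℝ)
    (w : EuclideanSpace ℝ (Fin l) → EuclideanSpace ℝ (Fin ν)) (x : EuclideanSpace ℝ (Fin l)) :
    EuclideanSpace ℝ (Fin ν) := ∫ z, w (x - ε • z) ∂μ

section mollsec
variable {l ν : ℕ} (μ : Measure (EuclideanSpace ℝ (Fin l))) [IsProbabilityMeasure μ]
  (w : EuclideanSpace ℝ (Fin l) → EuclideanSpace ℝ (Fin ν)) (hw : Continuous w)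
  (D : ℝ) (hD : ∀ x, ‖w x‖ ≤ D)

theorem moll_integrable (hw : Continuous w) (hD : ∀ x, ‖w x‖ ≤ D) (ε : ℝ)
    (x : EuclideanSpace ℝ (Fin l)) : Integrable (fun z => w (x - ε • z)) μ := by
  refine Integrable.of_bound (C := D) ?_ (Eventually.of_forall fun z => hD _)
  exact (hw.comp (by fun_prop : Continuous fun z => x - ε • z)).aestronglyMeasurable

theorem moll_continuous (hw : Continuous w) (hD : ∀ x, ‖w x‖ ≤ D) :
    Continuous (fun q : ℝ × EuclideanSpace ℝ (Fin l) => moll μ q.1 w q.2) := by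
  unfold moll
  refine continuous_of_dominated (bound := fun _ => D) ?_ ?_ ?_ ?_
  · intro q
    exact (moll_integrable μ w D hw hD q.1 q.2).1
  · intro q; exact Eventually.of_forall fun z => hD _
  · exact integrable_const _
  · refine Eventually.of_forall fun z => ?_
    exact hw.comp (by fun_prop)

theorem moll_zero : moll μ 0 w = w := by
  funext x; simp [moll]

theorem moll_const (b : EuclideanSpace ℝ (Fin ν)) (ε R : ℝ) (hε : 0 ≤ ε) (hb : ∀ x, R ≤ ‖x‖ → w x = b)
    (hμ : ∀ᵐ z ∂μ, ‖z‖ ≤ 1) (x : EuclideanSpace ℝ (Fin l)) (hx : R + ε ≤ ‖x‖) :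
    moll μ ε w x = b := by
  unfold moll
  have : ∀ᵐ z ∂μ, w (x - ε • z) = b := by
    filter_upwards [hμ] with z hz
    apply hb
    have h1 := norm_sub_norm_le x (ε • z)
    rw [norm_smul, Real.norm_of_nonneg hε] at h1
    nlinarith
  rw [integral_congr_ae this]
  simp

theorem incr_moll_le (hw : Continuous w) (hD : ∀ x, ‖w x‖ ≤ D) (p : ℝ) (hp : 1 ≤ p) (ε : ℝ)
    (h : EuclideanSpace ℝ (Fin l)) : incr p (moll μ ε w) h ≤ incr p w h := by
  unfold incr
  have hm : Continuous fun q : EuclideanSpace ℝ (Fin l) × EuclideanSpace ℝ (Fin l) =>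
      w (q.1 + h - ε • q.2) - w (q.1 - ε • q.2) :=
    (hw.comp (by fun_prop)).sub (hw.comp (by fun_prop))
  calc ∫⁻ x, ‖moll μ ε w (x + h) - moll μ ε w x‖ₑ ^ p
      ≤ ∫⁻ x, ∫⁻ z, ‖w (x + h - ε • z) - w (x - ε • z)‖ₑ ^ p ∂μ := by
        refine lintegral_mono fun x => ?_
        unfold moll
        rw [← integral_sub (moll_integrable μ w D hw hD _ _) (moll_integrable μ w D hw hD _ _)]
        refine le_trans ?_ (jensen_lintegral μ p hp _ ?_)
        · gcongr
          exact enorm_integral_le_lintegral_enorm _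
        · exact (moll_integrable μ w D hw hD _ _).1.sub (moll_integrable μ w D hw hD _ _).1
    _ = ∫⁻ z, (∫⁻ x, ‖w (x + h - ε • z) - w (x - ε • z)‖ₑ ^ p) ∂μ := by
        rw [lintegral_lintegral_swap]
        exact (hm.enorm.measurable.pow_const p).aemeasurable
    _ = ∫⁻ z, (∫⁻ x, ‖w (x + h) - w x‖ₑ ^ p) ∂μ := by
        refine lintegral_congr fun z => ?_
        rw [← lintegral_sub_right_eq_self (fun x => ‖w (x + h) - w x‖ₑ ^ p) (ε • z)]
        refine lintegral_congr fun x => ?_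
        rw [sub_add_eq_add_sub]
    _ = _ := by simp

theorem gagliardoE_moll_le (hw : Continuous w) (hD : ∀ x, ‖w x‖ ≤ D) (s p : ℝ) (hp : 1 ≤ p)
    (ε : ℝ) : gagliardoE s p univ (moll μ ε w) ≤ gagliardoE s p univ w := by
  have hc : Continuous (moll μ ε w) :=
    (moll_continuous μ w D hw hD).comp (by fun_prop : Continuous fun x => (ε, x))
  rw [gagliardoE_univ_eq s p hp _ hc, gagliardoE_univ_eq s p hp _ hw]
  refine lintegral_mono fun h => ?_
  gcongr
  exact incr_moll_le μ w D hw hD p hp ε h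

/-- The average is close to the target if the double averages are small. -/
theorem infDist_moll_le (hw : Continuous w) (hD : ∀ x, ‖w x‖ ≤ D) (p : ℝ) (hp : 1 ≤ p) (ε : ℝ)
    (N : Set (EuclideanSpace ℝ (Fin ν))) (hN : ∀ x, w x ∈ N) (x : EuclideanSpace ℝ (Fin l)) :
    ENNReal.ofReal (infDist (moll μ ε w x) N) ^ p ≤
      ∫⁻ z', ∫⁻ z, ‖w (x - ε • z) - w (x - ε • z')‖ₑ ^ p ∂μ ∂μ := by
  calc ENNReal.ofReal (infDist (moll μ ε w x) N) ^ p
      = ∫⁻ z', ENNReal.ofReal (infDist (moll μ ε w x) N) ^ p ∂μ := by simp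
    _ ≤ _ := by
      refine lintegral_mono fun z' => ?_
      have h1 : ENNReal.ofReal (infDist (moll μ ε w x) N) ≤ ‖moll μ ε w x - w (x - ε • z')‖ₑ := by
        rw [← ofReal_norm, ← dist_eq_norm]
        exact ENNReal.ofReal_le_ofReal (infDist_le_dist_of_mem (hN _))
      have h2 : moll μ ε w x - w (x - ε • z') = ∫ z, (w (x - ε • z) - w (x - ε • z')) ∂μ := by
        rw [integral_sub (moll_integrable μ w D hw hD _ _) (integrable_const _)]
        simp [moll]
      calc _ ≤ (∫⁻ z, ‖w (x - ε • z) - w (x - ε • z')‖ₑ ∂μ) ^ p := by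
            gcongr
            refine h1.trans ?_
            rw [h2]
            exact enorm_integral_le_lintegral_enorm _
        _ ≤ _ := jensen_lintegral μ p hp _
            ((moll_integrable μ w D hw hD _ _).1.sub aestronglyMeasurable_const)
end mollsec

/-- A smooth mollifier, given as a probability measure on the unit ball. -/
theorem exists_mollifier (l ν : ℕ) :
    ∃ μ : Measure (EuclideanSpace ℝ (Fin l)), IsProbabilityMeasure μ ∧ (∀ᵐ z ∂μ, ‖z‖ ≤ 1) ∧
      (∃ C : ℝ≥0∞, C ≠ ⊤ ∧ μ ≤ C • volume.restrict (ball 0 1)) ∧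
      (∀ ε : ℝ, 0 < ε → ∀ w : EuclideanSpace ℝ (Fin l) → EuclideanSpace ℝ (Fin ν),
        Continuous w → ContDiff ℝ (⊤ : ℕ∞) (moll μ ε w)) ∧
      (∀ ε : ℝ, 0 < ε → ∀ D : ℝ, ∃ Λ : ℝ, 0 < Λ ∧
        ∀ w : EuclideanSpace ℝ (Fin l) → EuclideanSpace ℝ (Fin ν),
        Continuous w → (∀ x, ‖w x‖ ≤ D) →
        ∀ x x', ‖moll μ ε w x - moll μ ε w x'‖ ≤ Λ * ‖x - x'‖) := by
  let B : ContDiffBump (0 : EuclideanSpace ℝ (Fin l)) := ⟨1/2, 1, by norm_num, by norm_num⟩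
  let η : EuclideanSpace ℝ (Fin l) → ℝ := B.normed volume
  have hη0 : ∀ z, 0 ≤ η z := fun z => B.nonneg_normed z
  have hηc : Continuous η := B.continuous_normed
  have hηs : Function.support η = ball 0 1 := B.support_normed_eq
  have hηd : ContDiff ℝ (⊤ : ℕ∞) η := B.contDiff_normed
  have hηi : Integrable η := B.integrable_normed
  have hηcs : HasCompactSupport η := B.hasCompactSupport_normed
  have hηm : Measurable (fun z => ENNReal.ofReal (η z)) := hηc.measurable.ennreal_ofReal
  let μ : Measure (EuclideanSpace ℝ (Fin l)) := volume.withDensity (fun z => ENNReal.ofReal (η z))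
  have hprob : IsProbabilityMeasure μ := by
    constructor
    rw [withDensity_apply _ MeasurableSet.univ, Measure.restrict_univ,
      ← ofReal_integral_eq_lintegral_ofReal hηi (Eventually.of_forall hη0), B.integral_normed]
    simp
  obtain ⟨C, hC⟩ : ∃ C : ℝ, ∀ z, η z ≤ C := by
    obtain ⟨C, hC⟩ := hηcs.exists_bound_of_continuous hηc
    exact ⟨C, fun z => (le_abs_self _).trans (hC z)⟩
  have hle : μ ≤ ENNReal.ofReal C • volume.restrict (ball 0 1) := by
    rw [← withDensity_const, ← withDensity_indicator measurableSet_ball]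
    refine withDensity_mono (Eventually.of_forall fun z => ?_)
    by_cases hz : z ∈ ball (0 : EuclideanSpace ℝ (Fin l)) 1
    · simp only [indicator_of_mem hz]
      exact ENNReal.ofReal_le_ofReal (hC z)
    · have : η z = 0 := by
        rw [← hηs] at hz
        simpa using hz
      simp [this]
  have hball : ∀ᵐ z ∂μ, ‖z‖ ≤ 1 := by
    have h1 : ∀ᵐ z ∂(volume.restrict (ball (0 : EuclideanSpace ℝ (Fin l)) 1)), ‖z‖ ≤ 1 := by
      filter_upwards [ae_restrict_mem measurableSet_ball] with z hz
      exact (mem_ball_zero_iff.1 hz).le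
    have h2 : μ ≪ volume.restrict (ball (0 : EuclideanSpace ℝ (Fin l)) 1) :=
      (Measure.absolutelyContinuous_of_le hle).trans Measure.smul_absolutelyContinuous
    exact h2.ae_le h1
  -- convolution form
  let g : ℝ → EuclideanSpace ℝ (Fin l) → ℝ := fun ε y => (ε ^ l)⁻¹ * η (ε⁻¹ • y)
  have hgd : ∀ ε, ContDiff ℝ (⊤ : ℕ∞) (g ε) := fun ε =>
    contDiff_const.mul (hηd.comp (contDiff_const_smul _))
  have hgs : ∀ ε, 0 < ε → ∀ y, ε ≤ ‖y‖ → g ε y = 0 := by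
    intro ε hε y hy
    have : η (ε⁻¹ • y) = 0 := by
      by_contra h
      have : ε⁻¹ • y ∈ Function.support η := h
      rw [hηs, mem_ball_zero_iff, norm_smul, norm_inv, Real.norm_of_nonneg hε.le,
        inv_mul_lt_iff₀ hε] at this
      linarith
    simp [g, this]
  have hgcs : ∀ ε, 0 < ε → HasCompactSupport (g ε) := by
    intro ε hε
    refine HasCompactSupport.of_support_subset_isCompact (isCompact_closedBall 0 ε) ?_
    intro y hy
    rw [mem_closedBall_zero_iff]
    by_contra! h
    exact hy (hgs ε hε y h.le)
  have hconv : ∀ ε, 0 < ε → ∀ (w : EuclideanSpace ℝ (Fin l) → EuclideanSpace ℝ (Fin ν)) x,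
      moll μ ε w x = ∫ y, g ε y • w (x - y) := by
    intro ε hε w x
    unfold moll
    rw [integral_withDensity_eq_integral_toReal_smul hηm (by simp)]
    have h1 := Measure.integral_comp_smul (volume : Measure (EuclideanSpace ℝ (Fin l)))
      (fun y => g ε y • w (x - y)) ε
    have hεl : (0:ℝ) < ε ^ l := by positivity
    have h2 : (fun z => g ε (ε • z) • w (x - ε • z)) =
        fun z => (ε ^ l)⁻¹ • (η z • w (x - ε • z)) := by
      funext z
      simp [g, smul_smul, inv_mul_cancel₀ hε.ne']
    rw [h2, integral_smul] at h1
    simp only [finrank_euclideanSpace, Fintype.card_fin, abs_of_pos (inv_pos.2 hεl)] at h1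
    have h3 := smul_right_injective _ (inv_ne_zero hεl.ne') h1
    simp only [ENNReal.toReal_ofReal (hη0 _)]
    exact h3
  refine ⟨μ, hprob, hball, ⟨_, ENNReal.ofReal_ne_top, hle⟩, ?_, ?_⟩
  · intro ε hε w hw
    have h1 : moll μ ε w = convolution (g ε) w (ContinuousLinearMap.lsmul ℝ ℝ) volume := by
      funext x
      rw [hconv ε hε w x]
      rfl
    rw [h1]
    exact (hgcs ε hε).contDiff_convolution_left _ (hgd ε) hw.locallyIntegrable
  · intro ε hε D
    obtain ⟨K, hK⟩ := ((hgd ε).of_le (by simp : (1 : WithTop ℕ∞) ≤ (⊤ : ℕ∞))).lipschitzWith_of_hasCompactSupport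
      (hgcs ε hε) (by simp)
    let V : ℝ := (volume (ball (0 : EuclideanSpace ℝ (Fin l)) ε)).toReal
    refine ⟨K * |D| * (2 * V) + 1, by positivity, fun w hw hD x x' => ?_⟩
    have hsw : ∀ x, moll μ ε w x = ∫ y, g ε (x - y) • w y := by
      intro x
      rw [hconv ε hε w x, ← integral_sub_left_eq_self _ volume x]
      simp
    have hInteg : ∀ x, Integrable (fun y => g ε (x - y) • w y) := by
      intro x
      have hcs : HasCompactSupport (fun y => g ε (x - y)) :=
        (hgcs ε hε).comp_homeomorph (Homeomorph.subLeft x)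
      exact (((hgd ε).continuous.comp (by fun_prop)).smul hw).integrable_of_hasCompactSupport
        hcs.smul_right
    rw [hsw, hsw, ← integral_sub (hInteg x) (hInteg x')]
    set S := ball x ε ∪ ball x' ε with hS
    have hz : ∀ y ∉ S, g ε (x - y) • w y - g ε (x' - y) • w y = 0 := by
      intro y hy
      simp only [hS, mem_union, mem_ball, not_or, not_lt] at hy
      rw [hgs ε hε (x - y) (by rw [← dist_eq_norm, dist_comm]; exact hy.1),
        hgs ε hε (x' - y) (by rw [← dist_eq_norm, dist_comm]; exact hy.2)]
      simp
    rw [← setIntegral_eq_integral_of_forall_compl_eq_zero hz]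
    have hSfin : volume S < ⊤ :=
      (measure_union_le _ _).trans_lt (ENNReal.add_lt_top.2 ⟨measure_ball_lt_top, measure_ball_lt_top⟩)
    have hSV : volume.real S ≤ 2 * V := by
      have h1 := measureReal_union_le (μ := volume) (ball x ε) (ball x' ε)
      have h2 : ∀ x : EuclideanSpace ℝ (Fin l), volume.real (ball x ε) = V := by
        intro x
        simp only [V, Measure.real, Measure.addHaar_ball_center]
      rw [h2, h2] at h1
      linarith
    have hbd : ∀ y ∈ S, ‖g ε (x - y) • w y - g ε (x' - y) • w y‖ ≤ K * ‖x - x'‖ * |D| := by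
      intro y _
      rw [← sub_smul, norm_smul]
      have h1 := hK.dist_le_mul (x - y) (x' - y)
      rw [dist_eq_norm, dist_eq_norm, sub_sub_sub_cancel_right] at h1
      exact mul_le_mul h1 ((hD y).trans (le_abs_self D)) (norm_nonneg _) (by positivity)
    have h3 := norm_setIntegral_le_of_norm_le_const (μ := volume) hSfin hbd
    calc _ ≤ K * ‖x - x'‖ * |D| * volume.real S := h3
      _ ≤ K * ‖x - x'‖ * |D| * (2 * V) := by gcongr
      _ ≤ _ := by nlinarith [norm_nonneg (x - x')]

theorem cls_proj_moll {l ν : ℕ} {N : Set (EuclideanSpace ℝ (Fin ν))} {b : EuclideanSpace ℝ (Fin ν)}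
    (hb : b ∈ N) (δ : ℝ) (Pr : EuclideanSpace ℝ (Fin ν) → EuclideanSpace ℝ (Fin ν))
    (hPc : ContinuousOn Pr (thickening δ N)) (hPN : ∀ y, Pr y ∈ N) (hPid : ∀ y ∈ N, Pr y = y)
    (μ : Measure (EuclideanSpace ℝ (Fin l))) [IsProbabilityMeasure μ] (hμ : ∀ᵐ z ∂μ, ‖z‖ ≤ 1)
    (w : EuclideanSpace ℝ (Fin l) → EuclideanSpace ℝ (Fin ν)) (D : ℝ) (hD : ∀ x, ‖w x‖ ≤ D)
    (R R' ε : ℝ) (hε : 0 ≤ ε) (hR : R + ε ≤ R') (hR' : R' ≤ 1) (hw : Adm N b R w)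
    (h1 : ∀ e, 0 ≤ e → e ≤ ε → ∀ x, moll μ e w x ∈ thickening δ N) (hw1 : Adm N b 1 w) :
    ∃ h : Adm N b R' (fun x => Pr (moll μ ε w x)), cls hb _ (h.mono hR') = cls hb w hw1 := by
  have hmc := moll_continuous μ w D hw.cont hD
  have hA : Adm N b R' (fun x => Pr (moll μ ε w x)) := by
    refine ⟨?_, fun x => hPN _, fun x hx => ?_⟩
    · rw [← continuousOn_univ]
      refine hPc.comp (Continuous.continuousOn ?_) (fun x _ => h1 ε hε le_rfl x)
      exact hmc.comp (by fun_prop : Continuous fun x : EuclideanSpace ℝ (Fin l) => (ε, x))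
    · rw [moll_const μ w b ε R hε hw.bdry hμ x (hR.trans hx), hPid b hb]
  refine ⟨hA, ?_⟩
  symm
  refine cls_eq hb hw1 (hA.mono hR') (fun q => Pr (moll μ (q.1 * ε) w q.2)) ?_ ?_ ?_ ?_ ?_
  · refine hPc.comp (Continuous.continuousOn ?_) ?_
    · exact hmc.comp (by fun_prop : Continuous fun q : ℝ × EuclideanSpace ℝ (Fin l) => (q.1 * ε, q.2))
    · rintro ⟨s, x⟩ ⟨hs, -⟩
      exact h1 _ (mul_nonneg hs.1 hε) (mul_le_of_le_one_left hε hs.2) x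
  · intro s _ x; exact hPN _
  · intro s hs x hx
    have : s * ε ≤ ε := mul_le_of_le_one_left hε hs.2
    simp only
    rw [moll_const μ w b (s * ε) R (mul_nonneg hs.1 hε) hw.bdry hμ x (by linarith), hPid b hb]
  · intro x; simp only [zero_mul]; rw [moll_zero, hPid _ (hw.mem x)]
  · intro x; simp

theorem moll_close {l ν : ℕ} 
    (μ : Measure (EuclideanSpace ℝ (Fin l))) [IsProbabilityMeasure μ] (hμ : ∀ᵐ z ∂μ, ‖z‖ ≤ 1)
    (w : EuclideanSpace ℝ (Fin l) → EuclideanSpace ℝ (Fin ν)) (D : ℝ) (hD : ∀ x, ‖w x‖ ≤ D)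
    (hw : Continuous w) (b : EuclideanSpace ℝ (Fin ν)) (R : ℝ) (hb : ∀ x, R ≤ ‖x‖ → w x = b)
    (δ : ℝ) (hδ : 0 < δ) :
    ∃ ε₀ > 0, ∀ e, 0 ≤ e → e ≤ ε₀ → ∀ x, ‖moll μ e w x - w x‖ < δ := by
  have huc : UniformContinuous w := by
    refine hw.uniformContinuous_of_tendsto_cocompact (x := b) ?_
    refine tendsto_const_nhds.congr' ?_
    have h1 : ∀ᶠ x : EuclideanSpace ℝ (Fin l) in cocompact _, R ≤ ‖x‖ :=
      (tendsto_norm_cocompact_atTop).eventually_ge_atTop R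
    filter_upwards [h1] with x hx using (hb x hx).symm
  obtain ⟨r, hr, hrw⟩ := Metric.uniformContinuous_iff.1 huc (δ / 2) (by positivity)
  refine ⟨r / 2, by positivity, fun e he her x => ?_⟩
  have hI := moll_integrable μ w D hw hD e x
  have heq : moll μ e w x - w x = ∫ z, (w (x - e • z) - w x) ∂μ := by
    rw [integral_sub hI (integrable_const _)]; simp [moll]
  rw [heq]
  have : ‖∫ z, (w (x - e • z) - w x) ∂μ‖ ≤ δ / 2 * μ.real univ := by
    refine norm_integral_le_of_norm_le_const ?_
    filter_upwards [hμ] with z hz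
    rw [← dist_eq_norm]
    refine (hrw ?_).le
    rw [dist_eq_norm, sub_sub_cancel_left, norm_neg, norm_smul, Real.norm_of_nonneg he]
    nlinarith [norm_nonneg z]
  simp at this
  linarith

theorem smoothing {l ν : ℕ} {N : Set (EuclideanSpace ℝ (Fin ν))} {b : EuclideanSpace ℝ (Fin ν)}
    (hb : b ∈ N) (hNcpt : IsCompact N) (hNsub : IsSmoothSubmanifold N) (s p : ℝ) (hp : 1 ≤ p) :
    ∃ C : ℝ≥0∞, C ≠ ⊤ ∧ ∀ (w : EuclideanSpace ℝ (Fin l) → EuclideanSpace ℝ (Fin ν))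
      (hw : Adm N b (3/8) w) (hw1 : Adm N b 1 w),
      ∃ u, ∃ h : Adm N b (1/2) u, ContDiff ℝ (⊤ : ℕ∞) u ∧
        cls hb u (h.mono (by norm_num)) = cls hb w hw1 ∧
        gagliardoE s p (ball 0 1) u ≤ C * gagliardoE s p univ w := by
  obtain ⟨δ, hδ, Pr, L, hPs, hPN, hPid, hPL⟩ := tubular N hNcpt ⟨b, hb⟩ hNsub
  obtain ⟨μ, hμp, hμ, -, hsm, -⟩ := exists_mollifier l ν
  obtain ⟨D, hD⟩ := hNcpt.isBounded.exists_norm_le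
  refine ⟨(L : ℝ≥0∞) ^ p, by
    exact ENNReal.rpow_ne_top_of_nonneg (by linarith) ENNReal.coe_ne_top, ?_⟩
  intro w hw hw1
  have hDw : ∀ x, ‖w x‖ ≤ D := fun x => hD _ (hw.mem x)
  obtain ⟨ε₀, hε₀, hcl⟩ := moll_close μ hμ w D hDw hw.cont b (3/8) hw.bdry δ hδ
  have hth : ∀ e, 0 ≤ e → e ≤ min ε₀ (1/8) → ∀ x, moll μ e w x ∈ thickening δ N := by
    intro e he hee x
    rw [mem_thickening_iff]
    exact ⟨w x, hw.mem x, by rw [dist_eq_norm]; exact hcl e he (hee.trans (min_le_left _ _)) x⟩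
  have hε : 0 < min ε₀ (1/8) := lt_min hε₀ (by norm_num)
  obtain ⟨hA, hcls⟩ := cls_proj_moll hb δ Pr hPs.continuousOn hPN hPid μ hμ w D hDw (3/8) (1/2)
    (min ε₀ (1/8)) hε.le (by linarith [min_le_right ε₀ (1/8)]) (by norm_num) hw hth hw1
  refine ⟨_, hA, ?_, hcls, ?_⟩
  · have := hsm _ hε w hw.cont
    rw [← contDiffOn_univ] at this ⊢
    exact hPs.comp this (fun x _ => hth _ hε.le le_rfl x)
  · refine (gagliardoE_mono_set s p _ _).trans ?_
    refine le_trans ?_ (mul_le_mul_right (gagliardoE_moll_le μ w D hw.cont hDw s p hp (min ε₀ (1/8))) _)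
    have hmc := moll_continuous μ w D hw.cont hDw
    have hmc' : Continuous (moll μ (min ε₀ (1/8)) w) :=
      hmc.comp (by fun_prop : Continuous fun x : EuclideanSpace ℝ (Fin l) => (min ε₀ (1/8), x))
    rw [gagliardoE_univ_eq s p hp _ hA.cont, gagliardoE_univ_eq s p hp _ hmc']
    rw [← lintegral_const_mul']
    · refine lintegral_mono fun h => ?_
      rw [← mul_assoc]
      gcongr
      unfold incr
      rw [← lintegral_const_mul']
      · refine lintegral_mono fun x => ?_
        rw [← ENNReal.mul_rpow_of_nonneg _ _ (by linarith)]
        gcongr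
        have := hPL (hth _ hε.le le_rfl (x + h)) (hth _ hε.le le_rfl x)
        simpa [edist_eq_enorm_sub] using this
      · exact ENNReal.rpow_ne_top_of_nonneg (by linarith) ENNReal.coe_ne_top
    · exact ENNReal.rpow_ne_top_of_nonneg (by linarith) ENNReal.coe_ne_top

theorem lintegral_affine {l : ℕ} (f : EuclideanSpace ℝ (Fin l) → ℝ≥0∞) (x : EuclideanSpace ℝ (Fin l))
    (ε : ℝ) (hε : 0 < ε) :
    ∫⁻ z, f (x - ε • z) = ENNReal.ofReal (ε ^ l)⁻¹ * ∫⁻ y, f y := by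
  have h1 : ∫⁻ z, f (x - ε • z) = ∫⁻ z, f (x - z) ∂(Measure.map (fun z => ε • z) volume) := by
    have he : MeasurableEmbedding (fun z : EuclideanSpace ℝ (Fin l) => ε • z) :=
      (Homeomorph.smulOfNeZero ε hε.ne').measurableEmbedding
    rw [he.lintegral_map]
  rw [h1, Measure.map_addHaar_smul _ hε.ne', lintegral_smul_measure, lintegral_sub_left_eq_self]
  simp [abs_of_pos hε]

theorem infDist_bound {l ν : ℕ} (μ : Measure (EuclideanSpace ℝ (Fin l))) [IsProbabilityMeasure μ]
    (C : ℝ≥0∞) (hCt : C ≠ ⊤) (hC : μ ≤ C • volume.restrict (ball 0 1))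
    (w : EuclideanSpace ℝ (Fin l) → EuclideanSpace ℝ (Fin ν)) (hw : Continuous w)
    (D : ℝ) (hD : ∀ x, ‖w x‖ ≤ D) (s p : ℝ) (hs : 0 ≤ s) (hp : 1 ≤ p) (ε : ℝ) (hε : 0 < ε)
    (N : Set (EuclideanSpace ℝ (Fin ν))) (hN : ∀ x, w x ∈ N)
    (x : EuclideanSpace ℝ (Fin l)) (hx : ‖x‖ + ε ≤ 1) :
    ENNReal.ofReal (infDist (moll μ ε w x) N) ^ p ≤ 
      C * (C * (ENNReal.ofReal ((2 * ε) ^ ((l:ℝ) + s * p)) * (ENNReal.ofReal (ε ^ l)⁻¹ *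
        (ENNReal.ofReal (ε ^ l)⁻¹ * gagliardoE s p (ball 0 1) w)))) := by
  set q : ℝ := (l:ℝ) + s * p with hq
  have hq0 : 0 ≤ q := by positivity
  set A : Set (EuclideanSpace ℝ (Fin l)) := ball 0 1 with hA
  have hmA : MeasurableSet A := measurableSet_ball
  let k : EuclideanSpace ℝ (Fin l) → EuclideanSpace ℝ (Fin l) → ℝ≥0∞ := fun y' y =>
    ENNReal.ofReal (‖w y - w y'‖ ^ p / ‖y - y'‖ ^ q)
  have hmem : ∀ z ∈ A, x - ε • z ∈ A := by
    intro z hz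
    rw [hA, mem_ball_zero_iff] at hz ⊢
    calc ‖x - ε • z‖ ≤ ‖x‖ + ‖ε • z‖ := norm_sub_le _ _
      _ = ‖x‖ + ε * ‖z‖ := by rw [norm_smul, Real.norm_of_nonneg hε.le]
      _ < 1 := by nlinarith
  have hpt : ∀ z ∈ A, ∀ z' ∈ A, ‖w (x - ε • z) - w (x - ε • z')‖ₑ ^ p ≤
      ENNReal.ofReal ((2 * ε) ^ q) * k (x - ε • z') (x - ε • z) := by
    intro z hz z' hz'
    rw [hA, mem_ball_zero_iff] at hz hz'
    rw [← ofReal_norm_rpow _ _ (by linarith), ← ENNReal.ofReal_mul (by positivity)]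
    apply ENNReal.ofReal_le_ofReal
    by_cases h0 : z = z'
    · subst h0; simp [Real.zero_rpow (by linarith : p ≠ 0)]
    · have hd : x - ε • z - (x - ε • z') = ε • (z' - z) := by rw [smul_sub]; abel
      have hn : 0 < ‖x - ε • z - (x - ε • z')‖ := by
        rw [hd, norm_smul, Real.norm_of_nonneg hε.le]
        have : 0 < ‖z' - z‖ := norm_pos_iff.2 (sub_ne_zero.2 (Ne.symm h0))
        positivity
      have hn2 : ‖x - ε • z - (x - ε • z')‖ ≤ 2 * ε := by
        rw [hd, norm_smul, Real.norm_of_nonneg hε.le]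
        have := norm_sub_le z' z
        nlinarith
      rw [mul_div_assoc', le_div_iff₀ (by positivity), mul_comm]
      gcongr
  have hcv : ∀ f : EuclideanSpace ℝ (Fin l) → ℝ≥0∞,
      ∫⁻ z in A, f (x - ε • z) ≤ ENNReal.ofReal (ε ^ l)⁻¹ * ∫⁻ y in A, f y := by
    intro f
    rw [← lintegral_indicator hmA f, ← lintegral_affine _ x ε hε, ← lintegral_indicator hmA]
    refine lintegral_mono fun z => ?_
    by_cases hz : z ∈ A
    · simp [hz, hmem z hz]
    · simp [hz]
  refine (infDist_moll_le μ w D hw hD p hp ε N hN x).trans ?_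
  calc _ ≤ ∫⁻ z', (∫⁻ z, ‖w (x - ε • z) - w (x - ε • z')‖ₑ ^ p ∂(C • volume.restrict A))
            ∂(C • volume.restrict A) :=
        lintegral_mono' hC fun z' => lintegral_mono' hC le_rfl
    _ = C * ∫⁻ z' in A, C * ∫⁻ z in A, ‖w (x - ε • z) - w (x - ε • z')‖ₑ ^ p := by
        simp only [lintegral_smul_measure, smul_eq_mul]
    _ ≤ C * ∫⁻ z' in A, C * (ENNReal.ofReal ((2 * ε) ^ q) * (ENNReal.ofReal (ε ^ l)⁻¹ *
          ∫⁻ y in A, k (x - ε • z') y)) := by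
        gcongr 1
        refine setLIntegral_mono' hmA fun z' hz' => ?_
        gcongr 1
        calc _ ≤ ∫⁻ z in A, ENNReal.ofReal ((2 * ε) ^ q) * k (x - ε • z') (x - ε • z) :=
              setLIntegral_mono' hmA fun z hz => hpt z hz z' hz'
          _ = ENNReal.ofReal ((2 * ε) ^ q) * ∫⁻ z in A, k (x - ε • z') (x - ε • z) :=
              lintegral_const_mul' _ _ ENNReal.ofReal_ne_top
          _ ≤ _ := by gcongr 1; exact hcv _
    _ ≤ _ := by
        gcongr 1
        rw [lintegral_const_mul' _ _ hCt, lintegral_const_mul' _ _ ENNReal.ofReal_ne_top,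
          lintegral_const_mul' _ _ ENNReal.ofReal_ne_top]
        gcongr 3
        exact hcv (fun y' => ∫⁻ y in A, k y' y)

theorem class_finiteness {l ν : ℕ} {N : Set (EuclideanSpace ℝ (Fin ν))} {b : EuclideanSpace ℝ (Fin ν)}
    (hb : b ∈ N) (hNcpt : IsCompact N) (hNsub : IsSmoothSubmanifold N) (p : ℝ)
    (hp : (l : ℝ) + 1 < p) (K : ℝ≥0∞) (hK : K ≠ ⊤)
    (u : ℕ → EuclideanSpace ℝ (Fin l) → EuclideanSpace ℝ (Fin ν))
    (hu : ∀ n, Adm N b (1/2) (u n)) (hu1 : ∀ n, Adm N b 1 (u n))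
    (hE : ∀ n, gagliardoE (1 - 1 / p) p (ball 0 1) (u n) ≤ K) :
    ∃ n m, n < m ∧ cls hb (u n) (hu1 n) = cls hb (u m) (hu1 m) := by
  have hl0 : (0:ℝ) ≤ l := by positivity
  have hp1 : 1 ≤ p := by linarith
  obtain ⟨δ, hδ, Pr, L, hPs, hPN, hPid, hPL⟩ := tubular N hNcpt ⟨b, hb⟩ hNsub
  obtain ⟨μ, hμp, hμ, ⟨C, hCt, hC⟩, hsm, hlip⟩ := exists_mollifier l ν
  obtain ⟨D, hD⟩ := hNcpt.isBounded.exists_norm_le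
  have hDw : ∀ n x, ‖u n x‖ ≤ D := fun n x => hD _ ((hu n).mem x)
  have hs : 0 ≤ 1 - 1 / p := by
    rw [sub_nonneg, div_le_one (by linarith)]; exact hp1
  have hq : (l:ℝ) + (1 - 1 / p) * p = l + p - 1 := by
    field_simp; ring
  -- choice of the scale
  obtain ⟨ε, hε, hε4, hsmall⟩ : ∃ ε : ℝ, 0 < ε ∧ ε ≤ 1/4 ∧ ∀ e, 0 < e → e ≤ ε →
      C * (C * (ENNReal.ofReal ((2 * e) ^ ((l:ℝ) + (1 - 1 / p) * p)) * (ENNReal.ofReal (e ^ l)⁻¹ *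
        (ENNReal.ofReal (e ^ l)⁻¹ * K)))) < ENNReal.ofReal (δ / 2) ^ p := by
    have ht : Tendsto (fun e : ℝ => C * (C * (ENNReal.ofReal (2 ^ (l + p - 1) * e ^ (p - 1 - l)) * K)))
        (𝓝[>] 0) (𝓝 0) := by
      have h1 : Tendsto (fun e : ℝ => (2:ℝ) ^ (l + p - 1) * e ^ (p - 1 - l)) (𝓝 0) (𝓝 0) := by
        have : Tendsto (fun e : ℝ => e ^ (p - 1 - l)) (𝓝 0) (𝓝 0) := by
          have := (Real.continuousAt_rpow_const (0:ℝ) (p - 1 - l) (Or.inr (by linarith))).tendsto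
          rwa [Real.zero_rpow (by linarith)] at this
        simpa using this.const_mul ((2:ℝ) ^ (l + p - 1))
      have h2 := ENNReal.tendsto_ofReal h1
      rw [ENNReal.ofReal_zero] at h2
      have h3 := ENNReal.Tendsto.mul_const h2 (b := K) (Or.inr hK)
      have h4 := ENNReal.Tendsto.const_mul h3 (a := C) (Or.inr hCt)
      have h5 := ENNReal.Tendsto.const_mul h4 (a := C) (Or.inr hCt)
      simp only [zero_mul, mul_zero] at h5
      exact h5.mono_left nhdsWithin_le_nhds
    have hpos : (0:ℝ≥0∞) < ENNReal.ofReal (δ / 2) ^ p :=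
      ENNReal.rpow_pos (by simpa using hδ) ENNReal.ofReal_ne_top
    have hev := ht.eventually (gt_mem_nhds hpos)
    obtain ⟨e0, he0, hsub⟩ := mem_nhdsGT_iff_exists_Ioc_subset.1 hev
    refine ⟨min e0 (1/4), lt_min he0 (by norm_num), min_le_right _ _, fun e he hee => ?_⟩
    have := hsub ⟨he, hee.trans (min_le_left _ _)⟩
    simp only [mem_setOf_eq] at this
    convert this using 3
    rw [← mul_assoc, ← mul_assoc, ← ENNReal.ofReal_mul (by positivity),
      ← ENNReal.ofReal_mul (by positivity)]
    congr 2
    rw [hq, Real.mul_rpow (by norm_num) he.le, mul_assoc, mul_assoc]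
    congr 1
    rw [← Real.rpow_natCast, ← Real.rpow_neg he.le, ← Real.rpow_add he, ← Real.rpow_add he]
    congr 1; ring
  have hnear : ∀ n e, 0 ≤ e → e ≤ ε → ∀ x, infDist (moll μ e (u n) x) N < δ / 2 := by
    intro n e he hee x
    rcases he.eq_or_lt with rfl | he
    · rw [moll_zero, infDist_zero_of_mem ((hu n).mem x)]; positivity
    by_cases hx : 1/2 + e ≤ ‖x‖
    · rw [moll_const μ (u n) b e (1/2) he.le (hu n).bdry hμ x hx, infDist_zero_of_mem hb]; positivity
    · have h1 := infDist_bound μ C hCt hC (u n) (hu n).cont D (hDw n) (1 - 1/p) p hs hp1 e he N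
        (hu n).mem x (by linarith)
      have h2 : ENNReal.ofReal (infDist (moll μ e (u n) x) N) ^ p < ENNReal.ofReal (δ / 2) ^ p := by
        refine (h1.trans ?_).trans_lt (hsmall e he hee)
        gcongr
        exact hE n
      have h3 := (ENNReal.rpow_lt_rpow_iff (by linarith : 0 < p)).1 h2
      exact (ENNReal.ofReal_lt_ofReal_iff (by positivity)).1 h3
  obtain ⟨Λ, hΛ, hlip⟩ := hlip ε hε D
  set v : ℕ → EuclideanSpace ℝ (Fin l) → EuclideanSpace ℝ (Fin ν) := fun n => moll μ ε (u n) with hv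
  have hvL : ∀ n x x', ‖v n x - v n x'‖ ≤ Λ * ‖x - x'‖ := fun n => hlip (u n) (hu n).cont (hDw n)
  have hvc : ∀ n, Continuous (v n) := fun n =>
    (moll_continuous μ (u n) D (hu n).cont (hDw n)).comp
      (by fun_prop : Continuous fun x : EuclideanSpace ℝ (Fin l) => (ε, x))
  have hvb : ∀ n x, 1 ≤ ‖x‖ → v n x = b := fun n x hx =>
    moll_const μ (u n) b ε (1/2) hε.le (hu n).bdry hμ x (by linarith)
  -- two mollified maps are uniformly close
  obtain ⟨n, m, hnm, hclose⟩ : ∃ n m, n < m ∧ ∀ x, ‖v n x - v m x‖ < δ / 2 := by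
    obtain ⟨t, -, ht⟩ := (isCompact_closedBall (0 : EuclideanSpace ℝ (Fin l)) 1).elim_nhds_subcover
      (fun y => ball y (δ / (16 * Λ))) (fun y _ => ball_mem_nhds _ (by positivity))
    let f : ℕ → (↥t → EuclideanSpace ℝ (Fin ν)) := fun n y => v n y
    have hfb : ∀ n, f n ∈ closedBall (0 : ↥t → EuclideanSpace ℝ (Fin ν)) (max D 0) := by
      intro n
      rw [mem_closedBall_zero_iff, pi_norm_le_iff_of_nonneg (le_max_right _ _)]
      intro y
      refine le_trans ?_ (le_max_left _ _)
      have : ‖∫ z, u n ((y : EuclideanSpace ℝ (Fin l)) - ε • z) ∂μ‖ ≤ D * μ.real univ :=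
        norm_integral_le_of_norm_le_const (Eventually.of_forall fun z => hDw n _)
      simpa [f, hv, moll] using this
    obtain ⟨a, -, φ, hφ, hlim⟩ := tendsto_subseq_of_bounded isBounded_closedBall hfb
    obtain ⟨n0, hn0⟩ := Metric.cauchySeq_iff'.1 hlim.cauchySeq (δ / 8) (by positivity)
    refine ⟨φ n0, φ (n0 + 1), hφ (Nat.lt_succ_self _), fun x => ?_⟩
    by_cases hx : ‖x‖ ≤ 1
    · obtain ⟨y, hyt, hy⟩ := mem_iUnion₂.1 (ht (mem_closedBall_zero_iff.2 hx))
      have h1 := hn0 (n0 + 1) (Nat.le_succ _)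
      have h2 := (dist_le_pi_dist (f (φ (n0+1))) (f (φ n0)) ⟨y, hyt⟩).trans_lt h1
      rw [dist_comm, dist_eq_norm] at h2
      rw [mem_ball, dist_eq_norm] at hy
      have h3 : Λ * ‖x - y‖ ≤ δ / 16 := by
        calc Λ * ‖x - y‖ ≤ Λ * (δ / (16 * Λ)) := by gcongr
          _ = δ / 16 := by field_simp
      have h4 := hvL (φ n0) x y
      have h5 := hvL (φ (n0+1)) x y
      have h6 : v (φ n0) x - v (φ (n0+1)) x = (v (φ n0) x - v (φ n0) y) +
        (v (φ n0) y - v (φ (n0+1)) y) - (v (φ (n0+1)) x - v (φ (n0+1)) y) := by abel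
      rw [h6]
      have h7 := norm_sub_le ((v (φ n0) x - v (φ n0) y) +
        (v (φ n0) y - v (φ (n0+1)) y)) (v (φ (n0+1)) x - v (φ (n0+1)) y)
      have h8 := norm_add_le (v (φ n0) x - v (φ n0) y) (v (φ n0) y - v (φ (n0+1)) y)
      have h9 : ‖v (φ n0) y - v (φ (n0+1)) y‖ < δ / 8 := h2
      linarith
    · rw [hvb _ x (by linarith), hvb _ x (by linarith)]; simpa using hδ
  refine ⟨n, m, hnm, ?_⟩
  have hne : N.Nonempty := ⟨b, hb⟩
  have hth : ∀ n e, 0 ≤ e → e ≤ ε → ∀ x, moll μ e (u n) x ∈ thickening δ N := by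
    intro n e he hee x
    rw [mem_thickening_iff_infDist_lt hne]
    linarith [hnear n e he hee x]
  obtain ⟨hA, hcA⟩ := cls_proj_moll hb δ Pr hPs.continuousOn hPN hPid μ hμ (u n) D (hDw n) (1/2) 1
    ε hε.le (by linarith) le_rfl (hu n) (hth n) (hu1 n)
  obtain ⟨hB, hcB⟩ := cls_proj_moll hb δ Pr hPs.continuousOn hPN hPid μ hμ (u m) D (hDw m) (1/2) 1
    ε hε.le (by linarith) le_rfl (hu m) (hth m) (hu1 m)
  rw [← hcA, ← hcB]
  refine cls_eq hb _ _ (fun q => Pr (v n q.2 + q.1 • (v m q.2 - v n q.2))) ?_ ?_ ?_ ?_ ?_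
  · refine hPs.continuousOn.comp (Continuous.continuousOn ?_) ?_
    · have := hvc n; have := hvc m; fun_prop
    · rintro ⟨s, x⟩ ⟨hs, -⟩
      rw [mem_thickening_iff_infDist_lt hne]
      have h1 := infDist_le_infDist_add_dist (s := N) (x := v n x + s • (v m x - v n x)) (y := v n x)
      have h2 : dist (v n x + s • (v m x - v n x)) (v n x) < δ / 2 := by
        rw [dist_eq_norm, add_sub_cancel_left, norm_smul, Real.norm_of_nonneg hs.1]
        refine (mul_le_of_le_one_left (norm_nonneg _) hs.2).trans_lt ?_
        rw [norm_sub_rev]; exact hclose x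
      have h3 := hnear n ε hε.le le_rfl x
      simp only
      linarith
  · intro s _ x; exact hPN _
  · intro s hs x hx
    simp only
    rw [hvb n x hx, hvb m x hx]; simp [hPid b hb]
  · intro x; simp [hv]
  · intro x; simp [hv]

theorem incr_le_const {l ν : ℕ} {N : Set (EuclideanSpace ℝ (Fin ν))} {b : EuclideanSpace ℝ (Fin ν)}
    (w : EuclideanSpace ℝ (Fin l) → EuclideanSpace ℝ (Fin ν)) (hw : Adm N b 1 w)
    (D : ℝ) (hD : ∀ x, ‖w x‖ ≤ D) (p : ℝ) (hp : 1 ≤ p) (h : EuclideanSpace ℝ (Fin l)) :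
    incr p w h ≤ 2 * (ENNReal.ofReal (2 * D) ^ p * volume (ball (0 : EuclideanSpace ℝ (Fin l)) 1)) := by
  set c := ENNReal.ofReal (2 * D) ^ p
  let f : EuclideanSpace ℝ (Fin l) → ℝ≥0∞ := (ball 0 1).indicator (fun _ => c)
  have hf : ∫⁻ x, f x = c * volume (ball (0 : EuclideanSpace ℝ (Fin l)) 1) := by
    rw [lintegral_indicator measurableSet_ball]; simp
  have hfm : Measurable f := measurable_const.indicator measurableSet_ball
  have h1 : ∀ x, ‖w (x + h) - w x‖ₑ ^ p ≤ f x + f (x + h) := by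
    intro x
    have hc : ‖w (x + h) - w x‖ₑ ^ p ≤ c := by
      refine ENNReal.rpow_le_rpow ?_ (by linarith)
      rw [← ofReal_norm_eq_enorm]
      apply ENNReal.ofReal_le_ofReal
      have := norm_sub_le (w (x + h)) (w x)
      linarith [hD x, hD (x + h)]
    by_cases h1 : x ∈ ball (0 : EuclideanSpace ℝ (Fin l)) 1
    · calc _ ≤ c := hc
        _ = f x := by simp only [f]; rw [indicator_of_mem h1]
        _ ≤ _ := le_self_add
    by_cases h2 : x + h ∈ ball (0 : EuclideanSpace ℝ (Fin l)) 1
    · calc _ ≤ c := hc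
        _ = f (x + h) := by simp only [f]; rw [indicator_of_mem h2]
        _ ≤ _ := le_add_self
    rw [mem_ball_zero_iff, not_lt] at h1 h2
    rw [hw.bdry _ h1, hw.bdry _ h2]
    simp [ENNReal.zero_rpow_of_pos (by linarith : 0 < p)]
  calc incr p w h ≤ ∫⁻ x, (f x + f (x + h)) := lintegral_mono h1
    _ = (∫⁻ x, f x) + ∫⁻ x, f (x + h) := lintegral_add_left hfm _
    _ = 2 * ∫⁻ x, f x := by rw [lintegral_add_right_eq_self f h, two_mul]
    _ = _ := by rw [hf]

theorem interp_const (l : ℕ) (hl : 1 ≤ l) (p : ℝ) (hp : 1 < p) (c : ℝ) (hc : 0 ≤ c) :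
    ∫⁻ k : EuclideanSpace ℝ (Fin l), ENNReal.ofReal (min (‖k‖ ^ p) c * (‖k‖ ^ ((l:ℝ) + p - 1))⁻¹) ≠ ⊤ := by
  have : Nonempty (Fin l) := ⟨⟨0, hl⟩⟩
  have : Nontrivial (EuclideanSpace ℝ (Fin l)) := inferInstance
  have hInteg : IntegrableOn (fun y : ℝ => y ^ (Module.finrank ℝ (EuclideanSpace ℝ (Fin l)) - 1) •
      (min (y ^ p) c * (y ^ ((l:ℝ) + p - 1))⁻¹)) (Ioi 0) := by
    have heq : EqOn (fun y : ℝ => y ^ (Module.finrank ℝ (EuclideanSpace ℝ (Fin l)) - 1) •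
      (min (y ^ p) c * (y ^ ((l:ℝ) + p - 1))⁻¹)) (fun y => min 1 (c * y ^ (-p))) (Ioi 0) := by
      intro y hy
      have hy : 0 < y := hy
      simp only [finrank_euclideanSpace, Fintype.card_fin, smul_eq_mul]
      have h1 : y ^ ((l:ℝ) + p - 1) = y ^ (l - 1) * y ^ p := by
        rw [← Real.rpow_natCast, ← Real.rpow_add hy]
        congr 1; push_cast [hl]; ring
      have h2 : 0 < y ^ (l - 1) := by positivity
      have h3 : 0 < y ^ p := by positivity
      rw [h1, Real.rpow_neg hy.le]
      have : min 1 (c * (y ^ p)⁻¹) = min (y ^ p) c * (y ^ p)⁻¹ := by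
        rw [min_mul_of_nonneg _ _ (by positivity), mul_inv_cancel₀ h3.ne']
      rw [this]; field_simp
    rw [integrableOn_congr_fun heq measurableSet_Ioi]
    rw [← Ioc_union_Ioi_eq_Ioi (zero_le_one' ℝ)]
    have hmeas : Measurable (fun y : ℝ => min 1 (c * y ^ (-p))) := by fun_prop
    refine IntegrableOn.union ?_ ?_
    · refine Measure.integrableOn_of_bounded (M := 1) (by simp) hmeas.aestronglyMeasurable ?_
      filter_upwards [ae_restrict_mem measurableSet_Ioc] with y hy
      have : 0 ≤ c * y ^ (-p) := mul_nonneg hc (Real.rpow_nonneg hy.1.le _)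
      rw [Real.norm_of_nonneg (le_min zero_le_one this)]
      exact min_le_left _ _
    · have h1 : IntegrableOn (fun y : ℝ => c * y ^ (-p)) (Ioi 1) :=
        (integrableOn_Ioi_rpow_of_lt (by linarith) one_pos).const_mul c
      refine Integrable.mono h1 hmeas.aestronglyMeasurable ?_
      filter_upwards [ae_restrict_mem measurableSet_Ioi] with y hy
      have hy0 : (0:ℝ) < y := one_pos.trans hy
      have : 0 ≤ c * y ^ (-p) := mul_nonneg hc (Real.rpow_nonneg hy0.le _)
      rw [Real.norm_of_nonneg (le_min zero_le_one this), Real.norm_of_nonneg this]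
      exact min_le_right _ _
  have := (integrable_fun_norm_addHaar (volume : Measure (EuclideanSpace ℝ (Fin l)))
    (f := fun y : ℝ => min (y ^ p) c * (y ^ ((l:ℝ) + p - 1))⁻¹)).2 hInteg
  exact this.lintegral_lt_top.ne

theorem interp {l ν : ℕ} (hl : 1 ≤ l) (p : ℝ) (hp : 1 < p) (c : ℝ) (hc : 0 ≤ c) :
    ∃ C : ℝ≥0∞, C ≠ ⊤ ∧ ∀ (w : EuclideanSpace ℝ (Fin l) → EuclideanSpace ℝ (Fin ν)), Continuous w →
      (∀ h, incr p w h ≤ ENNReal.ofReal c) → ∀ g : ℝ, 0 < g →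
      (∀ h, incr p w h ≤ ENNReal.ofReal (‖h‖ ^ p * g)) →
      gagliardoE (1 - 1 / p) p univ w ≤ C * ENNReal.ofReal g ^ ((p - 1) / p) := by
  refine ⟨_, interp_const l hl p hp c hc, ?_⟩
  intro w hw h1 g hg h2
  rw [gagliardoE_univ_eq _ p hp.le w hw]
  have hq : (l:ℝ) + (1 - 1 / p) * p = l + p - 1 := by
    field_simp; ring
  rw [hq]
  set t : ℝ := g ^ (-(1 / p)) with ht
  have ht0 : 0 < t := by positivity
  have htp : t ^ p * g = 1 := by
    rw [ht, ← Real.rpow_mul hg.le]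
    have : -(1 / p) * p = -1 := by field_simp
    rw [this, Real.rpow_neg_one, inv_mul_cancel₀ hg.ne']
  let f : EuclideanSpace ℝ (Fin l) → ℝ≥0∞ := fun h =>
    ENNReal.ofReal (min (‖h‖ ^ p * g) c * (‖h‖ ^ ((l:ℝ) + p - 1))⁻¹)
  have hle : ∫⁻ h, incr p w h * ENNReal.ofReal ((‖h‖ ^ ((l:ℝ) + p - 1))⁻¹) ≤ ∫⁻ h, f h := by
    refine lintegral_mono fun h => ?_
    simp only [f]
    rw [ENNReal.ofReal_mul (by positivity)]
    gcongr
    rw [ENNReal.ofReal_min]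
    exact le_min (h2 h) (h1 h)
  refine hle.trans (le_of_eq ?_)
  have hsc := lintegral_affine f 0 t ht0
  have hpt : ∀ k, f (0 - t • k) = ENNReal.ofReal ((t ^ ((l:ℝ) + p - 1))⁻¹) *
      ENNReal.ofReal (min (‖k‖ ^ p) c * (‖k‖ ^ ((l:ℝ) + p - 1))⁻¹) := by
    intro k
    simp only [f]
    rw [← ENNReal.ofReal_mul (by positivity)]
    congr 1
    rw [zero_sub, norm_neg, norm_smul, Real.norm_of_nonneg ht0.le,
      Real.mul_rpow ht0.le (norm_nonneg _), Real.mul_rpow ht0.le (norm_nonneg _), mul_inv]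
    have : t ^ p * ‖k‖ ^ p * g = ‖k‖ ^ p := by
      rw [mul_right_comm, htp, one_mul]
    rw [this]; ring
  simp only [hpt] at hsc
  rw [lintegral_const_mul' _ _ ENNReal.ofReal_ne_top] at hsc
  have htl : ENNReal.ofReal (t ^ l) * ENNReal.ofReal (t ^ l)⁻¹ = 1 := by
    rw [← ENNReal.ofReal_mul (by positivity), mul_inv_cancel₀ (by positivity), ENNReal.ofReal_one]
  have hfin : ∫⁻ h, f h = ENNReal.ofReal (t ^ l) * (ENNReal.ofReal (t ^ l)⁻¹ * ∫⁻ h, f h) := by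
    rw [← mul_assoc, htl, one_mul]
  rw [hfin, ← hsc, ← mul_assoc, mul_comm]
  congr 1
  rw [← ENNReal.ofReal_mul (by positivity), ENNReal.ofReal_rpow_of_pos hg]
  congr 1
  rw [← Real.rpow_natCast, ← Real.rpow_neg ht0.le, ← Real.rpow_add ht0, ht, ← Real.rpow_mul hg.le]
  congr 1
  field_simp; ring

theorem segment_le {E F : Type*} [NormedAddCommGroup E] [NormedSpace ℝ E] [NormedAddCommGroup F]
    [NormedSpace ℝ F] (w : E → F) (hw : Continuous w) (g : E → ℝ) (hg : Continuous g)
    (hloc : ∀ y r, g y < r → ∀ᶠ y' in 𝓝 y, ‖w y' - w y‖ ≤ r * ‖y' - y‖) (x h : E) :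
    ‖w (x + h) - w x‖ ≤ ∫ s in (0:ℝ)..1, ‖h‖ * g (x + s • h) := by
  have hgc : Continuous (fun s : ℝ => ‖h‖ * g (x + s • h)) := by fun_prop
  have key := image_le_of_liminf_slope_right_le_deriv_boundary (a := 0) (b := 1)
    (f := fun s : ℝ => ‖w (x + s • h) - w x‖) (B := fun t => ∫ s in (0:ℝ)..t, ‖h‖ * g (x + s • h))
    (B' := fun s => ‖h‖ * g (x + s • h)) (by fun_prop) (by simp) 
    (intervalIntegral.continuous_primitive (fun a b => hgc.intervalIntegrable a b) 0).continuousOn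
    (fun s _ => (intervalIntegral.integral_hasDerivAt_right (hgc.intervalIntegrable _ _)
      hgc.aestronglyMeasurable.stronglyMeasurableAtFilter hgc.continuousAt).hasDerivWithinAt) ?_
  · have := key (right_mem_Icc.2 zero_le_one)
    simpa using this
  · intro s _ r hr
    apply Eventually.frequently
    rcases eq_or_ne h 0 with rfl | hh
    · simp at hr
      simp [slope_def_field, hr]
    have hh : 0 < ‖h‖ := norm_pos_iff.2 hh
    obtain ⟨r1, hr1, hr2⟩ := exists_between ((lt_div_iff₀' hh).2 hr)
    have h1 := hloc _ _ hr1
    have hc : Tendsto (fun z : ℝ => x + z • h) (𝓝[>] s) (𝓝 (x + s • h)) := by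
      have : Continuous (fun z : ℝ => x + z • h) := by fun_prop
      exact this.continuousAt.tendsto.mono_left nhdsWithin_le_nhds
    filter_upwards [hc.eventually h1, self_mem_nhdsWithin] with z hz hzs
    have hzs : s < z := hzs
    rw [slope_def_field, div_lt_iff₀ (by linarith)]
    have e1 : x + z • h - (x + s • h) = (z - s) • h := by rw [sub_smul]; abel
    rw [e1, norm_smul, Real.norm_of_nonneg (by linarith)] at hz
    have e2 := norm_sub_norm_le (w (x + z • h) - w x) (w (x + s • h) - w x)
    rw [sub_sub_sub_cancel_right] at e2
    have e3 : r1 * ‖h‖ < r := (lt_div_iff₀ hh).1 hr2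
    nlinarith

theorem incr_le_grad {l ν : ℕ} (w : EuclideanSpace ℝ (Fin l) → EuclideanSpace ℝ (Fin ν))
    (hw : Continuous w) (g : EuclideanSpace ℝ (Fin l) → ℝ) (hg : Continuous g)
    (hloc : ∀ y r, g y < r → ∀ᶠ y' in 𝓝 y, ‖w y' - w y‖ ≤ r * ‖y' - y‖) (p : ℝ) (hp : 1 ≤ p)
    (h : EuclideanSpace ℝ (Fin l)) :
    incr p w h ≤ ENNReal.ofReal (‖h‖ ^ p) * ∫⁻ y, ‖g y‖ₑ ^ p := by
  have hprob : IsProbabilityMeasure (volume.restrict (Ioc (0:ℝ) 1)) := ⟨by simp⟩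
  have h1 : ∀ x, ‖w (x + h) - w x‖ₑ ^ p ≤
      ENNReal.ofReal (‖h‖ ^ p) * ∫⁻ s in Ioc (0:ℝ) 1, ‖g (x + s • h)‖ₑ ^ p := by
    intro x
    have hgc : Continuous (fun s : ℝ => g (x + s • h)) := by fun_prop
    have e1 := segment_le w hw g hg hloc x h
    rw [intervalIntegral.integral_const_mul, intervalIntegral.integral_of_le zero_le_one] at e1
    have e2 : ‖w (x + h) - w x‖ₑ ≤ ‖h‖ₑ * ∫⁻ s in Ioc (0:ℝ) 1, ‖g (x + s • h)‖ₑ := by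
      calc ‖w (x + h) - w x‖ₑ = ENNReal.ofReal ‖w (x + h) - w x‖ := (ofReal_norm_eq_enorm _).symm
        _ ≤ ENNReal.ofReal (‖h‖ * ∫ s in Ioc (0:ℝ) 1, g (x + s • h)) := ENNReal.ofReal_le_ofReal e1
        _ = ‖h‖ₑ * ENNReal.ofReal (∫ s in Ioc (0:ℝ) 1, g (x + s • h)) := by
            rw [ENNReal.ofReal_mul (norm_nonneg _), ofReal_norm_eq_enorm]
        _ ≤ _ := by
            gcongr
            refine le_trans ?_ (enorm_integral_le_lintegral_enorm _)
            exact Real.ofReal_le_enorm _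
    rw [ofReal_norm_rpow _ _ (by linarith)]
    calc _ ≤ (‖h‖ₑ * ∫⁻ s in Ioc (0:ℝ) 1, ‖g (x + s • h)‖ₑ) ^ p :=
          ENNReal.rpow_le_rpow e2 (by linarith)
      _ = ‖h‖ₑ ^ p * (∫⁻ s in Ioc (0:ℝ) 1, ‖g (x + s • h)‖ₑ) ^ p :=
          ENNReal.mul_rpow_of_nonneg _ _ (by linarith)
      _ ≤ _ := by
          gcongr
          exact jensen_lintegral _ p hp _ hgc.aestronglyMeasurable
  unfold incr
  calc _ ≤ ∫⁻ x, ENNReal.ofReal (‖h‖ ^ p) * ∫⁻ s in Ioc (0:ℝ) 1, ‖g (x + s • h)‖ₑ ^ p :=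
        lintegral_mono h1
    _ = ENNReal.ofReal (‖h‖ ^ p) * ∫⁻ x, ∫⁻ s in Ioc (0:ℝ) 1, ‖g (x + s • h)‖ₑ ^ p :=
        lintegral_const_mul' _ _ ENNReal.ofReal_ne_top
    _ = ENNReal.ofReal (‖h‖ ^ p) * ∫⁻ s in Ioc (0:ℝ) 1, ∫⁻ x, ‖g (x + s • h)‖ₑ ^ p := by
        congr 1
        rw [lintegral_lintegral_swap]
        have : Measurable (fun q : EuclideanSpace ℝ (Fin l) × ℝ => ‖g (q.1 + q.2 • h)‖ₑ ^ p) := by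
          have : Continuous (fun q : EuclideanSpace ℝ (Fin l) × ℝ => g (q.1 + q.2 • h)) := by fun_prop
          exact (this.measurable.enorm).pow_const p
        exact this.aemeasurable
    _ = _ := by
        congr 1
        have : ∀ s : ℝ, ∫⁻ x, ‖g (x + s • h)‖ₑ ^ p = ∫⁻ y, ‖g y‖ₑ ^ p := fun s =>
          lintegral_add_right_eq_self (fun y => ‖g y‖ₑ ^ p) (s • h)
        simp [this]

theorem exists_slice {l ν : ℕ} (p : ℝ) (U : EuclideanSpace ℝ (Fin l) × ℝ → EuclideanSpace ℝ (Fin ν))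
    (hM : ∫⁻ z in ball (0 : EuclideanSpace ℝ (Fin l)) 1 ×ˢ Ioo (0 : ℝ) 1,
          ENNReal.ofReal (‖fderiv ℝ U z‖ ^ p) ≠ ⊤) :
    ∃ a ∈ Ioo (1/2 : ℝ) (3/4),
      ∫⁻ x in {x : EuclideanSpace ℝ (Fin l) | 2 * ‖x‖ < a},
        ENNReal.ofReal (‖fderiv ℝ U ((2:ℝ) • x, a - 2 * ‖x‖)‖ ^ p) ≤
      4 * (∫⁻ z in ball (0 : EuclideanSpace ℝ (Fin l)) 1 ×ˢ Ioo (0 : ℝ) 1,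
          ENNReal.ofReal (‖fderiv ℝ U z‖ ^ p)) + 1 := by
  set M := ∫⁻ z in ball (0 : EuclideanSpace ℝ (Fin l)) 1 ×ˢ Ioo (0 : ℝ) 1,
          ENNReal.ofReal (‖fderiv ℝ U z‖ ^ p) with hMdef
  set S : Set (EuclideanSpace ℝ (Fin l) × ℝ) := ball 0 1 ×ˢ Ioo (0 : ℝ) 1 with hS
  have hSm : MeasurableSet S := measurableSet_ball.prod measurableSet_Ioo
  let f : EuclideanSpace ℝ (Fin l) × ℝ → ℝ≥0∞ := S.indicator fun z => ENNReal.ofReal (‖fderiv ℝ U z‖ ^ p)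
  have hf : Measurable f := by
    refine Measurable.indicator ?_ hSm
    exact ((measurable_fderiv ℝ U).norm.pow_const p).ennreal_ofReal
  have hfM : M = ∫⁻ x, ∫⁻ t, f (x, t) := by
    rw [hMdef, ← lintegral_indicator hSm, Measure.volume_eq_prod, lintegral_prod _ hf.aemeasurable]
  have hswap : ∫⁻ a : ℝ, ∫⁻ x, f ((2:ℝ) • x, a - 2 * ‖x‖) ≤ M := by
    rw [lintegral_lintegral_swap]
    · calc ∫⁻ x, ∫⁻ a : ℝ, f ((2:ℝ) • x, a - 2 * ‖x‖) = ∫⁻ x, ∫⁻ t, f ((2:ℝ) • x, t) := by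
            refine lintegral_congr fun x => ?_
            exact lintegral_sub_right_eq_self (fun t => f ((2:ℝ) • x, t)) (2 * ‖x‖)
        _ = ∫⁻ x, ∫⁻ t, f (-((0:EuclideanSpace ℝ (Fin l)) - (2:ℝ) • x), t) := by simp
        _ = ENNReal.ofReal (2 ^ l)⁻¹ * ∫⁻ y, ∫⁻ t, f (-y, t) :=
            lintegral_affine (fun y => ∫⁻ t, f (-y, t)) 0 2 two_pos
        _ = ENNReal.ofReal (2 ^ l)⁻¹ * M := by
            rw [hfM]
            congr 1
            exact lintegral_neg_eq_self (fun y => ∫⁻ t, f (y, t))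
        _ ≤ 1 * M := by
            gcongr
            rw [← ENNReal.ofReal_one]
            apply ENNReal.ofReal_le_ofReal
            exact inv_le_one_of_one_le₀ (one_le_pow₀ (by norm_num))
        _ = M := one_mul _
    · refine (hf.comp ?_).aemeasurable
      fun_prop
  by_contra! hcon
  have h1 : ∀ a ∈ Ioo (1/2 : ℝ) (3/4), 4 * M + 1 ≤ ∫⁻ x, f ((2:ℝ) • x, a - 2 * ‖x‖) := by
    intro a ha
    refine (hcon a ha).le.trans ?_
    rw [← lintegral_indicator (measurableSet_lt (by fun_prop) measurable_const)]
    refine lintegral_mono fun x => ?_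
    by_cases hx : 2 * ‖x‖ < a
    · have : ((2:ℝ) • x, a - 2 * ‖x‖) ∈ S := by
        refine ⟨?_, ?_, ?_⟩
        · rw [mem_ball_zero_iff, norm_smul]; norm_num; linarith [ha.2]
        · simp only; linarith
        · simp only; linarith [ha.2, norm_nonneg x]
      rw [indicator_of_mem (by exact hx)]
      simp only [f]
      rw [indicator_of_mem this]
    · rw [indicator_of_notMem (by exact hx)]; exact zero_le
  have h2 : (4 * M + 1) * ENNReal.ofReal (1/4) ≤ M := by
    calc (4 * M + 1) * ENNReal.ofReal (1/4) = ∫⁻ a in Ioo (1/2 : ℝ) (3/4), (4 * M + 1) := by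
          rw [setLIntegral_const, Real.volume_Ioo]; norm_num
      _ ≤ ∫⁻ a in Ioo (1/2 : ℝ) (3/4), ∫⁻ x, f ((2:ℝ) • x, a - 2 * ‖x‖) :=
          setLIntegral_mono' measurableSet_Ioo h1
      _ ≤ _ := (setLIntegral_le_lintegral _ _).trans hswap
  have h3 : (4 * M.toReal + 1) * (1/4) ≤ M.toReal := by
    have := ENNReal.toReal_mono hM h2
    rw [ENNReal.toReal_mul, ENNReal.toReal_add (by finiteness) (by finiteness), ENNReal.toReal_mul,
      ENNReal.toReal_ofReal (by norm_num)] at this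
    simpa using this
  linarith

theorem annulus_small {l : ℕ} (hl : 1 ≤ l) (a : ℝ) (ha : 0 < a) (κ : ℝ≥0∞) (hκ : 0 < κ) :
    ∃ η : ℝ, 0 < η ∧ volume {x : EuclideanSpace ℝ (Fin l) | a ≤ 2 * ‖x‖ ∧ 2 * ‖x‖ ≤ a + η} < κ := by
  have : Nonempty (Fin l) := ⟨⟨0, hl⟩⟩
  have h0 : volume (sphere (0 : EuclideanSpace ℝ (Fin l)) (a/2)) = 0 := Measure.addHaar_sphere _ _ _
  have ht := tendsto_measure_cthickening_of_isClosed (μ := volume)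
    (s := sphere (0 : EuclideanSpace ℝ (Fin l)) (a/2))
    ⟨1, one_pos, by
      refine ne_top_of_le_ne_top ?_ (measure_mono ((cthickening_subset_of_subset 1
        (sphere_subset_closedBall))))
      rw [cthickening_closedBall (by norm_num) (by positivity)]
      exact measure_closedBall_lt_top.ne⟩ isClosed_sphere
  rw [h0] at ht
  have h1 := (ht.mono_left (nhdsWithin_le_nhds (s := Ioi 0))).eventually (gt_mem_nhds hκ)
  obtain ⟨η, hη, hηp⟩ := (h1.and self_mem_nhdsWithin).exists
  have hηp : 0 < η := hηp
  refine ⟨η, hηp, (measure_mono ?_).trans_lt hη⟩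
  rintro x ⟨hx1, hx2⟩
  have hx0 : 0 < ‖x‖ := by linarith
  refine mem_cthickening_of_dist_le x ((a / (2 * ‖x‖)) • x) _ _ ?_ ?_
  · rw [mem_sphere_zero_iff_norm, norm_smul, Real.norm_of_nonneg (by positivity)]
    field_simp
  · have : x - (a / (2 * ‖x‖)) • x = (1 - a / (2 * ‖x‖)) • x := by rw [sub_smul, one_smul]
    rw [dist_eq_norm, this, norm_smul, Real.norm_of_nonneg]
    · have : (1 - a / (2 * ‖x‖)) * ‖x‖ = ‖x‖ - a / 2 := by field_simp
      rw [this]; linarith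
    · rw [sub_nonneg, div_le_one (by positivity)]; exact hx1

/-- Radial retraction onto the closed unit ball. -/
def radRet {l : ℕ} (x : EuclideanSpace ℝ (Fin l)) : EuclideanSpace ℝ (Fin l) := (max 1 ‖x‖)⁻¹ • x

theorem continuous_radRet {l : ℕ} : Continuous (radRet (l := l)) := by
  unfold radRet
  have h : Continuous (fun x : EuclideanSpace ℝ (Fin l) => max 1 ‖x‖) := by fun_prop
  refine Continuous.smul (h.inv₀ fun x => ?_) continuous_id
  exact (lt_of_lt_of_le one_pos (le_max_left _ _)).ne'

theorem radRet_eq {l : ℕ} {x : EuclideanSpace ℝ (Fin l)} (hx : ‖x‖ ≤ 1) : radRet x = x := by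
  simp [radRet, max_eq_left hx]

theorem norm_radRet {l : ℕ} (x : EuclideanSpace ℝ (Fin l)) : ‖radRet x‖ = min 1 ‖x‖ := by
  rcases le_total ‖x‖ 1 with h | h
  · rw [radRet_eq h, min_eq_right h]
  · have : 0 < ‖x‖ := by linarith
    rw [radRet, max_eq_right h, norm_smul, min_eq_left h, norm_inv, norm_norm,
      inv_mul_cancel₀ this.ne']

theorem slice_map {l ν : ℕ} {N : Set (EuclideanSpace ℝ (Fin ν))} {b : EuclideanSpace ℝ (Fin ν)}
    (hb : b ∈ N) (u : EuclideanSpace ℝ (Fin l) → EuclideanSpace ℝ (Fin ν)) (hu : Adm N b (1/2) u)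
    (hu1 : Adm N b 1 u)
    (U : EuclideanSpace ℝ (Fin l) × ℝ → EuclideanSpace ℝ (Fin ν))
    (hU : ContinuousOn U (closedBall 0 1 ×ˢ Icc (0 : ℝ) 1))
    (hUN : MapsTo U (closedBall 0 1 ×ˢ Icc (0 : ℝ) 1) N)
    (hU0 : ∀ x ∈ closedBall (0 : EuclideanSpace ℝ (Fin l)) 1, U (x, 0) = u x)
    (a : ℝ) (ha : a ∈ Ioo (1/2 : ℝ) (3/4)) :
    (∀ x, a ≤ 2 * ‖x‖ → U (radRet ((2:ℝ) • x), max 0 (a - 2 * ‖x‖)) = b) ∧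
    ∃ h : Adm N b (3/8) (fun x => U (radRet ((2:ℝ) • x), max 0 (a - 2 * ‖x‖))),
      cls hb _ (h.mono (by norm_num)) = cls hb u hu1 := by
  have hmem : ∀ (x : EuclideanSpace ℝ (Fin l)) (t : ℝ), 0 ≤ t → t ≤ 1 →
      (radRet x, t) ∈ closedBall (0 : EuclideanSpace ℝ (Fin l)) 1 ×ˢ Icc (0 : ℝ) 1 := by
    intro x t h0 h1
    refine ⟨?_, h0, h1⟩
    rw [mem_closedBall_zero_iff, norm_radRet]; exact min_le_left _ _
  have hub : ∀ x : EuclideanSpace ℝ (Fin l), 1/2 ≤ ‖x‖ → U (radRet x, 0) = b := by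
    intro x hx
    rw [hU0 _ (hmem x 0 le_rfl zero_le_one).1]
    refine hu.bdry _ ?_
    rw [norm_radRet]; exact le_min (by norm_num) hx
  have h1 : ∀ x, a ≤ 2 * ‖x‖ → U (radRet ((2:ℝ) • x), max 0 (a - 2 * ‖x‖)) = b := by
    intro x hx
    rw [max_eq_left (by linarith)]
    apply hub
    rw [norm_smul]; norm_num; linarith [ha.1]
  have hA : Adm N b (3/8) (fun x => U (radRet ((2:ℝ) • x), max 0 (a - 2 * ‖x‖))) := by
    refine ⟨?_, ?_, fun x hx => h1 x (by linarith [ha.2])⟩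
    · rw [← continuousOn_univ]
      refine hU.comp (Continuous.continuousOn ?_) ?_
      · have := continuous_radRet (l := l)
        fun_prop
      · intro x _
        exact hmem _ _ (le_max_left _ _) (max_le zero_le_one (by linarith [ha.2, norm_nonneg x]))
    · intro x
      exact hUN (hmem _ _ (le_max_left _ _) (max_le zero_le_one (by linarith [ha.2, norm_nonneg x])))
  refine ⟨h1, hA, ?_⟩
  symm
  have hst : ∀ s ∈ Icc (0:ℝ) 1, ∀ x : EuclideanSpace ℝ (Fin l), 0 ≤ s * max 0 (a - (1 + s) * ‖x‖) ∧
      s * max 0 (a - (1 + s) * ‖x‖) ≤ 1 := by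
    intro s hs x
    have h1 := norm_nonneg x
    refine ⟨mul_nonneg hs.1 (le_max_left _ _), ?_⟩
    refine mul_le_one₀ hs.2 (le_max_left _ _) (max_le zero_le_one ?_)
    nlinarith [ha.2, hs.1]
  refine cls_eq hb hu1 (hA.mono (by norm_num))
    (fun q => U (radRet ((1 + q.1) • q.2), q.1 * max 0 (a - (1 + q.1) * ‖q.2‖))) ?_ ?_ ?_ ?_ ?_
  · refine hU.comp (Continuous.continuousOn ?_) ?_
    · have := continuous_radRet (l := l)
      fun_prop
    · rintro ⟨s, x⟩ ⟨hs, -⟩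
      exact hmem _ _ (hst s hs x).1 (hst s hs x).2
  · intro s hs x
    exact hUN (hmem _ _ (hst s hs x).1 (hst s hs x).2)
  · intro s hs x hx
    have hs0 := hs.1
    have h3 : 1 ≤ (1 + s) * ‖x‖ := by nlinarith
    simp only
    rw [max_eq_left (by linarith [ha.2]), mul_zero]
    apply hub
    rw [norm_smul, Real.norm_of_nonneg (by linarith)]
    linarith
  · intro x
    simp only [add_zero, one_smul, zero_mul]
    by_cases hx : ‖x‖ ≤ 1
    · rw [radRet_eq hx, hU0 x (mem_closedBall_zero_iff.2 hx)]
    · rw [hub x (by linarith), hu.bdry x (by linarith)]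
  · intro x
    simp only [one_mul]
    norm_num

theorem slice_grad {l ν : ℕ} (hl : 1 ≤ l) {b : EuclideanSpace ℝ (Fin ν)}
    (p : ℝ) (hp : 1 ≤ p)
    (U : EuclideanSpace ℝ (Fin l) × ℝ → EuclideanSpace ℝ (Fin ν))
    (hU : C1OnNhd U (closedBall 0 1 ×ˢ Icc (0 : ℝ) 1))
    (a : ℝ) (ha : a ∈ Ioo (1/2 : ℝ) (3/4))
    (hbd : ∀ x, a ≤ 2 * ‖x‖ → U (radRet ((2:ℝ) • x), max 0 (a - 2 * ‖x‖)) = b) :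
    ∃ g : EuclideanSpace ℝ (Fin l) → ℝ, Continuous g ∧
      (∀ y r, g y < r → ∀ᶠ y' in 𝓝 y,
        ‖U (radRet ((2:ℝ) • y'), max 0 (a - 2 * ‖y'‖)) - U (radRet ((2:ℝ) • y), max 0 (a - 2 * ‖y‖))‖
          ≤ r * ‖y' - y‖) ∧
      ∫⁻ y, ‖g y‖ₑ ^ p ≤ ENNReal.ofReal (2 ^ p) * (∫⁻ x in {x : EuclideanSpace ℝ (Fin l) | 2 * ‖x‖ < a},
        ENNReal.ofReal (‖fderiv ℝ U ((2:ℝ) • x, a - 2 * ‖x‖)‖ ^ p)) + 1 := by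
  obtain ⟨V, hVo, hVs, hUV⟩ := hU
  have hmem : ∀ (x : EuclideanSpace ℝ (Fin l)),
      (radRet ((2:ℝ) • x), max 0 (a - 2 * ‖x‖)) ∈ closedBall (0 : EuclideanSpace ℝ (Fin l)) 1 ×ˢ Icc (0 : ℝ) 1 := by
    intro x
    refine ⟨?_, le_max_left _ _, max_le zero_le_one (by linarith [ha.2, norm_nonneg x])⟩
    rw [mem_closedBall_zero_iff, norm_radRet]; exact min_le_left _ _
  let T : EuclideanSpace ℝ (Fin l) → EuclideanSpace ℝ (Fin l) × ℝ :=
    fun x => (radRet ((2:ℝ) • x), max 0 (a - 2 * ‖x‖))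
  have hTc : Continuous T := by
    have := continuous_radRet (l := l)
    fun_prop
  have hdc : ContinuousOn (fderiv ℝ U) V := hUV.continuousOn_fderiv_of_isOpen hVo (by norm_num)
  let d : EuclideanSpace ℝ (Fin l) → ℝ := fun x => ‖fderiv ℝ U (T x)‖
  have hd : Continuous d := by
    refine Continuous.norm ?_
    rw [← continuousOn_univ]
    exact hdc.comp hTc.continuousOn fun x _ => hVs (hmem x)
  -- sup of the derivative
  obtain ⟨S, hS⟩ : ∃ S : ℝ, ∀ x, d x ≤ S := by
    have hK : IsCompact (closedBall (0 : EuclideanSpace ℝ (Fin l)) 1 ×ˢ Icc (0 : ℝ) 1) :=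
      (isCompact_closedBall _ _).prod isCompact_Icc
    obtain ⟨S, hS⟩ := hK.exists_bound_of_continuousOn (hdc.mono hVs)
    exact ⟨S, fun x => hS _ (hmem x)⟩
  have hS0 : 0 ≤ S := (norm_nonneg _).trans (hS 0)
  have ha0 : 0 < a := by linarith [ha.1]
  set c : ℝ≥0∞ := ENNReal.ofReal (2 * S + 1) ^ p with hc
  have hct : c ≠ ⊤ := ENNReal.rpow_ne_top_of_nonneg (by linarith) ENNReal.ofReal_ne_top
  have hc0 : c ≠ 0 := (ENNReal.rpow_pos (by simp; linarith) ENNReal.ofReal_ne_top).ne'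
  obtain ⟨η, hη, hvol⟩ := annulus_small hl a ha0 c⁻¹ (ENNReal.inv_pos.2 hct)
  let κ : EuclideanSpace ℝ (Fin l) → ℝ := fun x => max 0 (1 - max 0 (2 * ‖x‖ - a) / η)
  have hκ : Continuous κ := by fun_prop
  have hκ0 : ∀ x, 0 ≤ κ x := fun x => le_max_left _ _
  have hκ1 : ∀ x, κ x ≤ 1 := fun x => max_le zero_le_one (by
    have : 0 ≤ max 0 (2 * ‖x‖ - a) / η := div_nonneg (le_max_left _ _) hη.le
    linarith)
  have hκin : ∀ x, 2 * ‖x‖ ≤ a → κ x = 1 := by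
    intro x hx
    simp only [κ]; rw [max_eq_left (by linarith : 2 * ‖x‖ - a ≤ 0)]; simp
  have hκout : ∀ x, a + η < 2 * ‖x‖ → κ x = 0 := by
    intro x hx
    simp only [κ]
    rw [max_eq_left]
    have : 1 ≤ max 0 (2 * ‖x‖ - a) / η := by
      rw [one_le_div hη]; exact le_trans (by linarith) (le_max_right _ _)
    linarith
  have hd0 : ∀ x, 0 ≤ d x := fun x => norm_nonneg _
  refine ⟨fun x => 2 * d x * κ x, by fun_prop, ?_, ?_⟩
  · intro y r hr
    by_cases hy : 2 * ‖y‖ ≤ a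
    · simp only [hκin y hy, mul_one] at hr
      have hr0 : 0 < r := lt_of_le_of_lt (by linarith [hd0 y]) hr
      have hst : HasStrictFDerivAt U (fderiv ℝ U (T y)) (T y) :=
        (hUV.contDiffAt (hVo.mem_nhds (hVs (hmem y)))).hasStrictFDerivAt (by norm_num)
      obtain ⟨s, hs, hsl⟩ := hst.exists_lipschitzOnWith_of_nnnorm_lt (Real.toNNReal (r / 2)) (by
        rw [← NNReal.coe_lt_coe]
        rw [coe_nnnorm, Real.coe_toNNReal _ (by positivity)]
        change d y < r / 2
        linarith)
      have h1 : ∀ᶠ y' in 𝓝 y, 2 * ‖y'‖ < 1 :=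
        (by fun_prop : Continuous fun y' : EuclideanSpace ℝ (Fin l) => 2 * ‖y'‖).continuousAt.eventually_lt
          continuousAt_const (by linarith [ha.2])
      filter_upwards [h1, hTc.continuousAt.eventually_mem hs] with y' hy' hTy'
      have h2 := hsl.dist_le_mul _ hTy' _ (mem_of_mem_nhds hs)
      rw [dist_eq_norm, dist_eq_norm, Real.coe_toNNReal _ (by positivity)] at h2
      refine h2.trans ?_
      have e2 : ∀ z : EuclideanSpace ℝ (Fin l), ‖(2:ℝ) • z‖ = 2 * ‖z‖ := fun z => by
        rw [norm_smul]; norm_num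
      have h3 : ‖T y' - T y‖ ≤ 2 * ‖y' - y‖ := by
        simp only [T]
        rw [radRet_eq (by rw [e2]; linarith), radRet_eq (by rw [e2]; linarith [ha.2]), Prod.mk_sub_mk,
          Prod.norm_mk, ← smul_sub, e2]
        refine max_le le_rfl ?_
        rw [Real.norm_eq_abs]
        have h4 := abs_max_sub_max_le_abs (a - 2 * ‖y'‖) (a - 2 * ‖y‖) 0
        rw [max_comm 0, max_comm 0]
        refine h4.trans ?_
        have h5 := abs_norm_sub_norm_le y' y
        have : a - 2 * ‖y'‖ - (a - 2 * ‖y‖) = (-2) * (‖y'‖ - ‖y‖) := by ring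
        rw [this, abs_mul]; norm_num; exact h5
      calc _ ≤ (r / 2) * (2 * ‖y' - y‖) := by
            gcongr
        _ = _ := by ring
    · have hr0 : 0 < r := lt_of_le_of_lt (by have := hd0 y; have := hκ0 y; positivity) hr
      have h1 : ∀ᶠ y' in 𝓝 y, a < 2 * ‖y'‖ :=
        continuousAt_const.eventually_lt
        (by fun_prop : Continuous fun y' : EuclideanSpace ℝ (Fin l) => 2 * ‖y'‖).continuousAt
           (by linarith)
      filter_upwards [h1] with y' hy'
      rw [hbd y' hy'.le, hbd y (by linarith), sub_self, norm_zero]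
      positivity
  · set A1 : Set (EuclideanSpace ℝ (Fin l)) := {x | 2 * ‖x‖ < a} with hA1
    set A2 : Set (EuclideanSpace ℝ (Fin l)) := {x | a ≤ 2 * ‖x‖ ∧ 2 * ‖x‖ ≤ a + η} with hA2
    have hA1m : MeasurableSet A1 := measurableSet_lt (by fun_prop) measurable_const
    have hnm : Measurable (fun x : EuclideanSpace ℝ (Fin l) => 2 * ‖x‖) := by fun_prop
    have hA2m : MeasurableSet A2 := by
      have h := (measurableSet_le (measurable_const (a := a)) hnm).inter
        (measurableSet_le hnm (measurable_const (a := a + η)))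
      exact h
    have hpt : ∀ y, ‖2 * d y * κ y‖ₑ ^ p ≤ A1.indicator (fun x => ENNReal.ofReal (2 ^ p) *
        ENNReal.ofReal (‖fderiv ℝ U ((2:ℝ) • x, a - 2 * ‖x‖)‖ ^ p)) y + A2.indicator (fun _ => c) y := by
      intro y
      have hpos : 0 ≤ 2 * d y * κ y := by have := hd0 y; have := hκ0 y; positivity
      by_cases h1 : y ∈ A1
      · rw [indicator_of_mem h1]
        refine le_trans (le_of_eq ?_) le_self_add
        have hy : 2 * ‖y‖ < a := h1
        rw [hκin y hy.le, mul_one, ← ofReal_norm_rpow _ _ (by linarith), ← ENNReal.ofReal_mul (by positivity)]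
        congr 1
        rw [Real.norm_of_nonneg (by linarith [hd0 y]), Real.mul_rpow (by norm_num) (hd0 y)]
        simp only [d, T]
        rw [radRet_eq (by rw [norm_smul]; norm_num; linarith [ha.2]), max_eq_right (by linarith)]
      · have h1' : a ≤ 2 * ‖y‖ := not_lt.1 h1
        by_cases h2 : y ∈ A2
        · rw [indicator_of_mem h2]
          refine le_trans ?_ le_add_self
          refine ENNReal.rpow_le_rpow ?_ (by linarith)
          rw [← ofReal_norm]
          apply ENNReal.ofReal_le_ofReal
          rw [Real.norm_of_nonneg hpos]
          nlinarith [hS y, hκ1 y, hκ0 y, hd0 y]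
        · have : a + η < 2 * ‖y‖ := by
            by_contra hcon
            exact h2 ⟨h1', not_lt.1 hcon⟩
          rw [hκout y this]
          simp [ENNReal.zero_rpow_of_pos (by linarith : 0 < p)]
    calc _ ≤ ∫⁻ y, (A1.indicator (fun x => ENNReal.ofReal (2 ^ p) *
        ENNReal.ofReal (‖fderiv ℝ U ((2:ℝ) • x, a - 2 * ‖x‖)‖ ^ p)) y + A2.indicator (fun _ => c) y) :=
          lintegral_mono hpt
      _ = _ := lintegral_add_right _ (measurable_const.indicator hA2m)
      _ ≤ _ := by
          rw [lintegral_indicator hA1m, lintegral_indicator hA2m,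
            lintegral_const_mul' _ _ ENNReal.ofReal_ne_top, setLIntegral_const]
          gcongr
          calc c * volume A2 ≤ c * c⁻¹ := by gcongr
            _ = 1 := ENNReal.mul_inv_cancel hc0 hct

theorem slicing {l ν : ℕ} {N : Set (EuclideanSpace ℝ (Fin ν))} {b : EuclideanSpace ℝ (Fin ν)}
    (hb : b ∈ N) (hNcpt : IsCompact N) (hl : 1 ≤ l) (p : ℝ) (hp : 1 < p) :
    ∃ C : ℝ≥0∞, C ≠ ⊤ ∧ ∀ (u : EuclideanSpace ℝ (Fin l) → EuclideanSpace ℝ (Fin ν)),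
      Adm N b (1/2) u → ∀ (hu1 : Adm N b 1 u)
      (U : EuclideanSpace ℝ (Fin l) × ℝ → EuclideanSpace ℝ (Fin ν)),
      C1OnNhd U (closedBall 0 1 ×ˢ Icc (0 : ℝ) 1) →
      MapsTo U (closedBall 0 1 ×ˢ Icc (0 : ℝ) 1) N →
      (∀ x ∈ closedBall (0 : EuclideanSpace ℝ (Fin l)) 1, U (x, 0) = u x) →
      ∫⁻ z in ball (0 : EuclideanSpace ℝ (Fin l)) 1 ×ˢ Ioo (0 : ℝ) 1,
          ENNReal.ofReal (‖fderiv ℝ U z‖ ^ p) ≠ ⊤ →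
      ∃ w, ∃ h : Adm N b (3/8) w, cls hb w (h.mono (by norm_num)) = cls hb u hu1 ∧
        gagliardoE (1 - 1 / p) p univ w ^ (p / (p - 1)) ≤
          C * ((∫⁻ z in ball (0 : EuclideanSpace ℝ (Fin l)) 1 ×ˢ Ioo (0 : ℝ) 1,
            ENNReal.ofReal (‖fderiv ℝ U z‖ ^ p)) + 1) := by
  obtain ⟨D, hD⟩ := hNcpt.isBounded.exists_norm_le
  set c₀ : ℝ≥0∞ := 2 * (ENNReal.ofReal (2 * D) ^ p * volume (ball (0 : EuclideanSpace ℝ (Fin l)) 1)) with hc₀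
  have hc₀t : c₀ ≠ ⊤ := by
    refine ENNReal.mul_ne_top (by norm_num) (ENNReal.mul_ne_top ?_ measure_ball_lt_top.ne)
    exact ENNReal.rpow_ne_top_of_nonneg (by linarith) ENNReal.ofReal_ne_top
  obtain ⟨C₁, hC₁, hInteg⟩ := interp (l := l) (ν := ν) hl p hp c₀.toReal ENNReal.toReal_nonneg
  have hq : 0 < p / (p - 1) := div_pos (by linarith) (by linarith)
  set k : ℝ≥0∞ := ENNReal.ofReal (2 ^ p) with hk
  refine ⟨C₁ ^ (p / (p - 1)) * (4 * k + 1), ?_, ?_⟩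
  · refine ENNReal.mul_ne_top (ENNReal.rpow_ne_top_of_nonneg hq.le hC₁) ?_
    finiteness
  intro u hu hu1 U hU hUN hU0 hM
  set M := ∫⁻ z in ball (0 : EuclideanSpace ℝ (Fin l)) 1 ×ˢ Ioo (0 : ℝ) 1,
            ENNReal.ofReal (‖fderiv ℝ U z‖ ^ p) with hMdef
  obtain ⟨a, ha, hsl⟩ := exists_slice p U hM
  have hUc : ContinuousOn U (closedBall 0 1 ×ˢ Icc (0 : ℝ) 1) := by
    obtain ⟨V, _, hVs, hUV⟩ := hU
    exact hUV.continuousOn.mono hVs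
  obtain ⟨hbd, hA, hcls⟩ := slice_map hb u hu hu1 U hUc hUN hU0 a ha
  refine ⟨_, hA, hcls, ?_⟩
  obtain ⟨g, hg, hloc, hgi⟩ := slice_grad hl p hp.le U hU a ha hbd
  set G : ℝ≥0∞ := k * (4 * M + 1) + 1 with hG
  have hGt : G ≠ ⊤ := by
    have : k ≠ ⊤ := ENNReal.ofReal_ne_top
    finiteness
  have hgG : ∫⁻ y, ‖g y‖ₑ ^ p ≤ G := by
    refine hgi.trans ?_
    rw [hG]
    gcongr
  have hG0 : 0 < G.toReal := ENNReal.toReal_pos (by rw [hG]; simp) hGt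
  have h1 := hInteg _ hA.cont (fun h => by
    rw [ENNReal.ofReal_toReal hc₀t]
    exact incr_le_const _ (hA.mono (by norm_num)) D (fun x => hD _ (hA.mem x)) p hp.le h) G.toReal hG0
    (fun h => by
      rw [ENNReal.ofReal_mul (by positivity), ENNReal.ofReal_toReal hGt]
      refine (incr_le_grad _ hA.cont g hg hloc p hp.le h).trans ?_
      gcongr)
  rw [ENNReal.ofReal_toReal hGt] at h1
  calc _ ≤ (C₁ * G ^ ((p - 1) / p)) ^ (p / (p - 1)) := ENNReal.rpow_le_rpow h1 hq.le
    _ = C₁ ^ (p / (p - 1)) * G := by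
        rw [ENNReal.mul_rpow_of_nonneg _ _ hq.le, ← ENNReal.rpow_mul]
        have : (p - 1) / p * (p / (p - 1)) = 1 := by
          have : p - 1 ≠ 0 := by linarith
          have : p ≠ 0 := by linarith
          field_simp
        rw [this, ENNReal.rpow_one]
    _ ≤ C₁ ^ (p / (p - 1)) * ((4 * k + 1) * (M + 1)) := by
        gcongr
        rw [hG]
        calc k * (4 * M + 1) + 1 ≤ k * (4 * M + 1) + 1 + (3 * k + M) := le_self_add
          _ = (4 * k + 1) * (M + 1) := by ring
    _ = _ := by rw [mul_assoc]

theorem best_rep {l ν : ℕ} {N : Set (EuclideanSpace ℝ (Fin ν))} {b : EuclideanSpace ℝ (Fin ν)}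
    (hb : b ∈ N) (hNcpt : IsCompact N) (hNsub : IsSmoothSubmanifold N) (hl : 1 ≤ l)
    (p : ℝ) (hp : 1 < p) :
    ∃ C : ℝ≥0∞, C ≠ ⊤ ∧ 1 ≤ C ∧ ∀ α : HomotopyGroup (Fin l) ↥N ⟨b, hb⟩,
      ∃ u : EuclideanSpace ℝ (Fin l) → EuclideanSpace ℝ (Fin ν), ∃ h : Adm N b (1/2) u,
        ContDiff ℝ (⊤ : ℕ∞) u ∧ cls hb u (h.mono (by norm_num)) = α ∧
      ∀ U : EuclideanSpace ℝ (Fin l) × ℝ → EuclideanSpace ℝ (Fin ν),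
        C1OnNhd U (closedBall 0 1 ×ˢ Icc (0 : ℝ) 1) →
        MapsTo U (closedBall 0 1 ×ˢ Icc (0 : ℝ) 1) N →
        (∀ x ∈ closedBall (0 : EuclideanSpace ℝ (Fin l)) 1, U (x, 0) = u x) →
        gagliardoE (1 - 1 / p) p (ball 0 1) u ^ (p / (p - 1)) ≤
          C * ((∫⁻ z in ball (0 : EuclideanSpace ℝ (Fin l)) 1 ×ˢ Ioo (0 : ℝ) 1,
              ENNReal.ofReal (‖fderiv ℝ U z‖ ^ p)) + 2) := by
  obtain ⟨C₁, hC₁, hsmooth⟩ := smoothing (l := l) hb hNcpt hNsub (1 - 1 / p) p hp.le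
  obtain ⟨C₂, hC₂, hslice⟩ := slicing (l := l) hb hNcpt hl p hp
  have hq : 0 < p / (p - 1) := div_pos (by linarith) (by linarith)
  refine ⟨C₁ ^ (p / (p - 1)) * C₂ + 1, ?_, le_add_self, ?_⟩
  · have : C₁ ^ (p / (p - 1)) ≠ ⊤ := ENNReal.rpow_ne_top_of_nonneg hq.le hC₁
    finiteness
  intro α
  set En : (EuclideanSpace ℝ (Fin l) × ℝ → EuclideanSpace ℝ (Fin ν)) → ℝ≥0∞ := fun U =>
    ∫⁻ z in ball (0 : EuclideanSpace ℝ (Fin l)) 1 ×ˢ Ioo (0 : ℝ) 1,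
              ENNReal.ofReal (‖fderiv ℝ U z‖ ^ p) with hEn
  let Q : Set ℝ≥0∞ := {e | ∃ u, ∃ h : Adm N b (1/2) u, cls hb u (h.mono (by norm_num)) = α ∧
    ∃ U : EuclideanSpace ℝ (Fin l) × ℝ → EuclideanSpace ℝ (Fin ν),
        C1OnNhd U (closedBall 0 1 ×ˢ Icc (0 : ℝ) 1) ∧
        MapsTo U (closedBall 0 1 ×ˢ Icc (0 : ℝ) 1) N ∧
        (∀ x ∈ closedBall (0 : EuclideanSpace ℝ (Fin l)) 1, U (x, 0) = u x) ∧ En U = e}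
  by_cases hm : sInf Q = ⊤
  · obtain ⟨w, hw, hwc⟩ := exists_rep hb hl α (3/8) (by norm_num) (by norm_num)
    obtain ⟨u, h, hsm, hc, -⟩ := hsmooth w hw (hw.mono (by norm_num))
    refine ⟨u, h, hsm, hc.trans hwc, ?_⟩
    intro U h1 h2 h3
    have : sInf Q ≤ En U := sInf_le ⟨u, h, hc.trans hwc, U, h1, h2, h3, rfl⟩
    rw [hm, top_le_iff] at this
    simp only [hEn] at this
    rw [this, top_add, ENNReal.mul_top (by simp)]
    exact le_top
  · have hlt : sInf Q < sInf Q + 1 := ENNReal.lt_add_right hm one_ne_zero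
    obtain ⟨e, ⟨u₀, h₀, hc₀, U₀, hU1, hU2, hU3, rfl⟩, he⟩ := sInf_lt_iff.1 hlt
    obtain ⟨w, hw, hwc, hwE⟩ := hslice u₀ h₀ (h₀.mono (by norm_num)) U₀ hU1 hU2 hU3 he.ne_top
    obtain ⟨u, h, hsm, hc, hE⟩ := hsmooth w hw (hw.mono (by norm_num))
    have hcα := hc.trans (hwc.trans hc₀)
    refine ⟨u, h, hsm, hcα, ?_⟩
    intro U h1 h2 h3
    have hle : sInf Q ≤ En U := sInf_le ⟨u, h, hcα, U, h1, h2, h3, rfl⟩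
    calc _ ≤ (C₁ * gagliardoE (1 - 1 / p) p univ w) ^ (p / (p - 1)) :=
          ENNReal.rpow_le_rpow hE hq.le
      _ = C₁ ^ (p / (p - 1)) * gagliardoE (1 - 1 / p) p univ w ^ (p / (p - 1)) :=
          ENNReal.mul_rpow_of_nonneg _ _ hq.le
      _ ≤ C₁ ^ (p / (p - 1)) * (C₂ * (En U₀ + 1)) := by gcongr
      _ = C₁ ^ (p / (p - 1)) * C₂ * (En U₀ + 1) := by rw [mul_assoc]
      _ ≤ (C₁ ^ (p / (p - 1)) * C₂ + 1) * (En U + 1 + 1) := by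
          gcongr
          · exact le_self_add
          · exact he.le.trans (by gcongr)
      _ = _ := by rw [add_assoc, one_add_one_eq_two]

/-- superlinear lower bound: if `p > ℓ + 1` and `π_ℓ(N, b)` is infinite, there
are `c > 0` and smooth maps `u_j : B̄^ℓ → N` equal to `b` on `S^{ℓ-1}` with fractional energies
tending to `∞`, such that every `C^1` extension `U : B̄^ℓ × [0,1] → N` of `u_j` satisfies
`∫ ‖DU‖^p ≥ c (E^{1-1/p,p}(u_j))^{p/(p-1)}`. -/
theorem statement3 (ν : ℕ) (hν : 1 ≤ ν) (N : Set (EuclideanSpace ℝ (Fin ν)))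
    (hNcpt : IsCompact N) (hNconn : IsConnected N) (hNsub : IsSmoothSubmanifold N)
    (b : EuclideanSpace ℝ (Fin ν)) (hb : b ∈ N)
    (l : ℕ) (hl : 1 ≤ l) (p : ℝ) (hp : (l : ℝ) + 1 < p)
    (hπ : Infinite (HomotopyGroup (Fin l) ↥N ⟨b, hb⟩)) :
    ∃ c : ℝ, 0 < c ∧
    ∃ u : ℕ → EuclideanSpace ℝ (Fin l) → EuclideanSpace ℝ (Fin ν),
      (∀ j, SmoothOnNhd (u j) (closedBall 0 1)) ∧
      (∀ j, MapsTo (u j) (closedBall 0 1) N) ∧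
      (∀ j, ∀ x ∈ sphere (0 : EuclideanSpace ℝ (Fin l)) 1, u j x = b) ∧
      Filter.Tendsto (fun j => gagliardoE (1 - 1 / p) p (ball 0 1) (u j))
        Filter.atTop (nhds ⊤) ∧
      (∀ j, ∀ U : EuclideanSpace ℝ (Fin l) × ℝ → EuclideanSpace ℝ (Fin ν),
        C1OnNhd U (closedBall 0 1 ×ˢ Icc (0 : ℝ) 1) →
        MapsTo U (closedBall 0 1 ×ˢ Icc (0 : ℝ) 1) N →
        (∀ x ∈ closedBall (0 : EuclideanSpace ℝ (Fin l)) 1, U (x, 0) = u j x) →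
        ENNReal.ofReal c * (gagliardoE (1 - 1 / p) p (ball 0 1) (u j)) ^ (p / (p - 1))
          ≤ ∫⁻ z in ball (0 : EuclideanSpace ℝ (Fin l)) 1 ×ˢ Ioo (0 : ℝ) 1,
              ENNReal.ofReal (‖fderiv ℝ U z‖ ^ p)) := by
  have hp1 : 1 < p := by
    have : (0:ℝ) ≤ l := by positivity
    linarith
  have hq : 0 < p / (p - 1) := div_pos (by linarith) (by linarith)
  obtain ⟨C, hCt, hC1, hrep⟩ := best_rep (l := l) hb hNcpt hNsub hl p hp1
  choose v hv hvs hvc hvU using hrep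
  let α := Infinite.natEmbedding (HomotopyGroup (Fin l) ↥N ⟨b, hb⟩)
  have htend : Tendsto (fun n => gagliardoE (1 - 1 / p) p (ball 0 1) (v (α n))) atTop (𝓝 ⊤) := by
    rw [ENNReal.tendsto_nhds_top_iff_nnreal]
    intro K
    by_contra hcon
    rw [not_eventually] at hcon
    obtain ⟨φ, hφ, hφE⟩ := extraction_of_frequently_atTop hcon
    obtain ⟨n, m, hnm, heq⟩ := class_finiteness hb hNcpt hNsub p hp K ENNReal.coe_ne_top
      (fun n => v (α (φ n))) (fun n => hv _) (fun n => (hv _).mono (by norm_num))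
      (fun n => not_lt.1 (hφE n))
    have h1 := (hvc (α (φ n))).symm.trans (heq.trans (hvc (α (φ m))))
    exact hnm.ne (hφ.injective (α.injective h1))
  have htend2 : Tendsto (fun n => gagliardoE (1 - 1 / p) p (ball 0 1) (v (α n)) ^ (p / (p - 1)))
      atTop (𝓝 ⊤) := by
    have := (ENNReal.continuous_rpow_const (y := p / (p - 1))).continuousAt.tendsto.comp htend
    rwa [ENNReal.top_rpow_of_pos hq] at this
  have h4 : (4 * C : ℝ≥0∞) < ⊤ := by finiteness
  obtain ⟨n0, hn0⟩ := eventually_atTop.1 (htend2.eventually (lt_mem_nhds h4))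
  have hC0 : 0 < C.toReal := ENNReal.toReal_pos (by
    intro h; rw [h] at hC1; simp at hC1) hCt
  refine ⟨1 / (2 * C.toReal), by positivity, fun j => v (α (j + n0)), ?_, ?_, ?_, ?_, ?_⟩
  · intro j; exact ⟨univ, isOpen_univ, subset_univ _, (hvs _).contDiffOn⟩
  · intro j x _; exact (hv _).mem x
  · intro j x hx
    refine (hv _).bdry x ?_
    rw [mem_sphere_zero_iff_norm.1 hx]; norm_num
  · exact htend.comp (tendsto_add_atTop_nat n0)
  · intro j U h1 h2 h3
    have h5 := hvU _ U h1 h2 h3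
    have h6 := hn0 (j + n0) (Nat.le_add_left _ _)
    set X := gagliardoE (1 - 1 / p) p (ball 0 1) (v (α (j + n0))) ^ (p / (p - 1)) with hX
    set M := ∫⁻ z in ball (0 : EuclideanSpace ℝ (Fin l)) 1 ×ˢ Ioo (0 : ℝ) 1,
              ENNReal.ofReal (‖fderiv ℝ U z‖ ^ p) with hM
    by_cases hMt : M = ⊤
    · rw [hMt]; exact le_top
    have hRt : C * (M + 2) ≠ ⊤ := by finiteness
    have hXt : X ≠ ⊤ := ne_top_of_le_ne_top hRt h5
    have h7 : X.toReal ≤ C.toReal * (M.toReal + 2) := by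
      have := ENNReal.toReal_mono hRt h5
      rw [ENNReal.toReal_mul, ENNReal.toReal_add hMt (by norm_num)] at this
      simpa using this
    have h8 : 4 * C.toReal ≤ X.toReal := by
      have := ENNReal.toReal_mono hXt h6.le
      rw [ENNReal.toReal_mul] at this
      simpa using this
    rw [← ENNReal.ofReal_toReal hXt, ← ENNReal.ofReal_toReal hMt, ← ENNReal.ofReal_mul (by positivity)]
    apply ENNReal.ofReal_le_ofReal
    rw [one_div_mul_eq_div, div_le_iff₀ (by positivity)]
    nlinarith

end
end

section
/- Let ν ≥ 1, let N ⊆ ℝ^ν be a compact connected smooth embedded submanifold without boundary with base point b ∈ N, let ℓ ≥ 1, let 1 ≤ p < ∞, and let 0 < ρ < 1. Let B^{ℓ+1}_+ = { x ∈ ℝ^{ℓ+1} : |x| < 1, x_{ℓ+1} > 0 } denote the open upper half-ball. There exists a constant c > 0, depending only on ℓ and p, such that for every continuous u : B̄^ℓ → N with u(x) = b whenever ρ ≤ |x| ≤ 1, and every C^1 map U : closure(B^{ℓ+1}_+) → N with U(x, 0) = u(x) for all x ∈ B̄^ℓ, one has ∫_{B^{ℓ+1}_+} ‖DU‖^p ≥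 c · ( ∫_ρ^1 r^{ℓ−p} dr ) · E^{1,p}_top(u). -/
open Metric Set MeasureTheory Filter
open scoped ENNReal Topology

noncomputable section

/-- One-dimensional change of variables along the paraboloid family. -/
lemma aux_slice (f : ℝ → ℝ≥0∞) (ρ a : ℝ) (hρ : 0 < ρ) (ha : 0 ≤ a) :
    ENNReal.ofReal (1 / 2) * ∫⁻ r in Ioo ρ 1, f (r / 2 - a / (2 * r)) ≤ ∫⁻ t, f t := by
  have hd : ∀ r ∈ Ioo ρ 1, HasDerivWithinAt (fun r : ℝ => r / 2 - a / (2 * r))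
      (1 / 2 + a / (2 * r ^ 2)) (Ioo ρ 1) r := by
    intro r hr
    have hr0 : r ≠ 0 := (hρ.trans hr.1).ne'
    have h1 : HasDerivAt (fun r : ℝ => r / 2 - (a / 2) * r⁻¹)
        (1 / 2 - (a / 2) * (-(r ^ 2)⁻¹)) r :=
      ((hasDerivAt_id r).div_const 2).sub ((hasDerivAt_inv hr0).const_mul (a / 2))
    have h2 : (fun r : ℝ => r / 2 - a / (2 * r)) = fun r : ℝ => r / 2 - (a / 2) * r⁻¹ := by
      funext r
      rw [div_mul_eq_div_div, div_eq_mul_inv (a / 2) r]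
    rw [h2]
    have h3 : 1 / 2 + a / (2 * r ^ 2) = 1 / 2 - (a / 2) * (-(r ^ 2)⁻¹) := by
      rw [div_mul_eq_div_div, div_eq_mul_inv (a / 2) (r ^ 2)]
      ring
    rw [h3]
    exact h1.hasDerivWithinAt
  have hinj : InjOn (fun r : ℝ => r / 2 - a / (2 * r)) (Ioo ρ 1) := by
    apply StrictMonoOn.injOn
    intro x hx y hy hxy
    have hx0 : 0 < x := hρ.trans hx.1
    have : a / (2 * y) ≤ a / (2 * x) := by gcongr
    simp only
    linarith
  have key := lintegral_image_eq_lintegral_abs_deriv_mul measurableSet_Ioo hd hinj f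
  calc ENNReal.ofReal (1 / 2) * ∫⁻ r in Ioo ρ 1, f (r / 2 - a / (2 * r))
      = ∫⁻ r in Ioo ρ 1, ENNReal.ofReal (1 / 2) * f (r / 2 - a / (2 * r)) := by
        rw [lintegral_const_mul' _ _ ENNReal.ofReal_ne_top]
    _ ≤ ∫⁻ r in Ioo ρ 1, ENNReal.ofReal |1 / 2 + a / (2 * r ^ 2)| * f (r / 2 - a / (2 * r)) := by
        apply lintegral_mono
        intro r
        simp only
        gcongr
        rw [abs_of_nonneg (by positivity)]
        have : 0 ≤ a / (2 * r ^ 2) := by positivity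
        linarith
    _ = _ := key.symm
    _ ≤ _ := setLIntegral_le_lintegral _ _

lemma aux_norm_deriv {l ν : ℕ} (U : EuclideanSpace ℝ (Fin l) × ℝ → EuclideanSpace ℝ (Fin ν))
    (r : ℝ) (hr : 0 < r) (x : EuclideanSpace ℝ (Fin l)) (hx : ‖x‖ ≤ 1)
    (hU : DifferentiableAt ℝ U (r • x, r * (1 - ‖x‖ ^ 2) / 2)) :
    ‖fderiv ℝ (fun x : EuclideanSpace ℝ (Fin l) => U (r • x, r * (1 - ‖x‖ ^ 2) / 2)) x‖
      ≤ r * ‖fderiv ℝ U (r • x, r * (1 - ‖x‖ ^ 2) / 2)‖ := by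
  have h1 : HasFDerivAt (fun x : EuclideanSpace ℝ (Fin l) => r • x)
      (r • ContinuousLinearMap.id ℝ (EuclideanSpace ℝ (Fin l))) x :=
    (hasFDerivAt_id x).const_smul r
  have h2 : HasFDerivAt (fun x : EuclideanSpace ℝ (Fin l) => r * (1 - ‖x‖ ^ 2) / 2)
      (-(r • innerSL ℝ x)) x := by
    have h3 := (((hasStrictFDerivAt_norm_sq x).hasFDerivAt.const_sub 1).const_mul r).mul_const
      (2⁻¹ : ℝ)
    simp only [div_eq_mul_inv]
    refine h3.congr_fderiv ?_
    ext y
    simp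
    ring
  have h4 := hU.hasFDerivAt.comp x (h1.prodMk h2)
  have h5 := h4.fderiv
  have h6 : (fun x : EuclideanSpace ℝ (Fin l) => U (r • x, r * (1 - ‖x‖ ^ 2) / 2))
     = U ∘ (fun x => (r • x, r * (1 - ‖x‖ ^ 2) / 2)) := rfl
  rw [h6, h5, mul_comm r ‖_‖]
  refine (ContinuousLinearMap.opNorm_comp_le _ _).trans ?_
  gcongr
  refine ContinuousLinearMap.opNorm_le_bound _ hr.le ?_
  intro y
  rw [ContinuousLinearMap.prod_apply, Prod.norm_def]
  apply max_le
  · simp [norm_smul, abs_of_pos hr]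
  · simp only [ContinuousLinearMap.neg_apply, ContinuousLinearMap.smul_apply, innerSL_apply_apply,
      norm_neg, norm_smul, Real.norm_eq_abs, abs_of_pos hr]
    gcongr
    calc _ ≤ ‖x‖ * ‖y‖ := abs_real_inner_le_norm x y
      _ ≤ 1 * ‖y‖ := by gcongr
      _ = _ := one_mul _

lemma aux_mem {a m s : ℝ} (ha : 0 ≤ a) (ha1 : a ≤ 1) (hm : 0 ≤ m) (hm1 : m ≤ 1)
    (hs : 0 ≤ s) (hs1 : s ≤ 1) : (m * a) ^ 2 + (s * (1 - a ^ 2) / 2) ^ 2 ≤ 1 := by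
  have h1 : m ^ 2 ≤ 1 := pow_le_one₀ hm hm1
  have h2 : s ^ 2 ≤ 1 := pow_le_one₀ hs hs1
  have h3 : a ^ 2 ≤ 1 := pow_le_one₀ ha ha1
  have h4 : (m * a) ^ 2 ≤ a ^ 2 := by
    rw [mul_pow]; nlinarith [sq_nonneg a]
  have h5 : (s * (1 - a ^ 2) / 2) ^ 2 ≤ (1 - a ^ 2) ^ 2 / 4 := by
    have : (s * (1 - a ^ 2) / 2) ^ 2 = s ^ 2 * ((1 - a ^ 2) ^ 2 / 4) := by ring
    rw [this]
    nlinarith [sq_nonneg (1 - a ^ 2)]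
  nlinarith [sq_nonneg a]

lemma aux_mem_lt {a r : ℝ} (ha : 0 ≤ a) (ha1 : a < 1) (hr : 0 < r) (hr1 : r < 1) :
    (r * a) ^ 2 + (r * (1 - a ^ 2) / 2) ^ 2 < 1 := by
  have h0 := aux_mem ha ha1.le zero_le_one le_rfl zero_le_one le_rfl
  have h2 : r ^ 2 < 1 := pow_lt_one₀ hr.le hr1 two_ne_zero
  have : (r * a) ^ 2 + (r * (1 - a ^ 2) / 2) ^ 2
     = r ^ 2 * ((1 * a) ^ 2 + (1 * (1 - a ^ 2) / 2) ^ 2) := by ring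
  rw [this]
  nlinarith [sq_nonneg r]

/-- fundamental lower bound on the half-ball: there is `c > 0` depending only on
`ℓ` and `p` such that for every `0 < ρ < 1`, every `u : B̄^ℓ → N` continuous with `u = b` on
`{ρ ≤ |x| ≤ 1}`, and every `C^1` map `U` on the closed upper half-ball of `ℝ^{ℓ+1}` with values
in `N` and `U(·,0) = u`, one has `∫_{B^{ℓ+1}_+} ‖DU‖^p ≥ c (∫_ρ^1 r^{ℓ-p} dr) E^{1,p}_top(u)`. -/
theorem statement4 (l : ℕ) (hl : 1 ≤ l) (p : ℝ) (hp : 1 ≤ p) :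
    ∃ c : ℝ, 0 < c ∧
      ∀ (ρ : ℝ), 0 < ρ → ρ < 1 →
      ∀ (ν : ℕ), 1 ≤ ν →
      ∀ (N : Set (EuclideanSpace ℝ (Fin ν))),
        IsCompact N → IsConnected N → IsSmoothSubmanifold N →
      ∀ b ∈ N,
      ∀ u : EuclideanSpace ℝ (Fin l) → EuclideanSpace ℝ (Fin ν),
        ContinuousOn u (closedBall 0 1) →
        MapsTo u (closedBall 0 1) N →
        (∀ x : EuclideanSpace ℝ (Fin l), ρ ≤ ‖x‖ → ‖x‖ ≤ 1 → u x = b) →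
      ∀ U : EuclideanSpace ℝ (Fin l) × ℝ → EuclideanSpace ℝ (Fin ν),
        C1OnNhd U {z : EuclideanSpace ℝ (Fin l) × ℝ | ‖z.1‖ ^ 2 + z.2 ^ 2 ≤ 1 ∧ 0 ≤ z.2} →
        MapsTo U {z : EuclideanSpace ℝ (Fin l) × ℝ | ‖z.1‖ ^ 2 + z.2 ^ 2 ≤ 1 ∧ 0 ≤ z.2} N →
        (∀ x ∈ closedBall (0 : EuclideanSpace ℝ (Fin l)) 1, U (x, 0) = u x) →
        ENNReal.ofReal c * ENNReal.ofReal (∫ r in ρ..1, r ^ ((l : ℝ) - p)) * topEnergy p N b u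
          ≤ ∫⁻ z in {z : EuclideanSpace ℝ (Fin l) × ℝ | ‖z.1‖ ^ 2 + z.2 ^ 2 < 1 ∧ 0 < z.2},
              ENNReal.ofReal (‖fderiv ℝ U z‖ ^ p) := by
  refine ⟨1 / 2, by norm_num, ?_⟩
  intro ρ hρ hρ1 ν _ N _ _ _ b hb u huc huN hub U hU hUN hUu
  obtain ⟨V, hVo, hVs, hUV⟩ := hU
  set K : Set (EuclideanSpace ℝ (Fin l) × ℝ) := {z | ‖z.1‖ ^ 2 + z.2 ^ 2 ≤ 1 ∧ 0 ≤ z.2} with hK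
  set Ho : Set (EuclideanSpace ℝ (Fin l) × ℝ) := {z | ‖z.1‖ ^ 2 + z.2 ^ 2 < 1 ∧ 0 < z.2} with hHo
  have hHoo : IsOpen Ho := by
    have h1 : IsOpen {z : EuclideanSpace ℝ (Fin l) × ℝ | ‖z.1‖ ^ 2 + z.2 ^ 2 < 1} :=
      isOpen_lt (by fun_prop) (by fun_prop)
    have h2 : IsOpen {z : EuclideanSpace ℝ (Fin l) × ℝ | 0 < z.2} :=
      isOpen_lt (by fun_prop) (by fun_prop)
    exact h1.inter h2
  set F : EuclideanSpace ℝ (Fin l) × ℝ → ℝ≥0∞ :=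
    Ho.indicator (fun z => ENNReal.ofReal (‖fderiv ℝ U z‖ ^ p)) with hF
  have hFm : Measurable F := by
    apply Measurable.indicator _ hHoo.measurableSet
    exact (((measurable_fderiv ℝ U).norm).pow_const p).ennreal_ofReal
  have hKmem : ∀ (x : EuclideanSpace ℝ (Fin l)) (m s : ℝ), ‖x‖ ≤ 1 → 0 ≤ m → m ≤ 1 → 0 ≤ s →
      s ≤ 1 → (m • x, s * (1 - ‖x‖ ^ 2) / 2) ∈ K := by
    intro x m s hx hm hm1 hs hs1
    refine ⟨?_, ?_⟩
    · simp only [norm_smul, Real.norm_eq_abs, abs_of_nonneg hm]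
      exact aux_mem (norm_nonneg x) hx hm hm1 hs hs1
    · have : ‖x‖ ^ 2 ≤ 1 := pow_le_one₀ (norm_nonneg x) hx
      have : 0 ≤ s * (1 - ‖x‖ ^ 2) := mul_nonneg hs (by linarith)
      simp only
      linarith
  -- the slice estimate
  have hslice : ∀ r ∈ Ioo ρ 1, ENNReal.ofReal (r ^ ((l : ℝ) - p)) * topEnergy p N b u
      ≤ ∫⁻ y : EuclideanSpace ℝ (Fin l), F (y, r / 2 - ‖y‖ ^ 2 / (2 * r)) := by
    intro r hr
    have hr0 : 0 < r := hρ.trans hr.1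
    set w : EuclideanSpace ℝ (Fin l) → EuclideanSpace ℝ (Fin ν) :=
      fun x => U (r • x, r * (1 - ‖x‖ ^ 2) / 2) with hw
    have hsm : ContDiff ℝ 1 (fun x : EuclideanSpace ℝ (Fin l) =>
        (r • x, r * (1 - ‖x‖ ^ 2) / 2)) := by
      apply ContDiff.prodMk
      · exact contDiff_id.const_smul r
      · exact (contDiff_const.mul (contDiff_const.sub (contDiff_norm_sq ℝ))).div_const 2
    have hb1 : ∀ x : EuclideanSpace ℝ (Fin l), ‖x‖ = 1 → ∀ m : ℝ, r ≤ m → m ≤ 1 →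
        U (m • x, 0) = b := by
      intro x hx m hm hm1
      have hn : ‖m • x‖ = m := by
        rw [norm_smul, hx, mul_one, Real.norm_eq_abs, abs_of_pos (hr0.trans_le hm)]
      rw [hUu _ (by simp [hn, hm1]), hub _ (by rw [hn]; linarith [hr.1]) (by rw [hn]; exact hm1)]
    have hE : topEnergy p N b u ≤
        ∫⁻ x in ball (0 : EuclideanSpace ℝ (Fin l)) 1, ENNReal.ofReal (‖fderiv ℝ w x‖ ^ p) := by
      apply sInf_le
      refine ⟨w, ⟨_, hVo.preimage hsm.continuous, ?_, ?_⟩, ?_, ?_, ?_, rfl⟩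
      · intro x hx
        exact hVs (hKmem x r r (by simpa using hx) hr0.le hr.2.le hr0.le hr.2.le)
      · exact hUV.comp hsm.contDiffOn (fun x hx => hx)
      · intro x hx
        exact hUN (hKmem x r r (by simpa using hx) hr0.le hr.2.le hr0.le hr.2.le)
      · intro x hx
        have hx1 : ‖x‖ = 1 := by simpa using hx
        simp only [hw, hx1]
        norm_num
        exact hb1 x hx1 r le_rfl hr.2.le
      · have hmem : ∀ z ∈ closedBall (0 : EuclideanSpace ℝ (Fin l)) 1 ×ˢ Icc (0 : ℝ) 1,
            ((r + z.2 * (1 - r)) • z.1, ((1 - z.2) * r) * (1 - ‖z.1‖ ^ 2) / 2) ∈ K := by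
          rintro ⟨x, s⟩ ⟨hx, hs0, hs1⟩
          simp only at hs0 hs1 hx ⊢
          have hr2 := hr.2
          apply hKmem x _ _ (by simpa using hx)
          · have := mul_nonneg hs0 (sub_nonneg.2 hr2.le)
            linarith
          · nlinarith
          · exact mul_nonneg (by linarith) hr0.le
          · nlinarith
        refine ⟨fun z => U ((r + z.2 * (1 - r)) • z.1, ((1 - z.2) * r) * (1 - ‖z.1‖ ^ 2) / 2),
          ?_, ?_, ?_, ?_⟩
        · refine (hUV.continuousOn.mono hVs).comp ?_ hmem
          fun_prop
        · intro z hz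
          exact hUN (hmem z hz)
        · intro x hx
          refine ⟨?_, ?_⟩
          · simp [hw]
          · simp only [one_mul, add_sub_cancel, one_smul, sub_self, zero_mul, zero_div]
            exact hUu x hx
        · intro x hx t ht
          have hx1 : ‖x‖ = 1 := by simpa using hx
          simp only [hw, hx1, one_pow, sub_self, mul_zero, zero_div]
          have hr2 := hr.2
          rw [hb1 x hx1 r le_rfl hr.2.le, hb1 x hx1 _ _ _]
          · have := mul_nonneg ht.1 (sub_nonneg.2 hr2.le)
            linarith
          · nlinarith [ht.2]
    set G : EuclideanSpace ℝ (Fin l) → ℝ≥0∞ :=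
      fun y => F (y, r / 2 - ‖y‖ ^ 2 / (2 * r)) with hG
    have hGm : Measurable G := hFm.comp (by fun_prop)
    have hpt : ∀ x ∈ ball (0 : EuclideanSpace ℝ (Fin l)) 1,
        ENNReal.ofReal (‖fderiv ℝ w x‖ ^ p) ≤ ENNReal.ofReal (r ^ p) * G (r • x) := by
      intro x hx
      have hx1 : ‖x‖ < 1 := by simpa using hx
      have hmem := hKmem x r r hx1.le hr0.le hr.2.le hr0.le hr.2.le
      have hd := aux_norm_deriv U r hr0 x hx1.le
        ((hUV.differentiableOn one_ne_zero).differentiableAt (hVo.mem_nhds (hVs hmem)))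
      have hpe : r / 2 - ‖r • x‖ ^ 2 / (2 * r) = r * (1 - ‖x‖ ^ 2) / 2 := by
        rw [norm_smul, Real.norm_eq_abs, abs_of_pos hr0]
        field_simp
      have hin : (r • x, r * (1 - ‖x‖ ^ 2) / 2) ∈ Ho := by
        refine ⟨?_, ?_⟩
        · simp only [norm_smul, Real.norm_eq_abs, abs_of_pos hr0]
          exact aux_mem_lt (norm_nonneg x) hx1 hr0 hr.2
        · have : ‖x‖ ^ 2 < 1 := pow_lt_one₀ (norm_nonneg x) hx1 two_ne_zero
          have : 0 < r * (1 - ‖x‖ ^ 2) := mul_pos hr0 (by linarith)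
          simp only
          linarith
      simp only [hG, hpe, hF, indicator_of_mem hin]
      rw [← ENNReal.ofReal_mul (by positivity), ← Real.mul_rpow hr0.le (norm_nonneg _)]
      apply ENNReal.ofReal_le_ofReal
      exact Real.rpow_le_rpow (norm_nonneg _) hd (by linarith)
    have hscale : ∫⁻ x : EuclideanSpace ℝ (Fin l), G (r • x)
        = ENNReal.ofReal ((r ^ l)⁻¹) * ∫⁻ y, G y := by
      have h := Measure.map_addHaar_smul (volume : Measure (EuclideanSpace ℝ (Fin l))) hr0.ne'
      rw [← lintegral_map hGm (measurable_const_smul r), h, lintegral_smul_measure]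
      simp [abs_of_pos hr0]
    have hfin : topEnergy p N b u ≤ ENNReal.ofReal (r ^ p * (r ^ l)⁻¹) * ∫⁻ y, G y := by
      calc _ ≤ _ := hE
        _ ≤ ∫⁻ x in ball (0 : EuclideanSpace ℝ (Fin l)) 1,
              ENNReal.ofReal (r ^ p) * G (r • x) := setLIntegral_mono' measurableSet_ball hpt
        _ ≤ ∫⁻ x, ENNReal.ofReal (r ^ p) * G (r • x) := setLIntegral_le_lintegral _ _
        _ = _ := by
          rw [lintegral_const_mul' _ _ ENNReal.ofReal_ne_top, hscale, ← mul_assoc,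
            ← ENNReal.ofReal_mul (by positivity)]
    calc _ ≤ ENNReal.ofReal (r ^ ((l : ℝ) - p)) *
          (ENNReal.ofReal (r ^ p * (r ^ l)⁻¹) * ∫⁻ y, G y) := by gcongr
      _ = ∫⁻ y, G y := by
        rw [← mul_assoc, ← ENNReal.ofReal_mul (by positivity), Real.rpow_sub hr0,
          Real.rpow_natCast]
        have : r ^ l / r ^ p * (r ^ p * (r ^ l)⁻¹) = 1 := by
          have := (Real.rpow_pos_of_pos hr0 p).ne'
          have := (pow_pos hr0 l).ne'
          field_simp
        rw [this, ENNReal.ofReal_one, one_mul]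
  have hint : ENNReal.ofReal (∫ r in ρ..1, r ^ ((l : ℝ) - p))
      = ∫⁻ r in Ioo ρ 1, ENNReal.ofReal (r ^ ((l : ℝ) - p)) := by
    rw [intervalIntegral.integral_of_le hρ1.le, integral_Ioc_eq_integral_Ioo,
      ofReal_integral_eq_lintegral_ofReal]
    · have : IntervalIntegrable (fun r : ℝ => r ^ ((l : ℝ) - p)) volume ρ 1 := by
        apply intervalIntegral.intervalIntegrable_rpow
        right
        rw [uIcc_of_le hρ1.le]
        exact fun h => absurd h.1 (not_le.2 hρ)
      exact ((intervalIntegrable_iff_integrableOn_Ioc_of_le hρ1.le).1 this).mono_set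
        Ioo_subset_Ioc_self
    · refine (ae_restrict_iff' measurableSet_Ioo).2 (Eventually.of_forall fun r hr => ?_)
      exact Real.rpow_nonneg (hρ.trans hr.1).le _
  have hprod : Measurable (fun q : ℝ × EuclideanSpace ℝ (Fin l) =>
      F (q.2, q.1 / 2 - ‖q.2‖ ^ 2 / (2 * q.1))) := hFm.comp (by fun_prop)
  calc ENNReal.ofReal (1 / 2) * ENNReal.ofReal (∫ r in ρ..1, r ^ ((l : ℝ) - p)) * topEnergy p N b u
      = ENNReal.ofReal (1 / 2) *
        ((∫⁻ r in Ioo ρ 1, ENNReal.ofReal (r ^ ((l : ℝ) - p))) * topEnergy p N b u) := by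
        rw [hint, mul_assoc]
    _ = ENNReal.ofReal (1 / 2) *
        ∫⁻ r in Ioo ρ 1, ENNReal.ofReal (r ^ ((l : ℝ) - p)) * topEnergy p N b u := by
        rw [lintegral_mul_const _ (by fun_prop)]
    _ ≤ ENNReal.ofReal (1 / 2) * ∫⁻ r in Ioo ρ 1,
        ∫⁻ y : EuclideanSpace ℝ (Fin l), F (y, r / 2 - ‖y‖ ^ 2 / (2 * r)) := by
        gcongr 1
        exact setLIntegral_mono' measurableSet_Ioo hslice
    _ = ∫⁻ y : EuclideanSpace ℝ (Fin l), ENNReal.ofReal (1 / 2) *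
        ∫⁻ r in Ioo ρ 1, F (y, r / 2 - ‖y‖ ^ 2 / (2 * r)) := by
        rw [lintegral_lintegral_swap hprod.aemeasurable,
          lintegral_const_mul' _ _ ENNReal.ofReal_ne_top]
    _ ≤ ∫⁻ y : EuclideanSpace ℝ (Fin l), ∫⁻ t, F (y, t) :=
        lintegral_mono fun y => aux_slice (fun t => F (y, t)) ρ (‖y‖ ^ 2) hρ (by positivity)
    _ = ∫⁻ z, F z := by
        rw [Measure.volume_eq_prod, lintegral_prod _ hFm.aemeasurable]
    _ = _ := lintegral_indicator hHoo.measurableSet _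

end
end

section
/- Let ν ≥ 1, let N ⊆ ℝ^ν be a compact connected smooth embedded submanifold without boundary with base point b ∈ N, let ℓ ≥ 1, and let 1 ≤ p < ∞. Let U : B̄^ℓ × [0,1] → N be a C^1 map with U(x, t) = b for every x ∈ S^{ℓ−1} and t ∈ [0,1], and set u = U(·, 0). Then ∫_{B^ℓ×(0,1)} ‖DU‖^p ≥ E^{1,p}_top(u). -/
open Metric Set MeasureTheory Filter
open scoped ENNReal Topology

noncomputable section

/-- lower bound on the cylinder: if `U : B̄^ℓ × [0,1] → N` is `C^1` with
`U(x,t) = b` for all `x ∈ S^{ℓ-1}` and `t ∈ [0,1]`, and `u = U(·,0)`, then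
`∫_{B^ℓ×(0,1)} ‖DU‖^p ≥ E^{1,p}_top(u)`. -/
theorem statement5 (ν : ℕ) (hν : 1 ≤ ν) (N : Set (EuclideanSpace ℝ (Fin ν)))
    (hNcpt : IsCompact N) (hNconn : IsConnected N) (hNsub : IsSmoothSubmanifold N)
    (b : EuclideanSpace ℝ (Fin ν)) (hb : b ∈ N)
    (l : ℕ) (hl : 1 ≤ l) (p : ℝ) (hp : 1 ≤ p)
    (U : EuclideanSpace ℝ (Fin l) × ℝ → EuclideanSpace ℝ (Fin ν))
    (hU1 : C1OnNhd U (closedBall 0 1 ×ˢ Icc (0 : ℝ) 1))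
    (hUN : MapsTo U (closedBall 0 1 ×ˢ Icc (0 : ℝ) 1) N)
    (hUb : ∀ x ∈ sphere (0 : EuclideanSpace ℝ (Fin l)) 1, ∀ t ∈ Icc (0 : ℝ) 1,
      U (x, t) = b) :
    topEnergy p N b (fun x => U (x, 0))
      ≤ ∫⁻ z in ball (0 : EuclideanSpace ℝ (Fin l)) 1 ×ˢ Ioo (0 : ℝ) 1,
          ENNReal.ofReal (‖fderiv ℝ U z‖ ^ p) := by
  have key : ∀ t ∈ Ioo (0 : ℝ) 1, topEnergy p N b (fun x => U (x, 0))
      ≤ ∫⁻ x in ball (0 : EuclideanSpace ℝ (Fin l)) 1,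
          ENNReal.ofReal (‖fderiv ℝ U (x, t)‖ ^ p) := by
    intro t ht
    obtain ⟨V, hVo, hV, hUV⟩ := hU1
    have hcont : Continuous (fun x : EuclideanSpace ℝ (Fin l) => (x, t)) := by fun_prop
    have htI : t ∈ Icc (0 : ℝ) 1 := ⟨ht.1.le, ht.2.le⟩
    refine le_trans (sInf_le ⟨fun x => U (x, t), ?_, ?_, ?_, ?_, rfl⟩) ?_
    · refine ⟨(fun x => (x, t)) ⁻¹' V, hVo.preimage hcont, fun x hx => hV ⟨hx, htI⟩, ?_⟩
      exact hUV.comp (by fun_prop) (fun x hx => hx)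
    · exact fun x hx => hUN ⟨hx, htI⟩
    · exact fun x hx => hUb x hx t htI
    · have hmem : ∀ s ∈ Icc (0 : ℝ) 1, (1 - s) * t ∈ Icc (0 : ℝ) 1 := by
        intro s hs
        have h1 : 0 ≤ 1 - s := by linarith [hs.2]
        exact ⟨mul_nonneg h1 htI.1, by nlinarith [hs.1, htI.1, htI.2]⟩
      refine ⟨fun z => U (z.1, (1 - z.2) * t), ?_, ?_, ?_, ?_⟩
      · refine hUV.continuousOn.comp (by fun_prop) ?_
        exact fun z hz => hV ⟨hz.1, hmem _ hz.2⟩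
      · exact fun z hz => hUN ⟨hz.1, hmem _ hz.2⟩
      · intro x _
        simp
      · intro x hx s hs
        show U (x, (1 - s) * t) = U (x, t)
        rw [hUb x hx _ (hmem s hs), hUb x hx t htI]
    · refine setLIntegral_mono' measurableSet_ball fun x hx => ?_
      refine ENNReal.ofReal_le_ofReal ?_
      refine Real.rpow_le_rpow (norm_nonneg _) ?_ (by linarith)
      have hxV : (x, t) ∈ V := hV ⟨ball_subset_closedBall hx, htI⟩
      have hd : DifferentiableAt ℝ U (x, t) :=
        (hUV.differentiableOn one_ne_zero).differentiableAt (hVo.mem_nhds hxV)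
      have hc : HasFDerivAt (fun x => U (x, t))
          ((fderiv ℝ U (x, t)).comp (ContinuousLinearMap.inl ℝ _ ℝ)) x :=
        hd.hasFDerivAt.comp x (hasFDerivAt_prodMk_left x t)
      rw [hc.fderiv]
      refine ContinuousLinearMap.opNorm_le_bound _ (norm_nonneg _) fun v => ?_
      have := (fderiv ℝ U (x, t)).le_opNorm (v, 0)
      simpa [Prod.norm_def] using this
  have hmeas : Measurable fun z => ENNReal.ofReal (‖fderiv ℝ U z‖ ^ p) :=
    ((measurable_fderiv ℝ U).norm.pow_const p).ennreal_ofReal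
  rw [Measure.volume_eq_prod, ← Measure.prod_restrict, lintegral_prod_symm _ hmeas.aemeasurable]
  calc topEnergy p N b (fun x => U (x, 0))
      = ∫⁻ _ in Ioo (0 : ℝ) 1, topEnergy p N b (fun x => U (x, 0)) := by simp
    _ ≤ _ := setLIntegral_mono' measurableSet_Ioo key

end
end

section
/- Let ν ≥ 1, let N ⊆ ℝ^ν be a compact connected smooth embedded submanifold without boundary with base point b ∈ N, let ℓ ≥ 1, and let p > ℓ be a real number. Let v : B̄^ℓ → N be continuous with v = b on S^{ℓ−1}, and assume that v is NOT homotopic relative to S^{ℓ−1} to the constant map b. Then E^{1,p}_top(v) > 0, i.e., inf { ∫_{B^ℓ} ‖Dw(x)‖^p dx : w : B̄^ℓ → N is C^1, w = b on S^{ℓ−1}, and w is homotopic to v relative to S^{ℓ−1} } > 0. -/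
open Metric Set MeasureTheory Filter
open scoped ENNReal Topology

noncomputable section

section Helpers

/-- Two relative homotopies out of the same map can be glued. -/
theorem homotopicRelSphere_glue {l ν : ℕ} {N : Set (EuclideanSpace ℝ (Fin ν))}
    {w v c : EuclideanSpace ℝ (Fin l) → EuclideanSpace ℝ (Fin ν)}
    (h1 : HomotopicRelSphere N w v) (h2 : HomotopicRelSphere N w c) :
    HomotopicRelSphere N v c := by
  obtain ⟨H, hHc, hHm, hHe, hHs⟩ := h1
  obtain ⟨K, hKc, hKm, hKe, hKs⟩ := h2
  have e1 : ∀ x ∈ closedBall (0 : EuclideanSpace ℝ (Fin l)) 1, ∀ t ∈ Icc (0 : ℝ) 1, t ≤ 1/2 →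
      (x, 1 - 2 * t) ∈ closedBall (0 : EuclideanSpace ℝ (Fin l)) 1 ×ˢ Icc (0 : ℝ) 1 := by
    intro x hx t ht h
    exact ⟨hx, by constructor <;> simp only <;> linarith [ht.1, ht.2]⟩
  have e2 : ∀ x ∈ closedBall (0 : EuclideanSpace ℝ (Fin l)) 1, ∀ t ∈ Icc (0 : ℝ) 1, 1/2 ≤ t →
      (x, 2 * t - 1) ∈ closedBall (0 : EuclideanSpace ℝ (Fin l)) 1 ×ˢ Icc (0 : ℝ) 1 := by
    intro x hx t ht h
    exact ⟨hx, by constructor <;> simp only <;> linarith [ht.1, ht.2]⟩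
  have hwv : ∀ x ∈ sphere (0 : EuclideanSpace ℝ (Fin l)) 1, w x = v x := by
    intro x hx
    rw [← hHs x hx 1 (by simp), (hHe x (sphere_subset_closedBall hx)).2]
  refine ⟨fun q => if q.2 ≤ 1/2 then H (q.1, 1 - 2 * q.2) else K (q.1, 2 * q.2 - 1), ?_, ?_, ?_, ?_⟩
  · have c1 : closure {a : EuclideanSpace ℝ (Fin l) × ℝ | a.2 ≤ 1/2} = {a | a.2 ≤ 1/2} :=
      (isClosed_le continuous_snd continuous_const).closure_eq
    have c2 : closure {a : EuclideanSpace ℝ (Fin l) × ℝ | ¬ a.2 ≤ 1/2} ⊆ {a | 1/2 ≤ a.2} := by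
      apply closure_minimal
      · intro a ha
        simp only [mem_setOf_eq, not_le] at ha ⊢
        exact ha.le
      · exact isClosed_le continuous_const continuous_snd
    apply ContinuousOn.if
    · rintro ⟨x, t⟩ ⟨⟨hx, ht⟩, hf⟩
      have : t = 1/2 := by
        apply le_antisymm
        · have := frontier_subset_closure hf
          rw [c1] at this
          exact this
        · rw [← frontier_compl] at hf
          exact c2 (frontier_subset_closure hf)
      subst this
      have := (hHe x hx).1
      have := (hKe x hx).1
      norm_num
      simp [*]
    · rw [c1]
      refine hHc.comp (by fun_prop) ?_
      rintro ⟨x, t⟩ ⟨⟨hx, ht⟩, hf⟩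
      exact e1 x hx t ht hf
    · refine hKc.comp (by fun_prop) ?_
      rintro ⟨x, t⟩ ⟨⟨hx, ht⟩, hf⟩
      exact e2 x hx t ht (c2 hf)
  · rintro ⟨x, t⟩ ⟨hx, ht⟩
    by_cases h : t ≤ 1/2
    · simp only [h, if_true]
      exact hHm (e1 x hx t ht h)
    · simp only [h, if_false]
      exact hKm (e2 x hx t ht (not_le.1 h).le)
  · intro x hx
    have a := (hHe x hx).2
    have b := (hKe x hx).2
    constructor
    · norm_num [a]
    · norm_num [b]
  · intro x hx t ht
    by_cases h : t ≤ 1/2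
    · simp only [h, if_true]
      rw [hHs x hx _ (e1 x (sphere_subset_closedBall hx) t ht h).2, hwv x hx]
    · simp only [h, if_false]
      rw [hKs x hx _ (e2 x (sphere_subset_closedBall hx) t ht (not_le.1 h).le).2, hwv x hx]

/-- Maps staying in a small chart domain around `b` are null-homotopic. -/
theorem exists_small_nullhomotopic {ν : ℕ} {N : Set (EuclideanSpace ℝ (Fin ν))}
    (hN : IsSmoothSubmanifold N) {b : EuclideanSpace ℝ (Fin ν)} (hb : b ∈ N) (l : ℕ) :
    ∃ δ : ℝ, 0 < δ ∧ ∀ w : EuclideanSpace ℝ (Fin l) → EuclideanSpace ℝ (Fin ν),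
      ContinuousOn w (closedBall 0 1) → MapsTo w (closedBall 0 1) N →
      (∀ x ∈ sphere (0 : EuclideanSpace ℝ (Fin l)) 1, w x = b) →
      (∀ x ∈ closedBall (0 : EuclideanSpace ℝ (Fin l)) 1, w x ∈ ball b δ) →
      HomotopicRelSphere N w (fun _ => b) := by
  obtain ⟨d, hd⟩ := hN
  obtain ⟨U, V, φ, ψ, hU, hV, hbU, hφ, hψ, hφm, hψm, hψφ, hφψ, hiff⟩ := hd b hb
  obtain ⟨r, hr, hrV⟩ := Metric.isOpen_iff.1 hV (φ b) (hφm hbU)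
  have hnear : U ∩ φ ⁻¹' ball (φ b) r ∈ 𝓝 b := by
    refine inter_mem (hU.mem_nhds hbU) ?_
    exact (hφ.continuousOn.continuousAt (hU.mem_nhds hbU)).preimage_mem_nhds (ball_mem_nhds _ hr)
  obtain ⟨δ, hδ, hδs⟩ := Metric.mem_nhds_iff.1 hnear
  refine ⟨δ, hδ, fun w hwc hwN hwb hw => ?_⟩
  have key : ∀ x ∈ closedBall (0 : EuclideanSpace ℝ (Fin l)) 1, ∀ t ∈ Icc (0 : ℝ) 1,
      (1 - t) • φ (w x) + t • φ b ∈ V := by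
    intro x hx t ht
    apply hrV
    exact convex_ball (φ b) r (hδs (hw x hx)).2 (mem_ball_self hr) (by linarith [ht.2]) ht.1
      (by ring)
  refine ⟨fun q => ψ ((1 - q.2) • φ (w q.1) + q.2 • φ b), ?_, ?_, ?_, ?_⟩
  · refine hψ.continuousOn.comp ?_ ?_
    · have h1 : ContinuousOn (fun q : EuclideanSpace ℝ (Fin l) × ℝ => φ (w q.1))
          (closedBall 0 1 ×ˢ Icc (0 : ℝ) 1) := by
        refine hφ.continuousOn.comp (hwc.comp continuousOn_fst (fun q hq => hq.1)) ?_
        intro q hq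
        exact (hδs (hw q.1 hq.1)).1
      exact ((continuousOn_const.sub continuousOn_snd).smul h1).add
        (continuousOn_snd.smul continuousOn_const)
    · rintro ⟨x, t⟩ ⟨hx, ht⟩
      exact key x hx t ht
  · rintro ⟨x, t⟩ ⟨hx, ht⟩
    have hk := key x hx t ht
    refine (hiff _ (hψm hk)).2 fun i hi => ?_
    simp only
    rw [hφψ _ hk]
    have a1 := (hiff _ (hδs (hw x hx)).1).1 (hwN hx) i hi
    have a2 := (hiff _ hbU).1 hb i hi
    simp [a1, a2]
  · intro x hx
    constructor
    · simpa using hψφ _ (hδs (hw x hx)).1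
    · simpa using hψφ _ hbU
  · intro x hx t ht
    simp only [hwb x hx]
    rw [← add_smul]
    simpa using hψφ _ hbU

/-- Integrating the derivative along a ray from a point in the ball until exit. -/
theorem enorm_sub_le_ray {l ν : ℕ} {w : EuclideanSpace ℝ (Fin l) → EuclideanSpace ℝ (Fin ν)}
    {b : EuclideanSpace ℝ (Fin ν)}
    (hw : C1OnNhd w (closedBall 0 1))
    (hwb : ∀ x ∈ sphere (0 : EuclideanSpace ℝ (Fin l)) 1, w x = b)
    {x z : EuclideanSpace ℝ (Fin l)} (hx : x ∈ ball (0 : EuclideanSpace ℝ (Fin l)) 1)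
    (hz : 2 < ‖z‖) (hz5 : ‖z‖ ≤ 5) :
    ‖w x - b‖ₑ ≤ ∫⁻ t in Ioo (0 : ℝ) 1,
      5 * (ball (0 : EuclideanSpace ℝ (Fin l)) 1).indicator (fun y => ‖fderiv ℝ w y‖ₑ)
        (x + t • z) := by
  obtain ⟨V, hV, hsub, hcd⟩ := hw
  have hx1 : ‖x‖ < 1 := by simpa using hx
  have hcont : Continuous fun t : ℝ => x + t • z := by fun_prop
  obtain ⟨T, hT, hT1⟩ : ∃ T ∈ Icc (0 : ℝ) 1, ‖x + T • z‖ = 1 := by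
    have h := intermediate_value_Icc (zero_le_one (α := ℝ)) hcont.norm.continuousOn
    apply h
    refine ⟨by simpa using hx1.le, ?_⟩
    have := norm_sub_le (x + z) x
    simp only [one_smul]
    have e : x + z - x = z := by abel
    rw [e] at this
    linarith
  have hin : ∀ t ∈ Ico (0 : ℝ) T, x + t • z ∈ ball (0 : EuclideanSpace ℝ (Fin l)) 1 := by
    intro t ht
    have hTpos : 0 < T := ht.1.trans_lt ht.2
    have e : x + t • z = (1 - t / T) • x + (t / T) • (x + T • z) := by
      rw [smul_add, smul_smul, div_mul_cancel₀ _ hTpos.ne', sub_smul, one_smul]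
      abel
    rw [mem_ball_zero_iff, e]
    have h0 : 0 ≤ t / T := div_nonneg ht.1 hTpos.le
    have h1 : t / T < 1 := (div_lt_one hTpos).2 ht.2
    calc _ ≤ ‖(1 - t / T) • x‖ + ‖(t / T) • (x + T • z)‖ := norm_add_le _ _
      _ = (1 - t / T) * ‖x‖ + t / T := by
        rw [norm_smul, norm_smul, hT1, Real.norm_of_nonneg h0, Real.norm_of_nonneg (by linarith),
          mul_one]
      _ < 1 := by nlinarith
  have hin' : ∀ t ∈ Icc (0 : ℝ) T, x + t • z ∈ V := by
    intro t ht
    apply hsub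
    rcases ht.2.eq_or_lt with h | h
    · rw [h, mem_closedBall_zero_iff, hT1]
    · exact ball_subset_closedBall (hin t ⟨ht.1, h⟩)
  have hγ : ContDiffOn ℝ 1 (fun t : ℝ => w (x + t • z)) (Icc 0 T) :=
    hcd.comp (by fun_prop) hin'
  have hmain := enorm_sub_le_lintegral_deriv_of_contDiffOn_Icc hγ hT.1
  simp only [zero_smul, add_zero] at hmain
  rw [hwb _ (by rw [mem_sphere_zero_iff_norm, hT1]), enorm_sub_rev] at hmain
  refine hmain.trans ?_
  rw [← restrict_Ioo_eq_restrict_Icc]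
  calc _ ≤ ∫⁻ t in Ioo (0 : ℝ) T,
      5 * (ball (0 : EuclideanSpace ℝ (Fin l)) 1).indicator (fun y => ‖fderiv ℝ w y‖ₑ)
        (x + t • z) := by
        refine setLIntegral_mono' measurableSet_Ioo fun t ht => ?_
        have hb := hin t ⟨ht.1.le, ht.2⟩
        rw [indicator_of_mem hb]
        have hd : HasFDerivAt w (fderiv ℝ w (x + t • z)) (x + t • z) := by
          have := (hcd.differentiableOn one_ne_zero).differentiableAt
            (hV.mem_nhds (hin' t ⟨ht.1.le, ht.2.le⟩))
          exact this.hasFDerivAt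
        have hl : HasDerivAt (fun t : ℝ => x + t • z) z t := by
          simpa using ((hasDerivAt_id t).smul_const z).const_add x
        have := (hd.comp_hasDerivAt t hl).deriv
        simp only [Function.comp_def] at this
        rw [this]
        calc _ ≤ ‖fderiv ℝ w (x + t • z)‖ₑ * ‖z‖ₑ := ContinuousLinearMap.le_opENorm _ _
          _ ≤ ‖fderiv ℝ w (x + t • z)‖ₑ * 5 := by
            gcongr
            rw [← ofReal_norm_eq_enorm]
            exact (ENNReal.ofReal_le_ofReal hz5).trans (by simp)
          _ = _ := mul_comm _ _
    _ ≤ _ := lintegral_mono_set (Ioo_subset_Ioo_right hT.2)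

/-- Scaling and Hölder. -/
theorem lintegral_ray_le {l : ℕ} {p q : ℝ} (hpq : p.HolderConjugate q)
    {g : EuclideanSpace ℝ (Fin l) → ℝ≥0∞} (hg : Measurable g)
    (A : Set (EuclideanSpace ℝ (Fin l))) (x : EuclideanSpace ℝ (Fin l)) {t : ℝ} (ht : 0 < t) :
    ∫⁻ z in A, g (x + t • z) ≤
      ENNReal.ofReal (t ^ (-((l : ℝ) / p))) * (∫⁻ y, g y ^ p) ^ (1 / p) * volume A ^ (1 / q) := by
  have hm : Measurable fun z => g (x + t • z) := by fun_prop
  have h1 := ENNReal.lintegral_mul_le_Lp_mul_Lq (volume.restrict A) hpq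
    hm.aemeasurable (aemeasurable_const (b := (1 : ℝ≥0∞)))
  simp only [Pi.mul_apply, mul_one, ENNReal.one_rpow, lintegral_const, Measure.restrict_apply,
    MeasurableSet.univ, univ_inter, one_mul] at h1
  refine h1.trans ?_
  gcongr
  have h2 : ∫⁻ z in A, g (x + t • z) ^ p ≤ ENNReal.ofReal (t ^ (-(l : ℝ))) * ∫⁻ y, g y ^ p := by
    refine (setLIntegral_le_lintegral _ _).trans ?_
    have hgp : Measurable fun y => g (x + y) ^ p := by fun_prop
    have := lintegral_map (μ := volume) hgp (measurable_const_smul t)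
    rw [← this]
    have e := Measure.map_addHaar_smul (volume : Measure (EuclideanSpace ℝ (Fin l))) ht.ne'
    rw [e, lintegral_smul_measure, lintegral_add_left_eq_self (fun y => g y ^ p) x]
    rw [finrank_euclideanSpace_fin, abs_of_nonneg (by positivity), Real.rpow_neg ht.le,
      Real.rpow_natCast, smul_eq_mul]
  have hp0 : 0 ≤ 1 / p := by have := hpq.pos; positivity
  refine (ENNReal.rpow_le_rpow h2 hp0).trans_eq ?_
  rw [ENNReal.mul_rpow_of_nonneg _ _ hp0, ENNReal.ofReal_rpow_of_nonneg (by positivity) hp0,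
    ← Real.rpow_mul ht.le]
  congr 3
  ring

/-- Morrey-type sup bound for maps which are constant on the sphere. -/
theorem exists_morrey_bound (l : ℕ) (hl : 1 ≤ l) (p : ℝ) (hp : (l : ℝ) < p) (ν : ℕ) :
    ∃ K m : ℝ≥0∞, K ≠ ⊤ ∧ m ≠ 0 ∧ m ≠ ⊤ ∧
      ∀ (w : EuclideanSpace ℝ (Fin l) → EuclideanSpace ℝ (Fin ν)) (b : EuclideanSpace ℝ (Fin ν)),
      C1OnNhd w (closedBall 0 1) →
      (∀ x ∈ sphere (0 : EuclideanSpace ℝ (Fin l)) 1, w x = b) →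
      ∀ x ∈ closedBall (0 : EuclideanSpace ℝ (Fin l)) 1,
        m * ‖w x - b‖ₑ ≤ K * (∫⁻ x in ball (0 : EuclideanSpace ℝ (Fin l)) 1,
          ENNReal.ofReal (‖fderiv ℝ w x‖ ^ p)) ^ (1 / p) := by
  have hl1 : (1 : ℝ) ≤ l := by exact_mod_cast hl
  have hp1 : 1 < p := hl1.trans_lt hp
  have hpq := Real.HolderConjugate.conjExponent hp1
  set q := p.conjExponent
  let c : EuclideanSpace ℝ (Fin l) := EuclideanSpace.single ⟨0, hl⟩ 4
  have hc : ‖c‖ = 4 := by simp [c]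
  let A := ball c 1
  have hA : ∀ z ∈ A, 2 < ‖z‖ ∧ ‖z‖ ≤ 5 := by
    intro z hz
    have hz' : ‖z - c‖ < 1 := by simpa [A, dist_eq_norm] using hz
    have h1 := norm_sub_norm_le z c
    have h2 := norm_sub_norm_le c z
    rw [norm_sub_rev] at h2
    constructor <;> linarith
  have hAfin : volume A ≠ ⊤ := measure_ball_lt_top.ne
  have hApos : volume A ≠ 0 := (measure_ball_pos _ _ one_pos).ne'
  let I : ℝ≥0∞ := ∫⁻ t in Ioo (0 : ℝ) 1, ENNReal.ofReal (t ^ (-((l : ℝ) / p)))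
  have hI : I ≠ ⊤ := by
    have h : IntegrableOn (fun t : ℝ => t ^ (-((l : ℝ) / p))) (Ioo 0 1) := by
      rw [intervalIntegral.integrableOn_Ioo_rpow_iff one_pos]
      have : (l : ℝ) / p < 1 := (div_lt_one (by linarith)).2 hp
      linarith
    exact h.lintegral_lt_top.ne
  refine ⟨5 * (I * volume A ^ (1 / q)), volume A, ?_, hApos, hAfin, ?_⟩
  · have hq0 : 0 ≤ 1 / q := by have := hpq.symm.pos; positivity
    exact ENNReal.mul_ne_top (by simp)
      (ENNReal.mul_ne_top hI (ENNReal.rpow_ne_top_of_nonneg hq0 hAfin))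
  intro w b hw hwb x hx
  rcases (mem_closedBall_zero_iff.1 hx).eq_or_lt with h | h
  · rw [hwb x (by simpa using h)]
    simp
  have hxb : x ∈ ball (0 : EuclideanSpace ℝ (Fin l)) 1 := by simpa using h
  let g : EuclideanSpace ℝ (Fin l) → ℝ≥0∞ :=
    (ball (0 : EuclideanSpace ℝ (Fin l)) 1).indicator (fun y => ‖fderiv ℝ w y‖ₑ)
  have hg : Measurable g := (measurable_fderiv ℝ w).enorm.indicator measurableSet_ball
  have hge : ∫⁻ y, g y ^ p = ∫⁻ x in ball (0 : EuclideanSpace ℝ (Fin l)) 1,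
          ENNReal.ofReal (‖fderiv ℝ w x‖ ^ p) := by
    rw [← lintegral_indicator measurableSet_ball]
    congr 1
    ext y
    by_cases hy : y ∈ ball (0 : EuclideanSpace ℝ (Fin l)) 1
    · simp only [g, indicator_of_mem hy]
      rw [← ofReal_norm_eq_enorm, ENNReal.ofReal_rpow_of_nonneg (norm_nonneg _) (by linarith)]
    · simp only [g, indicator_of_notMem hy]
      exact ENNReal.zero_rpow_of_pos (by linarith)
  rw [← hge]
  calc volume A * ‖w x - b‖ₑ = ∫⁻ z in A, ‖w x - b‖ₑ := by
        rw [setLIntegral_const, mul_comm]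
    _ ≤ ∫⁻ z in A, ∫⁻ t in Ioo (0 : ℝ) 1, 5 * g (x + t • z) :=
        setLIntegral_mono' measurableSet_ball fun z hz =>
          enorm_sub_le_ray hw hwb hxb (hA z hz).1 (hA z hz).2
    _ = ∫⁻ t in Ioo (0 : ℝ) 1, ∫⁻ z in A, 5 * g (x + t • z) := by
        apply lintegral_lintegral_swap
        apply Measurable.aemeasurable
        simp only [Function.uncurry_def]
        fun_prop
    _ ≤ ∫⁻ t in Ioo (0 : ℝ) 1, ENNReal.ofReal (t ^ (-((l : ℝ) / p))) *
          (5 * ((∫⁻ y, g y ^ p) ^ (1 / p) * volume A ^ (1 / q))) := by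
        refine setLIntegral_mono' measurableSet_Ioo fun t ht => ?_
        rw [lintegral_const_mul _ (by fun_prop)]
        calc _ ≤ 5 * _ := mul_le_mul_right (lintegral_ray_le hpq hg A x ht.1) _
          _ = _ := by ring
    _ = I * (5 * ((∫⁻ y, g y ^ p) ^ (1 / p) * volume A ^ (1 / q))) := by
        rw [lintegral_mul_const _ (by fun_prop)]
    _ = _ := by ring

end Helpers

/-- if `p > ℓ` and `v : B̄^ℓ → N`, with `v = b` on `S^{ℓ-1}`, is not homotopic to
the constant `b` relative to `S^{ℓ-1}`, then its topological `p`-energy is positive. -/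
theorem statement7 (ν : ℕ) (hν : 1 ≤ ν) (N : Set (EuclideanSpace ℝ (Fin ν)))
    (hNcpt : IsCompact N) (hNconn : IsConnected N) (hNsub : IsSmoothSubmanifold N)
    (b : EuclideanSpace ℝ (Fin ν)) (hb : b ∈ N)
    (l : ℕ) (hl : 1 ≤ l) (p : ℝ) (hp : (l : ℝ) < p)
    (v : EuclideanSpace ℝ (Fin l) → EuclideanSpace ℝ (Fin ν))
    (hvc : ContinuousOn v (closedBall 0 1))
    (hvN : MapsTo v (closedBall 0 1) N)
    (hvb : ∀ x ∈ sphere (0 : EuclideanSpace ℝ (Fin l)) 1, v x = b)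
    (hnontriv : ¬ HomotopicRelSphere N v (fun _ => b)) :
    0 < topEnergy p N b v := by
  obtain ⟨δ, hδ, hnull⟩ := exists_small_nullhomotopic hNsub hb l
  obtain ⟨K, m, hK, hm0, hmt, hmor⟩ := exists_morrey_bound l hl p hp ν
  have hp0 : 0 < p := lt_of_le_of_lt (Nat.cast_nonneg l) hp
  rw [pos_iff_ne_zero]
  intro h0
  have hlim : Tendsto (fun e : ℝ≥0∞ => K * e ^ (1 / p)) (𝓝 0) (𝓝 0) := by
    have h1 : Tendsto (fun e : ℝ≥0∞ => e ^ (1 / p)) (𝓝 0) (𝓝 0) := by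
      have := (ENNReal.continuous_rpow_const (y := 1 / p)).tendsto 0
      rwa [ENNReal.zero_rpow_of_pos (by positivity)] at this
    simpa using ENNReal.Tendsto.const_mul h1 (Or.inr hK)
  have hpos : 0 < m * ENNReal.ofReal δ :=
    ENNReal.mul_pos hm0 (by simpa using hδ)
  have hev := hlim.eventually (gt_mem_nhds hpos)
  obtain ⟨e0, he0, he0'⟩ : ∃ e0 : ℝ≥0∞, 0 < e0 ∧ ∀ e < e0, K * e ^ (1 / p) < m * ENNReal.ofReal δ := by
    obtain ⟨e0, he0, h⟩ := ENNReal.nhds_zero_basis.eventually_iff.1 hev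
    exact ⟨e0, he0, fun e he => h he⟩
  rw [← h0] at he0
  obtain ⟨e, ⟨w, hw1, hwN, hwb, hhom, rfl⟩, hlt⟩ := sInf_lt_iff.1 he0
  apply hnontriv
  refine homotopicRelSphere_glue hhom (hnull w ?_ hwN hwb fun x hx => ?_)
  · obtain ⟨V, hV, hsub, hcd⟩ := hw1
    exact hcd.continuousOn.mono hsub
  · have h := (hmor w b hw1 hwb x hx).trans_lt (he0' _ hlt)
    have h' : ‖w x - b‖ₑ < ENNReal.ofReal δ := lt_of_mul_lt_mul_left' h
    rw [← ofReal_norm_eq_enorm, ENNReal.ofReal_lt_ofReal_iff hδ] at h'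
    simpa [dist_eq_norm] using h'

end
end
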